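/- Let ω be a renormalizer on (−2,2) with L ln ω = 0, and let (Φ,v) be a classical solution of the renormalized harmonic map system on (−2,2)×S² with constants Λ ≥ 1 and a > 0. For P₀ ∈ S² and δ > 0 let B_δ(P₀) denote the open geodesic ball in S² (round metric) and Q_δ(t₀,P₀) = (t₀−δ, t₀+δ)×B_δ(P₀). Let c₁ ∈ [−Λ,Λ] be arbitrary, and let c₂ be a constant with c₂ = a if N ∈ B_{2δ}(P₀), c₂ = −a if S ∈ B_{2δ}(P₀), and arbitrary otherwise. Then there is a constant C > 0 depending only on Λ and A₁ such that for every Q_δ(t₀,P₀) ⊆ (−2,2)×S² with 0 < δ < 1/2: ∫_{Q_{δ/2}(t₀,P₀)} ( |∇_gΦ|² + e^{4u}|∇_g v|² ) dvol_{g₀} dt ≤ (C/δ²) ∫_{Q_δ(t₀,P₀)∖Q_{δ/2}(t₀,P₀)} ( |Φ − c₁|² + ω⁻⁴|v − c₂|² ) dvol_{g₀} dt. -/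

import Mathlib

open Real MeasureTheory Set Filter

noncomputable section

/-- `θ`-partial derivative of a function of `(θ, φ)`. -/
def pdθ (f : ℝ → ℝ → ℝ) : ℝ → ℝ → ℝ := fun θ φ => deriv (fun x => f x φ) θ

/-- `φ`-partial derivative of a function of `(θ, φ)`. -/
def pdφ (f : ℝ → ℝ → ℝ) : ℝ → ℝ → ℝ := fun θ φ => deriv (fun x => f θ x) φ

/-- coordinate derivative in direction `i` (`0 = θ`, `1 = φ`). -/
def pder2 (i : Fin 2) : (ℝ → ℝ → ℝ) → (ℝ → ℝ → ℝ) := if i = 0 then pdθ else pdφ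

/-- Christoffel symbols `Γ^m_{i j}` of the round metric on `S²` in `(θ, φ)`. -/
def christoffel (m i j : Fin 2) (θ : ℝ) : ℝ :=
  if m = 0 ∧ i = 1 ∧ j = 1 then -(Real.sin θ * Real.cos θ)
  else if m = 1 ∧ ((i = 0 ∧ j = 1) ∨ (i = 1 ∧ j = 0)) then Real.cos θ / Real.sin θ
  else 0

/-- covariant derivative (in the round metric) of a `k`-tensor on `S²`,
given by its coordinate components. -/
def covDer {k : ℕ} (T : (Fin k → Fin 2) → ℝ → ℝ → ℝ) :
    (Fin (k + 1) → Fin 2) → ℝ → ℝ → ℝ := fun I θ φ =>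
  pder2 (I 0) (T fun j => I j.succ) θ φ
    - ∑ j : Fin k, ∑ m : Fin 2,
        christoffel m (I 0) (I j.succ) θ *
          T (Function.update (fun j' => I j'.succ) j m) θ φ

/-- the `k`-th covariant derivative of a function on `S²`. -/
def covIter (f : ℝ → ℝ → ℝ) : (k : ℕ) → (Fin k → Fin 2) → ℝ → ℝ → ℝ
  | 0 => fun _ => f
  | k + 1 => covDer (covIter f k)

/-- inverse-metric weight used to compute tensor norms. -/
def sphWeight (i : Fin 2) (θ : ℝ) : ℝ := if i = 0 then 1 else (Real.sin θ ^ 2)⁻¹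

/-- `|∇_{g₀}^k f|`, the norm of the `k`-th covariant derivative in the round metric. -/
def covNorm (k : ℕ) (f : ℝ → ℝ → ℝ) (θ φ : ℝ) : ℝ :=
  Real.sqrt (∑ I : Fin k → Fin 2, (∏ j, sphWeight (I j) θ) * (covIter f k I θ φ) ^ 2)

/-- `∇_{g₀}f·∇_{g₀}h` on the round sphere. -/
def gradDotS2 (f g : ℝ → ℝ → ℝ) (θ φ : ℝ) : ℝ :=
  pdθ f θ φ * pdθ g θ φ + (Real.sin θ ^ 2)⁻¹ * pdφ f θ φ * pdφ g θ φ

/-- `|∇_{g₀}f|²` on the round sphere. -/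
def gradNormSqS2 (f : ℝ → ℝ → ℝ) (θ φ : ℝ) : ℝ := gradDotS2 f f θ φ

/-- `Δ_{g₀}f`, the round Laplacian in coordinates. -/
def lapS2 (f : ℝ → ℝ → ℝ) (θ φ : ℝ) : ℝ :=
  pdθ (pdθ f) θ φ + (Real.cos θ / Real.sin θ) * pdθ f θ φ +
    (Real.sin θ ^ 2)⁻¹ * pdφ (pdφ f) θ φ

/-- integral over `S²` with respect to `dvol_{g₀} = sinθ dθ dφ`. -/
def sphInt (f : ℝ → ℝ → ℝ) : ℝ :=
  ∫ θ in Ioo (0 : ℝ) π, (∫ φ in Ioo (0 : ℝ) (2 * π), f θ φ) * Real.sin θ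

/-- round distance between the points with coordinates `(θ, φ)` and `(θ', φ')`. -/
def sDist (θ φ θ' φ' : ℝ) : ℝ :=
  Real.arccos (Real.cos θ * Real.cos θ' + Real.sin θ * Real.sin θ' * Real.cos (φ - φ'))

/-- a function on `S²` (in coordinates), of class `C^k`, with bounded covariant
derivatives up to order `k`. -/
def CkSphere (k : ℕ) (f : ℝ → ℝ → ℝ) : Prop :=
  ContDiffOn ℝ k (fun p : ℝ × ℝ => f p.1 p.2) (Ioo 0 π ×ˢ (univ : Set ℝ)) ∧
  (∀ θ φ : ℝ, f θ (φ + 2 * π) = f θ φ) ∧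
  ∃ C : ℝ, ∀ j ≤ k, ∀ θ ∈ Ioo (0 : ℝ) π, ∀ φ : ℝ, covNorm j f θ φ ≤ C

/-- a smooth function on `S²` (in coordinates), with bounded covariant derivatives
of all orders. -/
def SmoothSphere (f : ℝ → ℝ → ℝ) : Prop :=
  ContDiffOn ℝ (⊤ : ℕ∞) (fun p : ℝ × ℝ => f p.1 p.2) (Ioo 0 π ×ˢ (univ : Set ℝ)) ∧
  (∀ θ φ : ℝ, f θ (φ + 2 * π) = f θ φ) ∧
  ∀ j : ℕ, ∃ C : ℝ, ∀ θ ∈ Ioo (0 : ℝ) π, ∀ φ : ℝ, covNorm j f θ φ ≤ C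
/-- `t`-partial derivative on the cylinder. -/
def cdt (F : ℝ → ℝ → ℝ → ℝ) : ℝ → ℝ → ℝ → ℝ := fun t θ φ => deriv (fun s => F s θ φ) t

/-- `θ`-partial derivative on the cylinder. -/
def cdθ (F : ℝ → ℝ → ℝ → ℝ) : ℝ → ℝ → ℝ → ℝ := fun t => pdθ (F t)

/-- `φ`-partial derivative on the cylinder. -/
def cdφ (F : ℝ → ℝ → ℝ → ℝ) : ℝ → ℝ → ℝ → ℝ := fun t => pdφ (F t)

/-- the operator `L = ∂_t² − ∂_t + Δ_{g₀}` on the cylinder. -/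
def cL (F : ℝ → ℝ → ℝ → ℝ) : ℝ → ℝ → ℝ → ℝ := fun t θ φ =>
  cdt (cdt F) t θ φ - cdt F t θ φ + lapS2 (F t) θ φ

/-- `∇_g F·∇_g G` for the product metric `g = dt² + g₀`. -/
def cgradDot (F G : ℝ → ℝ → ℝ → ℝ) (t θ φ : ℝ) : ℝ :=
  cdt F t θ φ * cdt G t θ φ + gradDotS2 (F t) (G t) θ φ

/-- `|∇_g F|²` for the product metric `g = dt² + g₀`. -/
def cgradNormSq (F : ℝ → ℝ → ℝ → ℝ) (t θ φ : ℝ) : ℝ := cgradDot F F t θ φ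

/-- a renormalizer `ω` on the interval `I`: positive and smooth away from the poles,
with `ln ω − ln sinθ` extending continuously to `I×S²` together with all its
coordinate derivatives of order `≤ 10`, bounded in absolute value by `A₁ ≥ 1`. -/
structure Renormalizer (I : Set ℝ) (A₁ : ℝ) : Type where
  ω : ℝ → ℝ → ℝ → ℝ
  A₁_ge : 1 ≤ A₁
  pos : ∀ t ∈ I, ∀ θ ∈ Ioo (0 : ℝ) π, ∀ φ : ℝ, 0 < ω t θ φ
  periodic : ∀ t θ φ : ℝ, ω t θ (φ + 2 * π) = ω t θ φ
  smooth : ContDiffOn ℝ (⊤ : ℕ∞) (fun p : ℝ × ℝ × ℝ => ω p.1 p.2.1 p.2.2)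
    (I ×ˢ (Ioo (0 : ℝ) π ×ˢ (univ : Set ℝ)))
  deriv_ext : ∀ m l n : ℕ, m + l + n ≤ 10 →
    ∃ G : ℝ → ℝ → ℝ → ℝ,
      ContinuousOn (fun p : ℝ × ℝ × ℝ => G p.1 p.2.1 p.2.2)
        (I ×ˢ (Icc (0 : ℝ) π ×ˢ (univ : Set ℝ))) ∧
      (∀ t ∈ I, ∀ θ ∈ Ioo (0 : ℝ) π, ∀ φ : ℝ,
        G t θ φ = (cdt^[m] (cdθ^[l] (cdφ^[n]
          (fun t θ φ => Real.log (ω t θ φ) - Real.log (Real.sin θ))))) t θ φ) ∧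
      (∀ t ∈ I, ∀ θ ∈ Icc (0 : ℝ) π, ∀ φ : ℝ, |G t θ φ| ≤ A₁)

/-- a classical solution `(Φ, v)` of the renormalized harmonic map system on `I×S²`,
with constants `Λ ≥ 1` and `a > 0`:  `C³` on `I×S²` and smooth in `t` and `φ`,
satisfying `LΦ = 2e^{4u}|∇_g v|² + L ln ω` and `Lv = −4∇_g u·∇_g v` (where
`u = Φ − ln ω`), `|Φ| ≤ Λ`, with locally finite renormalized energy, and with
traces `v = a` at the north pole and `v = −a` at the south pole. -/
structure RHMSolution (I : Set ℝ) (A₁ : ℝ) (R : Renormalizer I A₁) (Λ a : ℝ) :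
    Type where
  Φ : ℝ → ℝ → ℝ → ℝ
  v : ℝ → ℝ → ℝ → ℝ
  Λ_ge : 1 ≤ Λ
  a_pos : 0 < a
  periodicΦ : ∀ t θ φ : ℝ, Φ t θ (φ + 2 * π) = Φ t θ φ
  periodicv : ∀ t θ φ : ℝ, v t θ (φ + 2 * π) = v t θ φ
  regΦ : ContDiffOn ℝ 3 (fun p : ℝ × ℝ × ℝ => Φ p.1 p.2.1 p.2.2)
    (I ×ˢ (Icc (0 : ℝ) π ×ˢ (univ : Set ℝ)))
  regv : ContDiffOn ℝ 3 (fun p : ℝ × ℝ × ℝ => v p.1 p.2.1 p.2.2)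
    (I ×ˢ (Icc (0 : ℝ) π ×ˢ (univ : Set ℝ)))
  smooth_tφ_Φ : ∀ θ ∈ Icc (0 : ℝ) π,
    ContDiffOn ℝ (⊤ : ℕ∞) (fun q : ℝ × ℝ => Φ q.1 θ q.2) (I ×ˢ (univ : Set ℝ))
  smooth_tφ_v : ∀ θ ∈ Icc (0 : ℝ) π,
    ContDiffOn ℝ (⊤ : ℕ∞) (fun q : ℝ × ℝ => v q.1 θ q.2) (I ×ˢ (univ : Set ℝ))
  eqΦ : ∀ t ∈ I, ∀ θ ∈ Ioo (0 : ℝ) π, ∀ φ : ℝ,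
    cL Φ t θ φ =
      2 * Real.exp (4 * (Φ t θ φ - Real.log (R.ω t θ φ))) * cgradNormSq v t θ φ
        + cL (fun t θ φ => Real.log (R.ω t θ φ)) t θ φ
  eqv : ∀ t ∈ I, ∀ θ ∈ Ioo (0 : ℝ) π, ∀ φ : ℝ,
    cL v t θ φ =
      -4 * cgradDot (fun t θ φ => Φ t θ φ - Real.log (R.ω t θ φ)) v t θ φ
  bddΦ : ∀ t ∈ I, ∀ θ ∈ Icc (0 : ℝ) π, ∀ φ : ℝ, |Φ t θ φ| ≤ Λ
  energy_loc : ∀ J : Set ℝ, J ⊆ I → IsCompact J →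
    IntegrableOn (fun p : ℝ × ℝ × ℝ =>
      (cgradNormSq Φ p.1 p.2.1 p.2.2
        + ((R.ω p.1 p.2.1 p.2.2) ^ 4)⁻¹ * cgradNormSq v p.1 p.2.1 p.2.2)
        * Real.sin p.2.1)
      (J ×ˢ (Ioo (0 : ℝ) π ×ˢ Ioo (0 : ℝ) (2 * π))) volume
  traceN : ∀ t ∈ I, ∀ φ : ℝ, v t 0 φ = a
  traceS : ∀ t ∈ I, ∀ φ : ℝ, v t π φ = -a
/-- the cylinder `Q_δ(t₀,P₀) = (t₀−δ,t₀+δ) × B_δ(P₀)` in coordinates, using the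
fundamental domain `φ ∈ (φ₀−π, φ₀+π)`. -/
def Qset (t₀ θ₀ φ₀ δ : ℝ) : Set (ℝ × ℝ × ℝ) :=
  {p : ℝ × ℝ × ℝ | p.1 ∈ Ioo (t₀ - δ) (t₀ + δ) ∧ p.2.1 ∈ Ioo 0 π ∧
    p.2.2 ∈ Ioo (φ₀ - π) (φ₀ + π) ∧ sDist p.2.1 p.2.2 θ₀ φ₀ < δ}

/-!
With `u = Φ - ln ω` the pair `(u, v)` is a map into the hyperbolic plane with metric
`du² + e^{4u} dv²`. Let `f` be `cosh (2 d)`, where `d` is the distance from `(u, v)` to the moving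
point `(c₁ - ln ω, c₂)`. The equations make `f` a subsolution with a quantitative gain: for every
cutoff `ζ`, completing squares in the cross term yields pointwise
`e^{-4Λ} ζ² (|∇Φ|² + e^{4u} |∇v|²) - C |∇ζ|² (|Φ - c₁|² + ω⁻⁴ |v - c₂|²) ≤ ζ² L f + ∇(ζ²) · ∇f`.
The right-hand side is a divergence for the density `e^{-t} sin θ`, so it integrates to zero.

The axis carries no flux: finite energy forces the first and second order terms of `v` at the poles
to vanish, and `c₂ = ± a` if `ζ` is supported near a pole, so there `v - c₂ = O(sin³ θ)`, which
beats the growth of `ω⁻⁴`.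

The right-hand side of the inequality has to be shown integrable up to `t = t₀ ± δ`, where nothing
bounds the energy uniformly a priori. Testing the subsolution `e^Φ` with `(τ² - (t - t₀)²)²`,
uniformly in `τ < δ`, controls `(τ² - (t - t₀)²)² ω⁻⁴ |∇v|²`, and Hardy's inequality in `t` turns
this into a bound for `ω⁻⁴ |v - c₂|²`.
-/

/-! ### Calculus on the coordinate cylinder -/

/-- The coordinate cylinder over the time set `I` with the poles removed. -/
def regCyl (I : Set ℝ) : Set (ℝ × ℝ × ℝ) := I ×ˢ (Ioo (0 : ℝ) π ×ˢ (univ : Set ℝ))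

/-- `F` is of class `C^n` on the coordinate cylinder with the poles removed. -/
def CylContDiff (I : Set ℝ) (n : ℕ) (F : ℝ → ℝ → ℝ → ℝ) : Prop :=
  ContDiffOn ℝ n ↿F (regCyl I)

section Calculus

variable {I : Set ℝ} {F G : ℝ → ℝ → ℝ → ℝ} {t θ φ : ℝ}

lemma mem_regCyl : (t, θ, φ) ∈ regCyl I ↔ t ∈ I ∧ θ ∈ Ioo 0 π := by simp [regCyl]

lemma isOpen_regCyl (hI : IsOpen I) : IsOpen (regCyl I) :=
  hI.prod (isOpen_Ioo.prod isOpen_univ)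

lemma sin_pos_of_mem_regCyl {p : ℝ × ℝ × ℝ} (hp : p ∈ regCyl I) : 0 < sin p.2.1 :=
  sin_pos_of_mem_Ioo hp.2.1

lemma hasDerivAt_comp_t (h : DifferentiableAt ℝ ↿F (t, θ, φ)) :
    HasDerivAt (fun s => F s θ φ) (fderiv ℝ ↿F (t, θ, φ) (1, 0, 0)) t :=
  h.hasFDerivAt.comp_hasDerivAt (f := fun s => (s, θ, φ)) t
    ((hasDerivAt_id t).prodMk ((hasDerivAt_const t θ).prodMk (hasDerivAt_const t φ)))

lemma hasDerivAt_comp_θ (h : DifferentiableAt ℝ ↿F (t, θ, φ)) :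
    HasDerivAt (fun s => F t s φ) (fderiv ℝ ↿F (t, θ, φ) (0, 1, 0)) θ :=
  h.hasFDerivAt.comp_hasDerivAt (f := fun s => (t, s, φ)) θ
    ((hasDerivAt_const θ t).prodMk ((hasDerivAt_id θ).prodMk (hasDerivAt_const θ φ)))

lemma hasDerivAt_comp_φ (h : DifferentiableAt ℝ ↿F (t, θ, φ)) :
    HasDerivAt (fun s => F t θ s) (fderiv ℝ ↿F (t, θ, φ) (0, 0, 1)) φ :=
  h.hasFDerivAt.comp_hasDerivAt (f := fun s => (t, θ, s)) φ
    ((hasDerivAt_const φ t).prodMk ((hasDerivAt_const φ θ).prodMk (hasDerivAt_id φ)))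

namespace CylContDiff

variable {n : ℕ}

lemma of_le {m : ℕ} (h : CylContDiff I n F) (hm : m ≤ n) : CylContDiff I m F :=
  ContDiffOn.of_le h (by exact_mod_cast hm)

lemma continuousOn (h : CylContDiff I n F) : ContinuousOn ↿F (regCyl I) :=
  ContDiffOn.continuousOn h

lemma mul (hF : CylContDiff I n F) (hG : CylContDiff I n G) :
    CylContDiff I n fun t θ φ => F t θ φ * G t θ φ := ContDiffOn.mul hF hG

lemma differentiableAt (h : CylContDiff I (n + 1) F) (hI : IsOpen I)
    {p : ℝ × ℝ × ℝ} (hp : p ∈ regCyl I) : DifferentiableAt ℝ ↿F p :=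
  (ContDiffOn.contDiffAt h ((isOpen_regCyl hI).mem_nhds hp)).differentiableAt (by simp)

lemma hasDerivAt_cdt (h : CylContDiff I (n + 1) F) (hI : IsOpen I) (hp : (t, θ, φ) ∈ regCyl I) :
    HasDerivAt (fun s => F s θ φ) (cdt F t θ φ) t :=
  (hasDerivAt_comp_t (h.differentiableAt hI hp)).differentiableAt.hasDerivAt

lemma hasDerivAt_cdθ (h : CylContDiff I (n + 1) F) (hI : IsOpen I) (hp : (t, θ, φ) ∈ regCyl I) :
    HasDerivAt (fun s => F t s φ) (cdθ F t θ φ) θ :=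
  (hasDerivAt_comp_θ (h.differentiableAt hI hp)).differentiableAt.hasDerivAt

lemma hasDerivAt_cdφ (h : CylContDiff I (n + 1) F) (hI : IsOpen I) (hp : (t, θ, φ) ∈ regCyl I) :
    HasDerivAt (fun s => F t θ s) (cdφ F t θ φ) φ :=
  (hasDerivAt_comp_φ (h.differentiableAt hI hp)).differentiableAt.hasDerivAt

lemma fderiv_apply (h : CylContDiff I (n + 1) F) (hI : IsOpen I) (w : ℝ × ℝ × ℝ) :
    ContDiffOn ℝ n (fun p => fderiv ℝ ↿F p w) (regCyl I) :=
  (ContDiffOn.fderiv_of_isOpen h (isOpen_regCyl hI) (by norm_cast)).clm_apply contDiffOn_const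

lemma cdt (h : CylContDiff I (n + 1) F) (hI : IsOpen I) : CylContDiff I n (cdt F) :=
  (h.fderiv_apply hI (1, 0, 0)).congr fun _ hp =>
    (hasDerivAt_comp_t (h.differentiableAt hI hp)).deriv

lemma cdθ (h : CylContDiff I (n + 1) F) (hI : IsOpen I) : CylContDiff I n (cdθ F) :=
  (h.fderiv_apply hI (0, 1, 0)).congr fun _ hp =>
    (hasDerivAt_comp_θ (h.differentiableAt hI hp)).deriv

lemma cdφ (h : CylContDiff I (n + 1) F) (hI : IsOpen I) : CylContDiff I n (cdφ F) :=
  (h.fderiv_apply hI (0, 0, 1)).congr fun _ hp =>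
    (hasDerivAt_comp_φ (h.differentiableAt hI hp)).deriv

end CylContDiff

lemma cdφ_add_two_pi (h : ∀ t θ φ, F t θ (φ + 2 * π) = F t θ φ) (t θ φ : ℝ) :
    cdφ F t θ (φ + 2 * π) = cdφ F t θ φ := by
  unfold cdφ pdφ
  rw [← deriv_comp_add_const (f := fun x => F t θ x)]
  simp only [h]

lemma cL_eq (F : ℝ → ℝ → ℝ → ℝ) (t θ φ : ℝ) :
    cL F t θ φ = cdt (cdt F) t θ φ - cdt F t θ φ + (cdθ (cdθ F) t θ φ
      + cos θ / sin θ * cdθ F t θ φ + (sin θ ^ 2)⁻¹ * cdφ (cdφ F) t θ φ) := rfl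

lemma cgradDot_eq (F G : ℝ → ℝ → ℝ → ℝ) (t θ φ : ℝ) :
    cgradDot F G t θ φ = cdt F t θ φ * cdt G t θ φ + (cdθ F t θ φ * cdθ G t θ φ
      + (sin θ ^ 2)⁻¹ * cdφ F t θ φ * cdφ G t θ φ) := rfl

lemma cgradNormSq_eq (F : ℝ → ℝ → ℝ → ℝ) (t θ φ : ℝ) :
    cgradNormSq F t θ φ =
      cdt F t θ φ ^ 2 + (cdθ F t θ φ ^ 2 + (sin θ ^ 2)⁻¹ * cdφ F t θ φ ^ 2) := by
  simp only [cgradNormSq, cgradDot_eq]; ring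

lemma cgradNormSq_nonneg (F : ℝ → ℝ → ℝ → ℝ) (t θ φ : ℝ) : 0 ≤ cgradNormSq F t θ φ := by
  rw [cgradNormSq_eq]; positivity

lemma cdt_sq_le_cgradNormSq (F : ℝ → ℝ → ℝ → ℝ) (t θ φ : ℝ) :
    cdt F t θ φ ^ 2 ≤ cgradNormSq F t θ φ := by
  rw [cgradNormSq_eq, le_add_iff_nonneg_right]; positivity

lemma cdθ_sq_le_cgradNormSq (F : ℝ → ℝ → ℝ → ℝ) (t θ φ : ℝ) :
    cdθ F t θ φ ^ 2 ≤ cgradNormSq F t θ φ := by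
  have : 0 ≤ cdt F t θ φ ^ 2 + (sin θ ^ 2)⁻¹ * cdφ F t θ φ ^ 2 := by positivity
  rw [cgradNormSq_eq]; linarith

lemma CylContDiff.continuousOn_cgradNormSq (h : CylContDiff I 1 F) (hI : IsOpen I) :
    ContinuousOn ↿(cgradNormSq F) (regCyl I) := by
  have ht := (cdt (n := 0) h hI).continuousOn
  have hθ := (cdθ (n := 0) h hI).continuousOn
  have hφ := (cdφ (n := 0) h hI).continuousOn
  have hs : ContinuousOn (fun p : ℝ × ℝ × ℝ => (sin p.2.1 ^ 2)⁻¹) (regCyl I) :=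
    ContinuousOn.inv₀ (by fun_prop) fun p hp => (pow_pos (sin_pos_of_mem_regCyl hp) 2).ne'
  exact ((ht.pow 2).add ((hθ.pow 2).add (hs.mul (hφ.pow 2)))).congr
    fun p _ => cgradNormSq_eq F p.1 p.2.1 p.2.2

end Calculus

/-! ### The divergence theorem on coordinate boxes -/

/-- The open coordinate box `(t₁, t₂) × (α, β) × (φ₁, φ₂)`. -/
def coordBox (t₁ t₂ α β φ₁ φ₂ : ℝ) : Set (ℝ × ℝ × ℝ) := Ioo t₁ t₂ ×ˢ (Ioo α β ×ˢ Ioo φ₁ φ₂)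

/-- The coordinate divergence `∂_t X + ∂_θ Y + ∂_φ Z` of the field `(X, Y, Z)`; the volume
density is not divided out. -/
def coordDiv (X Y Z : ℝ → ℝ → ℝ → ℝ) (t θ φ : ℝ) : ℝ := cdt X t θ φ + (cdθ Y t θ φ + cdφ Z t θ φ)

section Box

variable {I : Set ℝ} {X Y Z : ℝ → ℝ → ℝ → ℝ} {t t₁ t₂ α β φ₁ φ₂ K : ℝ}

lemma measurableSet_coordBox : MeasurableSet (coordBox t₁ t₂ α β φ₁ φ₂) :=
  measurableSet_Ioo.prod (measurableSet_Ioo.prod measurableSet_Ioo)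

lemma coordBox_mono {t₁' t₂' α' β' φ₁' φ₂' : ℝ} (ht₁ : t₁' ≤ t₁) (ht₂ : t₂ ≤ t₂') (hα : α' ≤ α)
    (hβ : β ≤ β') (hφ₁ : φ₁' ≤ φ₁) (hφ₂ : φ₂ ≤ φ₂') :
    coordBox t₁ t₂ α β φ₁ φ₂ ⊆ coordBox t₁' t₂' α' β' φ₁' φ₂' :=
  prod_mono (Ioo_subset_Ioo ht₁ ht₂) (prod_mono (Ioo_subset_Ioo hα hβ) (Ioo_subset_Ioo hφ₁ hφ₂))

lemma coordBox_subset_Icc :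
    coordBox t₁ t₂ α β φ₁ φ₂ ⊆ Icc t₁ t₂ ×ˢ (Icc α β ×ˢ Icc φ₁ φ₂) :=
  prod_mono Ioo_subset_Icc_self (prod_mono Ioo_subset_Icc_self Ioo_subset_Icc_self)

lemma Icc_prod_subset_regCyl (ht : Icc t₁ t₂ ⊆ I) (hα : 0 < α) (hβ : β < π) :
    Icc t₁ t₂ ×ˢ (Icc α β ×ˢ Icc φ₁ φ₂) ⊆ regCyl I :=
  prod_mono ht (prod_mono (Icc_subset_Ioo hα hβ) (subset_univ _))

lemma integrableOn_coordBox_of_continuousOn {f : ℝ × ℝ × ℝ → ℝ}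
    (hf : ContinuousOn f (Icc t₁ t₂ ×ˢ (Icc α β ×ˢ Icc φ₁ φ₂))) :
    IntegrableOn f (coordBox t₁ t₂ α β φ₁ φ₂) :=
  (hf.integrableOn_compact (isCompact_Icc.prod (isCompact_Icc.prod isCompact_Icc))).mono_set
    coordBox_subset_Icc

lemma volume_coordBox_lt_top : volume (coordBox t₁ t₂ α β φ₁ φ₂) < ⊤ :=
  (measure_mono coordBox_subset_Icc).trans_lt
    (isCompact_Icc.prod (isCompact_Icc.prod isCompact_Icc)).measure_lt_top

lemma setIntegral_Ioo_eq_intervalIntegral {a b : ℝ} (hab : a ≤ b) (f : ℝ → ℝ) :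
    ∫ x in Ioo a b, f x = ∫ x in a..b, f x := by
  rw [intervalIntegral.integral_of_le hab, integral_Ioc_eq_integral_Ioo]

lemma CylContDiff.integrableOn_coordBox {F : ℝ → ℝ → ℝ → ℝ} (hF : CylContDiff I 0 F)
    (ht : Icc t₁ t₂ ⊆ I) (hα : 0 < α) (hβ : β < π) :
    IntegrableOn ↿F (coordBox t₁ t₂ α β φ₁ φ₂) :=
  integrableOn_coordBox_of_continuousOn (hF.continuousOn.mono (Icc_prod_subset_regCyl ht hα hβ))

lemma setIntegral_coordBox_cdt_eq_zero (hI : IsOpen I) (hX : CylContDiff I 1 X)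
    (ht : Icc t₁ t₂ ⊆ I) (h12 : t₁ ≤ t₂) (hα : 0 < α) (hβ : β < π)
    (hX0 : ∀ θ φ, X t₂ θ φ = X t₁ θ φ) :
    ∫ p in coordBox t₁ t₂ α β φ₁ φ₂, cdt X p.1 p.2.1 p.2.2 = 0 := by
  have hX' : CylContDiff I 0 (cdt X) := CylContDiff.cdt (n := 0) hX hI
  have hint := hX'.integrableOn_coordBox (φ₁ := φ₁) (φ₂ := φ₂) ht hα hβ
  have hslice : ∀ q ∈ Ioo α β ×ˢ Ioo φ₁ φ₂, ∫ t in Ioo t₁ t₂, cdt X t q.1 q.2 = 0 := by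
    rintro ⟨θ, φ⟩ ⟨hθ, -⟩
    have hmem : ∀ t ∈ uIcc t₁ t₂, (t, θ, φ) ∈ regCyl I := fun t h =>
      mem_regCyl.2 ⟨ht (uIcc_of_le h12 ▸ h), Ioo_subset_Ioo hα.le hβ.le hθ⟩
    rw [setIntegral_Ioo_eq_intervalIntegral h12, intervalIntegral.integral_eq_sub_of_hasDerivAt
      (fun t h => hX.hasDerivAt_cdt (n := 0) hI (hmem t h)), hX0, sub_self]
    exact (hX'.continuousOn.comp (f := fun t => (t, θ, φ)) (by fun_prop) hmem).intervalIntegrable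
  rw [coordBox, Measure.volume_eq_prod, IntegrableOn, ← Measure.prod_restrict] at hint
  rw [coordBox, Measure.volume_eq_prod, ← Measure.prod_restrict]
  refine (integral_prod_symm _ hint).trans ?_
  exact setIntegral_eq_zero_of_forall_eq_zero hslice

lemma setIntegral_rectangle_div_eq (hI : IsOpen I) (hY : CylContDiff I 1 Y)
    (hZ : CylContDiff I 1 Z) (ht : t ∈ I) (hα : 0 < α) (hβ : β < π) (hαβ : α ≤ β)
    (hφ : φ₁ ≤ φ₂) :
    ∫ q in Ioo α β ×ˢ Ioo φ₁ φ₂, (cdθ Y t q.1 q.2 + cdφ Z t q.1 q.2) =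
      (((∫ θ in α..β, Z t θ φ₂) - ∫ θ in α..β, Z t θ φ₁) + ∫ φ in φ₁..φ₂, Y t β φ)
        - ∫ φ in φ₁..φ₂, Y t α φ := by
  have hmem : ∀ q ∈ Icc (α, φ₁) (β, φ₂), (t, q) ∈ regCyl I := fun q hq =>
    mem_regCyl.2 ⟨ht, Icc_subset_Ioo hα hβ ⟨hq.1.1, hq.2.1⟩⟩
  have hsub : Ioo α β ×ˢ Ioo φ₁ φ₂ ⊆ Icc (α, φ₁) (β, φ₂) := by
    rw [← Icc_prod_Icc]; exact prod_mono Ioo_subset_Icc_self Ioo_subset_Icc_self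
  have hfd {F} (hF : CylContDiff I 1 F) (q) (hq : q ∈ Icc (α, φ₁) (β, φ₂)) :
      HasFDerivAt (fun q : ℝ × ℝ => F t q.1 q.2)
        ((fderiv ℝ ↿F (t, q)).comp (ContinuousLinearMap.inr ℝ ℝ (ℝ × ℝ))) q :=
    (hF.differentiableAt (n := 0) hI (hmem q hq)).hasFDerivAt.comp q (hasFDerivAt_prodMk_right t q)
  have hY' (q) (hq : q ∈ Icc (α, φ₁) (β, φ₂)) : cdθ Y t q.1 q.2 = fderiv ℝ ↿Y (t, q) (0, 1, 0) :=
    (hasDerivAt_comp_θ (hY.differentiableAt (n := 0) hI (hmem q hq))).deriv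
  have hZ' (q) (hq : q ∈ Icc (α, φ₁) (β, φ₂)) : cdφ Z t q.1 q.2 = fderiv ℝ ↿Z (t, q) (0, 0, 1) :=
    (hasDerivAt_comp_φ (hZ.differentiableAt (n := 0) hI (hmem q hq))).deriv
  have hint : IntegrableOn (fun q => fderiv ℝ ↿Y (t, q) (0, 1, 0) + fderiv ℝ ↿Z (t, q) (0, 0, 1))
      (Icc (α, φ₁) (β, φ₂)) := by
    have hcont := ((hY.fderiv_apply (n := 0) hI (0, 1, 0)).continuousOn.add
      (hZ.fderiv_apply (n := 0) hI (0, 0, 1)).continuousOn).comp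
      (f := fun q : ℝ × ℝ => (t, q)) (by fun_prop) hmem
    exact hcont.integrableOn_compact isCompact_Icc
  have hae : (Ioo α β ×ˢ Ioo φ₁ φ₂ : Set (ℝ × ℝ)) =ᵐ[volume] Icc (α, φ₁) (β, φ₂) := by
    rw [← Icc_prod_Icc]; exact Measure.set_prod_ae_eq Ioo_ae_eq_Icc Ioo_ae_eq_Icc
  rw [setIntegral_congr_set hae, setIntegral_congr_fun measurableSet_Icc
    fun q hq => congrArg₂ (· + ·) (hY' q hq) (hZ' q hq)]
  exact integral_divergence_prod_Icc_of_hasFDerivAt_of_le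
    (fun q => Y t q.1 q.2) (fun q => Z t q.1 q.2) _ _ (α, φ₁) (β, φ₂) ⟨hαβ, hφ⟩
    (fun q hq => (hfd hY q hq).continuousAt.continuousWithinAt)
    (fun q hq => (hfd hZ q hq).continuousAt.continuousWithinAt)
    (fun q hq => hfd hY q (hsub hq)) (fun q hq => hfd hZ q (hsub hq)) hint

lemma abs_setIntegral_rectangle_div_le (hI : IsOpen I) (hY : CylContDiff I 1 Y)
    (hZ : CylContDiff I 1 Z) (ht : t ∈ I) (hα : 0 < α) (hβ : β < π) (hαβ : α ≤ β)
    (hφ : φ₁ ≤ φ₂) (hZ0 : ∀ θ, Z t θ φ₂ = Z t θ φ₁)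
    (hYα : ∀ φ ∈ Icc φ₁ φ₂, |Y t α φ| ≤ K) (hYβ : ∀ φ ∈ Icc φ₁ φ₂, |Y t β φ| ≤ K) :
    |∫ q in Ioo α β ×ˢ Ioo φ₁ φ₂, (cdθ Y t q.1 q.2 + cdφ Z t q.1 q.2)| ≤
      2 * K * (φ₂ - φ₁) := by
  have hface {θ : ℝ} (h : ∀ φ ∈ Icc φ₁ φ₂, |Y t θ φ| ≤ K) :
      |∫ φ in φ₁..φ₂, Y t θ φ| ≤ K * (φ₂ - φ₁) := by
    rw [← abs_of_nonneg (sub_nonneg.2 hφ), ← Real.norm_eq_abs]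
    exact intervalIntegral.norm_integral_le_of_norm_le_const fun φ hφ' =>
      h φ (Ioc_subset_Icc_self (uIoc_of_le hφ ▸ hφ'))
  rw [setIntegral_rectangle_div_eq hI hY hZ ht hα hβ hαβ hφ]
  simp only [hZ0, sub_self, zero_add]
  linarith [abs_sub (∫ φ in φ₁..φ₂, Y t β φ) (∫ φ in φ₁..φ₂, Y t α φ), hface hYα, hface hYβ]

lemma abs_setIntegral_coordBox_coordDiv_le (hI : IsOpen I) (hX : CylContDiff I 1 X)
    (hY : CylContDiff I 1 Y) (hZ : CylContDiff I 1 Z) (ht : Icc t₁ t₂ ⊆ I) (h12 : t₁ ≤ t₂)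
    (hα : 0 < α) (hβ : β < π) (hαβ : α ≤ β) (hφ : φ₁ ≤ φ₂) (hX0 : ∀ θ φ, X t₂ θ φ = X t₁ θ φ)
    (hZ0 : ∀ t θ, Z t θ φ₂ = Z t θ φ₁)
    (hYα : ∀ t ∈ Icc t₁ t₂, ∀ φ ∈ Icc φ₁ φ₂, |Y t α φ| ≤ K)
    (hYβ : ∀ t ∈ Icc t₁ t₂, ∀ φ ∈ Icc φ₁ φ₂, |Y t β φ| ≤ K) :
    |∫ p in coordBox t₁ t₂ α β φ₁ φ₂, coordDiv X Y Z p.1 p.2.1 p.2.2| ≤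
      2 * K * (φ₂ - φ₁) * (t₂ - t₁) := by
  have hintX : IntegrableOn ↿(cdt X) (coordBox t₁ t₂ α β φ₁ φ₂) :=
    (CylContDiff.cdt (n := 0) hX hI).integrableOn_coordBox ht hα hβ
  have hintYZ : IntegrableOn (fun p => ↿(cdθ Y) p + ↿(cdφ Z) p) (coordBox t₁ t₂ α β φ₁ φ₂) :=
    ((CylContDiff.cdθ (n := 0) hY hI).integrableOn_coordBox ht hα hβ).add
      ((CylContDiff.cdφ (n := 0) hZ hI).integrableOn_coordBox ht hα hβ)
  have hfubini : ∫ p in coordBox t₁ t₂ α β φ₁ φ₂, (↿(cdθ Y) p + ↿(cdφ Z) p) =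
      ∫ t in Ioo t₁ t₂, ∫ q in Ioo α β ×ˢ Ioo φ₁ φ₂, (cdθ Y t q.1 q.2 + cdφ Z t q.1 q.2) :=
    setIntegral_prod _ hintYZ
  have hX_zero : ∫ p in coordBox t₁ t₂ α β φ₁ φ₂, ↿(cdt X) p = 0 :=
    setIntegral_coordBox_cdt_eq_zero hI hX ht h12 hα hβ hX0
  have hsum : ∫ p in coordBox t₁ t₂ α β φ₁ φ₂, coordDiv X Y Z p.1 p.2.1 p.2.2 =
      ∫ t in Ioo t₁ t₂, ∫ q in Ioo α β ×ˢ Ioo φ₁ φ₂, (cdθ Y t q.1 q.2 + cdφ Z t q.1 q.2) := by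
    rw [← hfubini, ← zero_add (∫ p in _, (↿(cdθ Y) p + ↿(cdφ Z) p)), ← hX_zero]
    exact integral_add hintX hintYZ
  rw [hsum, ← Real.volume_real_Ioo_of_le h12, ← Real.norm_eq_abs]
  exact norm_setIntegral_le_of_norm_le_const (by simp) fun t h =>
    abs_setIntegral_rectangle_div_le hI hY hZ (ht (Ioo_subset_Icc_self h)) hα hβ hαβ hφ (hZ0 t)
      (hYα t (Ioo_subset_Icc_self h)) (hYβ t (Ioo_subset_Icc_self h))

lemma setIntegral_coordBox_le_of_sub_le_coordDiv (hI : IsOpen I) (hX : CylContDiff I 1 X)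
    (hY : CylContDiff I 1 Y) (hZ : CylContDiff I 1 Z) (ht : Icc t₁ t₂ ⊆ I) (h12 : t₁ ≤ t₂)
    (hα : 0 < α) (hβ : β < π) (hαβ : α ≤ β) (hφ : φ₁ ≤ φ₂) (hX0 : ∀ θ φ, X t₂ θ φ = X t₁ θ φ)
    (hZ0 : ∀ t θ, Z t θ φ₂ = Z t θ φ₁)
    (hYα : ∀ t ∈ Icc t₁ t₂, ∀ φ ∈ Icc φ₁ φ₂, |Y t α φ| ≤ K)
    (hYβ : ∀ t ∈ Icc t₁ t₂, ∀ φ ∈ Icc φ₁ φ₂, |Y t β φ| ≤ K) {g h : ℝ × ℝ × ℝ → ℝ}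
    (hg : ContinuousOn g (regCyl I)) (hh : IntegrableOn h (coordBox t₁ t₂ α β φ₁ φ₂))
    (hle : ∀ p ∈ coordBox t₁ t₂ α β φ₁ φ₂, g p - h p ≤ coordDiv X Y Z p.1 p.2.1 p.2.2) :
    ∫ p in coordBox t₁ t₂ α β φ₁ φ₂, g p ≤
      (∫ p in coordBox t₁ t₂ α β φ₁ φ₂, h p) + 2 * K * (φ₂ - φ₁) * (t₂ - t₁) := by
  have hg_int : IntegrableOn g (coordBox t₁ t₂ α β φ₁ φ₂) :=
    integrableOn_coordBox_of_continuousOn (hg.mono (Icc_prod_subset_regCyl ht hα hβ))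
  have hdiv_int : IntegrableOn (fun p => coordDiv X Y Z p.1 p.2.1 p.2.2)
      (coordBox t₁ t₂ α β φ₁ φ₂) :=
    ((CylContDiff.cdt (n := 0) hX hI).integrableOn_coordBox ht hα hβ).add
      (((CylContDiff.cdθ (n := 0) hY hI).integrableOn_coordBox ht hα hβ).add
        ((CylContDiff.cdφ (n := 0) hZ hI).integrableOn_coordBox ht hα hβ))
  have hmono := setIntegral_mono_on (hg_int.sub hh) hdiv_int measurableSet_coordBox hle
  have hflux := abs_setIntegral_coordBox_coordDiv_le hI hX hY hZ ht h12 hα hβ hαβ hφ hX0 hZ0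
    hYα hYβ
  simp only [Pi.sub_apply, integral_sub hg_int hh] at hmono
  linarith [le_of_abs_le hflux]

lemma aecover_coordBox_shrink_θ {ε : ℕ → ℝ} (hε : Tendsto ε atTop (nhds 0)) :
    AECover (volume.restrict (coordBox t₁ t₂ α β φ₁ φ₂)) atTop
      fun n => coordBox t₁ t₂ (α + ε n) (β - ε n) φ₁ φ₂ where
  ae_eventually_mem := by
    refine (ae_restrict_iff' measurableSet_coordBox).2 (ae_of_all _ fun p hp => ?_)
    obtain ⟨ht, hθ, hφ⟩ := hp
    filter_upwards [hε.eventually (gt_mem_nhds (sub_pos.2 hθ.1)),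
      hε.eventually (gt_mem_nhds (sub_pos.2 hθ.2))] with n h₁ h₂
    exact ⟨ht, ⟨by linarith, by linarith⟩, hφ⟩
  measurableSet _ := measurableSet_coordBox

lemma integrableOn_and_setIntegral_le_of_aecover {Ω : Type*} [MeasurableSpace Ω] {μ : Measure Ω}
    {s : Set Ω} {B : ℕ → Set Ω} {g h : Ω → ℝ} {r : ℕ → ℝ} {c : ℝ} (hs : MeasurableSet s)
    (hB : AECover (μ.restrict s) atTop B) (hBs : ∀ n, B n ⊆ s) (hg : ∀ n, IntegrableOn g (B n) μ)
    (hg0 : ∀ x ∈ s, 0 ≤ g x) (hh : IntegrableOn h s μ) (hr : Tendsto r atTop (nhds c))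
    (hle : ∀ n, ∫ x in B n, g x ∂μ ≤ (∫ x in B n, h x ∂μ) + r n) :
    IntegrableOn g s μ ∧ ∫ x in s, g x ∂μ ≤ (∫ x in s, h x ∂μ) + c := by
  have hrestrict (n) : (μ.restrict s).restrict (B n) = μ.restrict (B n) :=
    Measure.restrict_restrict_of_subset (hBs n)
  have hlim : Tendsto (fun n => (∫ x in B n, h x ∂μ) + r n) atTop
      (nhds ((∫ x in s, h x ∂μ) + c)) := by
    have hlim_h := hB.integral_tendsto_of_countably_generated hh
    simp only [hrestrict] at hlim_h
    exact hlim_h.add hr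
  have hg_int : IntegrableOn g s μ := by
    refine hB.integrable_of_integral_bounded_of_nonneg_ae ((∫ x in s, h x ∂μ) + c + 1)
      (fun n => ?_) ((ae_restrict_iff' hs).2 (ae_of_all _ hg0)) ?_
    · rw [IntegrableOn, hrestrict]
      exact hg n
    · filter_upwards [hlim.eventually (gt_mem_nhds (lt_add_one _))] with n hn
      rw [hrestrict]
      exact (hle n).trans hn.le
  refine ⟨hg_int, le_of_tendsto_of_tendsto ?_ hlim (Eventually.of_forall hle)⟩
  simpa only [hrestrict] using hB.integral_tendsto_of_countably_generated hg_int

lemma integrableOn_and_setIntegral_le_of_sub_le_coordDiv (hI : IsOpen I)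
    (hX : CylContDiff I 1 X) (hY : CylContDiff I 1 Y) (hZ : CylContDiff I 1 Z)
    (ht : Icc t₁ t₂ ⊆ I) (h12 : t₁ ≤ t₂) (hα : 0 ≤ α) (hβ : β ≤ π) (hαβ : α < β) (hφ : φ₁ ≤ φ₂)
    (hX0 : ∀ θ φ, X t₂ θ φ = X t₁ θ φ) (hZ0 : ∀ t θ, Z t θ φ₂ = Z t θ φ₁)
    (hYK : ∀ t ∈ Icc t₁ t₂, ∀ θ ∈ Ioo α β, ∀ φ ∈ Icc φ₁ φ₂,
      |Y t θ φ| ≤ K * min (θ - α) (β - θ))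
    {g h : ℝ × ℝ × ℝ → ℝ} (hg : ContinuousOn g (regCyl I))
    (hg0 : ∀ p ∈ coordBox t₁ t₂ α β φ₁ φ₂, 0 ≤ g p)
    (hh : IntegrableOn h (coordBox t₁ t₂ α β φ₁ φ₂))
    (hle : ∀ p ∈ coordBox t₁ t₂ α β φ₁ φ₂, g p - h p ≤ coordDiv X Y Z p.1 p.2.1 p.2.2) :
    IntegrableOn g (coordBox t₁ t₂ α β φ₁ φ₂) ∧
      ∫ p in coordBox t₁ t₂ α β φ₁ φ₂, g p ≤ ∫ p in coordBox t₁ t₂ α β φ₁ φ₂, h p := by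
  set ε : ℕ → ℝ := fun n => (β - α) / 2 * (1 / ((n : ℝ) + 1)) with hε_def
  have hε : Tendsto ε atTop (nhds 0) := by
    simpa [hε_def] using tendsto_one_div_add_atTop_nhds_zero_nat.const_mul ((β - α) / 2)
  have hε_pos (n) : 0 < ε n := mul_pos (by linarith) Nat.one_div_pos_of_nat
  have hε_le (n) : ε n ≤ (β - α) / 2 :=
    mul_le_of_le_one_right (by linarith) (Nat.one_div_le_one_div (Nat.zero_le n) |>.trans (by simp))
  have hsub (n) : coordBox t₁ t₂ (α + ε n) (β - ε n) φ₁ φ₂ ⊆ coordBox t₁ t₂ α β φ₁ φ₂ :=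
    coordBox_mono le_rfl le_rfl (by linarith [hε_pos n]) (by linarith [hε_pos n]) le_rfl le_rfl
  have hr : Tendsto (fun n => 2 * (K * ε n) * (φ₂ - φ₁) * (t₂ - t₁)) atTop (nhds 0) := by
    simpa using (((hε.const_mul K).const_mul 2).mul_const (φ₂ - φ₁)).mul_const (t₂ - t₁)
  rw [← add_zero (∫ p in _, h p)]
  refine integrableOn_and_setIntegral_le_of_aecover measurableSet_coordBox
    (aecover_coordBox_shrink_θ hε) hsub (fun n => ?_) hg0 hh hr fun n => ?_
  · exact integrableOn_coordBox_of_continuousOn (hg.mono (Icc_prod_subset_regCyl ht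
      (by linarith [hε_pos n]) (by linarith [hε_pos n])))
  refine setIntegral_coordBox_le_of_sub_le_coordDiv hI hX hY hZ ht h12
    (by linarith [hε_pos n]) (by linarith [hε_pos n]) (by linarith [hε_le n]) hφ hX0 hZ0
    (fun t h φ hφ => ?_) (fun t h φ hφ => ?_) hg (hh.mono_set (hsub n))
    fun p hp => hle p (hsub n hp)
  · convert hYK t h (α + ε n) ⟨by linarith [hε_pos n], by linarith [hε_le n]⟩ φ hφ using 2
    rw [min_eq_left (by linarith [hε_le n]), add_sub_cancel_left]
  · convert hYK t h (β - ε n) ⟨by linarith [hε_le n], by linarith [hε_pos n]⟩ φ hφ using 2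
    rw [min_eq_right (by linarith [hε_le n]), sub_sub_cancel]

end Box

/-! ### Testing differential inequalities for `L` -/

/-- The density `e^{-t} sin θ` of the measure with respect to which `L` is in divergence form. -/
def expSin (t θ : ℝ) : ℝ := exp (-t) * sin θ

section Test

variable {I : Set ℝ} {f ζ : ℝ → ℝ → ℝ → ℝ} {t θ φ t₁ t₂ φ₁ K : ℝ}

lemma contDiff_expSin (n : ℕ) : ContDiff ℝ n fun p : ℝ × ℝ × ℝ => expSin p.1 p.2.1 := by
  unfold expSin; fun_prop

lemma cylContDiff_exp_neg_div_sin (n : ℕ) :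
    CylContDiff I n fun t θ _ => exp (-t) * (sin θ)⁻¹ :=
  ContDiffOn.mul (f := fun p : ℝ × ℝ × ℝ => exp (-p.1)) (by fun_prop)
    (ContDiffOn.inv (f := fun p : ℝ × ℝ × ℝ => sin p.2.1) (by fun_prop)
      fun _ hp => (sin_pos_of_mem_regCyl hp).ne')

/-- The `t`- and `θ`-components of the flux `ζ e^{-t} sin θ ∂f`, for `D = ∂_t` and `D = ∂_θ`. -/
def flux (D : (ℝ → ℝ → ℝ → ℝ) → ℝ → ℝ → ℝ → ℝ) (f ζ : ℝ → ℝ → ℝ → ℝ) (t θ φ : ℝ) : ℝ :=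
  ζ t θ φ * expSin t θ * D f t θ φ

/-- The `φ`-component `ζ e^{-t} (sin θ)⁻¹ ∂_φ f` of the flux. -/
def fluxφ (f ζ : ℝ → ℝ → ℝ → ℝ) (t θ φ : ℝ) : ℝ :=
  ζ t θ φ * (exp (-t) * (sin θ)⁻¹) * cdφ f t θ φ

lemma coordDiv_flux (hI : IsOpen I) (hf : CylContDiff I 2 f) (hζ : CylContDiff I 1 ζ)
    (hp : (t, θ, φ) ∈ regCyl I) :
    coordDiv (flux cdt f ζ) (flux cdθ f ζ) (fluxφ f ζ) t θ φ =
      expSin t θ * (ζ t θ φ * cL f t θ φ + cgradDot ζ f t θ φ) := by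
  have hft := CylContDiff.cdt (n := 1) hf hI
  have hfθ := CylContDiff.cdθ (n := 1) hf hI
  have hfφ := CylContDiff.cdφ (n := 1) hf hI
  have hsin := (sin_pos_of_mem_regCyl hp).ne'
  have ht : cdt (flux cdt f ζ) t θ φ = (cdt ζ t θ φ * expSin t θ + ζ t θ φ * -expSin t θ)
      * cdt f t θ φ + ζ t θ φ * expSin t θ * cdt (cdt f) t θ φ := by
    have hw : HasDerivAt (fun s => expSin s θ) (-expSin t θ) t := by
      simpa [expSin] using ((hasDerivAt_neg t).exp).mul_const (sin θ)
    exact (((hζ.hasDerivAt_cdt (n := 0) hI hp).mul hw).mul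
      (hft.hasDerivAt_cdt (n := 0) hI hp)).deriv
  have hθ : cdθ (flux cdθ f ζ) t θ φ = (cdθ ζ t θ φ * expSin t θ
      + ζ t θ φ * (exp (-t) * cos θ)) * cdθ f t θ φ
      + ζ t θ φ * expSin t θ * cdθ (cdθ f) t θ φ :=
    (((hζ.hasDerivAt_cdθ (n := 0) hI hp).mul ((hasDerivAt_sin θ).const_mul _)).mul
      (hfθ.hasDerivAt_cdθ (n := 0) hI hp)).deriv
  have hφ : cdφ (fluxφ f ζ) t θ φ = (cdφ ζ t θ φ * (exp (-t) * (sin θ)⁻¹)) * cdφ f t θ φ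
      + ζ t θ φ * (exp (-t) * (sin θ)⁻¹) * cdφ (cdφ f) t θ φ :=
    (((hζ.hasDerivAt_cdφ (n := 0) hI hp).mul_const _).mul
      (hfφ.hasDerivAt_cdφ (n := 0) hI hp)).deriv
  rw [coordDiv, ht, hθ, hφ, cL_eq, cgradDot_eq, expSin]
  field_simp
  ring

lemma integrableOn_and_setIntegral_le_of_sub_le_cL (hI : IsOpen I) (hf : CylContDiff I 2 f)
    (hζ : CylContDiff I 1 ζ) (hf_per : ∀ t θ φ, f t θ (φ + 2 * π) = f t θ φ)
    (hζ_per : ∀ t θ φ, ζ t θ (φ + 2 * π) = ζ t θ φ) (ht : Icc t₁ t₂ ⊆ I) (h12 : t₁ ≤ t₂)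
    (hζ₁ : ∀ θ φ, ζ t₁ θ φ = 0) (hζ₂ : ∀ θ φ, ζ t₂ θ φ = 0)
    (hK : ∀ t ∈ Icc t₁ t₂, ∀ θ ∈ Ioo 0 π, ∀ φ ∈ Icc φ₁ (φ₁ + 2 * π),
      |ζ t θ φ * cdθ f t θ φ| ≤ K)
    {g h : ℝ → ℝ → ℝ → ℝ} (hg : ContinuousOn ↿g (regCyl I))
    (hg0 : ∀ t ∈ I, ∀ θ ∈ Ioo 0 π, ∀ φ, 0 ≤ g t θ φ)
    (hh : IntegrableOn (fun p => expSin p.1 p.2.1 * h p.1 p.2.1 p.2.2)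
      (coordBox t₁ t₂ 0 π φ₁ (φ₁ + 2 * π)))
    (hle : ∀ t ∈ I, ∀ θ ∈ Ioo 0 π, ∀ φ,
      g t θ φ - h t θ φ ≤ ζ t θ φ * cL f t θ φ + cgradDot ζ f t θ φ) :
    IntegrableOn (fun p => expSin p.1 p.2.1 * g p.1 p.2.1 p.2.2)
        (coordBox t₁ t₂ 0 π φ₁ (φ₁ + 2 * π)) ∧
      ∫ p in coordBox t₁ t₂ 0 π φ₁ (φ₁ + 2 * π), expSin p.1 p.2.1 * g p.1 p.2.1 p.2.2 ≤
        ∫ p in coordBox t₁ t₂ 0 π φ₁ (φ₁ + 2 * π), expSin p.1 p.2.1 * h p.1 p.2.1 p.2.2 := by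
  have hw : CylContDiff I 1 fun t θ _ => expSin t θ := (contDiff_expSin 1).contDiffOn
  refine integrableOn_and_setIntegral_le_of_sub_le_coordDiv hI (K := exp (-t₁) * K)
    ((hζ.mul hw).mul (CylContDiff.cdt (n := 1) hf hI))
    ((hζ.mul hw).mul (CylContDiff.cdθ (n := 1) hf hI))
    ((hζ.mul (cylContDiff_exp_neg_div_sin 1)).mul (CylContDiff.cdφ (n := 1) hf hI))
    ht h12 le_rfl le_rfl pi_pos (by linarith [pi_pos]) (fun θ φ => by simp [hζ₁, hζ₂])
    (fun t θ => by simp only [hζ_per, cdφ_add_two_pi hf_per]) (fun s hs θ hθ φ hφ => ?_)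
    (hw.continuousOn.mul hg) ?_ hh ?_
  · have hsin : 0 < sin θ := sin_pos_of_mem_Ioo hθ
    have hsin_le : sin θ ≤ min (θ - 0) (π - θ) := by
      rw [sub_zero, le_min_iff]
      exact ⟨sin_le hθ.1.le, sin_pi_sub θ ▸ sin_le (sub_pos.2 hθ.2).le⟩
    have hexp : exp (-s) ≤ exp (-t₁) := exp_le_exp.2 (neg_le_neg hs.1)
    have hζf := hK s hs θ hθ φ hφ
    calc |ζ s θ φ * expSin s θ * cdθ f s θ φ|
        = exp (-s) * |ζ s θ φ * cdθ f s θ φ| * sin θ := by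
          simp only [expSin, abs_mul, abs_of_pos hsin, abs_of_pos (exp_pos _)]; ring
      _ ≤ exp (-t₁) * K * min (θ - 0) (π - θ) := by
          have hK0 := (abs_nonneg _).trans hζf
          gcongr
  · rintro ⟨s, θ, φ⟩ ⟨hs, hθ, -⟩
    exact mul_nonneg (mul_nonneg (exp_pos _).le (sin_pos_of_mem_Ioo hθ).le)
      (hg0 s (ht (Ioo_subset_Icc_self hs)) θ hθ φ)
  · rintro ⟨s, θ, φ⟩ ⟨hs, hθ, -⟩
    have hsI := ht (Ioo_subset_Icc_self hs)
    refine le_of_le_of_eq ?_ (coordDiv_flux hI hf hζ (mem_regCyl.2 ⟨hsI, hθ⟩)).symm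
    rw [← mul_sub]
    exact mul_le_mul_of_nonneg_left (hle s hsI θ hθ φ)
      (mul_nonneg (exp_pos _).le (sin_pos_of_mem_Ioo hθ).le)

end Test

/-! ### Chain and product rules for `L` -/

section ChainRule

lemma differentiableAt_deriv_of_contDiffAt {f : ℝ → ℝ} {x : ℝ} (hf : ContDiffAt ℝ 2 f x) :
    DifferentiableAt ℝ (deriv f) x :=
  ((hf.fderiv_right (m := 1) le_rfl).clm_apply contDiffAt_const).differentiableAt (by simp)

lemma deriv_deriv_mul {f g : ℝ → ℝ} {x : ℝ} (hf : ContDiffAt ℝ 2 f x) (hg : ContDiffAt ℝ 2 g x) :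
    deriv (deriv fun y => f y * g y) x =
      deriv (deriv f) x * g x + 2 * (deriv f x * deriv g x) + f x * deriv (deriv g) x := by
  have h := iteratedDeriv_fun_mul hf hg
  simp only [Finset.sum_range_succ, Finset.sum_range_zero, iteratedDeriv_succ, iteratedDeriv_zero,
    Nat.choose_zero_right, Nat.choose_one_right, Nat.choose_self, Nat.sub_zero, Nat.sub_self,
    Nat.reduceSub] at h
  rw [h]; push_cast; ring

lemma deriv_deriv_comp {h f : ℝ → ℝ} {x : ℝ} (hh : ContDiff ℝ 2 h) (hf : ContDiffAt ℝ 2 f x) :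
    deriv (deriv fun y => h (f y)) x =
      deriv (deriv h) (f x) * deriv f x ^ 2 + deriv h (f x) * deriv (deriv f) x := by
  have hf' : ∀ᶠ y in nhds x, DifferentiableAt ℝ f y :=
    (hf.eventually (by simp)).mono fun y hy => hy.differentiableAt (by simp)
  have heq : deriv (fun y => h (f y)) =ᶠ[nhds x] fun y => deriv h (f y) * deriv f y :=
    hf'.mono fun y hy =>
      ((hh.differentiable (by simp) _).hasDerivAt.comp y hy.hasDerivAt).deriv
  rw [heq.deriv_eq]
  refine (((differentiableAt_deriv_of_contDiffAt hh.contDiffAt).hasDerivAt.comp x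
    hf'.self_of_nhds.hasDerivAt).mul
    (differentiableAt_deriv_of_contDiffAt hf).hasDerivAt).deriv.trans ?_
  simp only [Function.comp_apply]; ring

lemma deriv_deriv_add {f g : ℝ → ℝ} {x : ℝ} (hf : ContDiffAt ℝ 2 f x) (hg : ContDiffAt ℝ 2 g x) :
    deriv (deriv fun y => f y + g y) x = deriv (deriv f) x + deriv (deriv g) x := by
  simpa only [iteratedDeriv_succ, iteratedDeriv_zero] using iteratedDeriv_fun_add hf hg

variable {I : Set ℝ} {F G : ℝ → ℝ → ℝ → ℝ} {t θ φ : ℝ} {n : ℕ}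

lemma CylContDiff.contDiffAt (h : CylContDiff I n F) (hI : IsOpen I) (hp : (t, θ, φ) ∈ regCyl I) :
    ContDiffAt ℝ n ↿F (t, θ, φ) :=
  ContDiffOn.contDiffAt h ((isOpen_regCyl hI).mem_nhds hp)

lemma CylContDiff.contDiffAt_t (h : CylContDiff I n F) (hI : IsOpen I)
    (hp : (t, θ, φ) ∈ regCyl I) : ContDiffAt ℝ n (fun s => F s θ φ) t :=
  (h.contDiffAt hI hp).comp (f := fun s => (s, θ, φ)) t (by fun_prop)

lemma CylContDiff.contDiffAt_θ (h : CylContDiff I n F) (hI : IsOpen I)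
    (hp : (t, θ, φ) ∈ regCyl I) : ContDiffAt ℝ n (fun s => F t s φ) θ :=
  (h.contDiffAt hI hp).comp (f := fun s => (t, s, φ)) θ (by fun_prop)

lemma CylContDiff.contDiffAt_φ (h : CylContDiff I n F) (hI : IsOpen I)
    (hp : (t, θ, φ) ∈ regCyl I) : ContDiffAt ℝ n (fun s => F t θ s) φ :=
  (h.contDiffAt hI hp).comp (f := fun s => (t, θ, s)) φ (by fun_prop)

lemma CylContDiff.add (hF : CylContDiff I n F) (hG : CylContDiff I n G) :
    CylContDiff I n fun t θ φ => F t θ φ + G t θ φ := ContDiffOn.add hF hG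

lemma CylContDiff.comp {h : ℝ → ℝ} (hh : ContDiff ℝ n h) (hF : CylContDiff I n F) :
    CylContDiff I n fun t θ φ => h (F t θ φ) := hh.comp_contDiffOn hF

lemma cdt_comp (hI : IsOpen I) (hF : CylContDiff I 1 F) {h : ℝ → ℝ} (hh : ContDiff ℝ 1 h)
    (hp : (t, θ, φ) ∈ regCyl I) :
    cdt (fun t θ φ => h (F t θ φ)) t θ φ = deriv h (F t θ φ) * cdt F t θ φ :=
  ((hh.differentiable (by simp) _).hasDerivAt.comp t (hF.hasDerivAt_cdt (n := 0) hI hp)).deriv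

lemma cdt_add (hI : IsOpen I) (hF : CylContDiff I 1 F) (hG : CylContDiff I 1 G)
    (hp : (t, θ, φ) ∈ regCyl I) :
    cdt (fun t θ φ => F t θ φ + G t θ φ) t θ φ = cdt F t θ φ + cdt G t θ φ :=
  ((hF.hasDerivAt_cdt (n := 0) hI hp).add (hG.hasDerivAt_cdt (n := 0) hI hp)).deriv

lemma cdt_mul (hI : IsOpen I) (hF : CylContDiff I 1 F) (hG : CylContDiff I 1 G)
    (hp : (t, θ, φ) ∈ regCyl I) :
    cdt (fun t θ φ => F t θ φ * G t θ φ) t θ φ =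
      cdt F t θ φ * G t θ φ + F t θ φ * cdt G t θ φ :=
  ((hF.hasDerivAt_cdt (n := 0) hI hp).mul (hG.hasDerivAt_cdt (n := 0) hI hp)).deriv

lemma cdθ_comp (hI : IsOpen I) (hF : CylContDiff I 1 F) {h : ℝ → ℝ} (hh : ContDiff ℝ 1 h)
    (hp : (t, θ, φ) ∈ regCyl I) :
    cdθ (fun t θ φ => h (F t θ φ)) t θ φ = deriv h (F t θ φ) * cdθ F t θ φ :=
  ((hh.differentiable (by simp) _).hasDerivAt.comp θ (hF.hasDerivAt_cdθ (n := 0) hI hp)).deriv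

lemma cdθ_add (hI : IsOpen I) (hF : CylContDiff I 1 F) (hG : CylContDiff I 1 G)
    (hp : (t, θ, φ) ∈ regCyl I) :
    cdθ (fun t θ φ => F t θ φ + G t θ φ) t θ φ = cdθ F t θ φ + cdθ G t θ φ :=
  ((hF.hasDerivAt_cdθ (n := 0) hI hp).add (hG.hasDerivAt_cdθ (n := 0) hI hp)).deriv

lemma cdθ_mul (hI : IsOpen I) (hF : CylContDiff I 1 F) (hG : CylContDiff I 1 G)
    (hp : (t, θ, φ) ∈ regCyl I) :
    cdθ (fun t θ φ => F t θ φ * G t θ φ) t θ φ =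
      cdθ F t θ φ * G t θ φ + F t θ φ * cdθ G t θ φ :=
  ((hF.hasDerivAt_cdθ (n := 0) hI hp).mul (hG.hasDerivAt_cdθ (n := 0) hI hp)).deriv

lemma cdφ_comp (hI : IsOpen I) (hF : CylContDiff I 1 F) {h : ℝ → ℝ} (hh : ContDiff ℝ 1 h)
    (hp : (t, θ, φ) ∈ regCyl I) :
    cdφ (fun t θ φ => h (F t θ φ)) t θ φ = deriv h (F t θ φ) * cdφ F t θ φ :=
  ((hh.differentiable (by simp) _).hasDerivAt.comp φ (hF.hasDerivAt_cdφ (n := 0) hI hp)).deriv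

lemma cdφ_add (hI : IsOpen I) (hF : CylContDiff I 1 F) (hG : CylContDiff I 1 G)
    (hp : (t, θ, φ) ∈ regCyl I) :
    cdφ (fun t θ φ => F t θ φ + G t θ φ) t θ φ = cdφ F t θ φ + cdφ G t θ φ :=
  ((hF.hasDerivAt_cdφ (n := 0) hI hp).add (hG.hasDerivAt_cdφ (n := 0) hI hp)).deriv

lemma cdφ_mul (hI : IsOpen I) (hF : CylContDiff I 1 F) (hG : CylContDiff I 1 G)
    (hp : (t, θ, φ) ∈ regCyl I) :
    cdφ (fun t θ φ => F t θ φ * G t θ φ) t θ φ =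
      cdφ F t θ φ * G t θ φ + F t θ φ * cdφ G t θ φ :=
  ((hF.hasDerivAt_cdφ (n := 0) hI hp).mul (hG.hasDerivAt_cdφ (n := 0) hI hp)).deriv

lemma cgradDot_comm (F G : ℝ → ℝ → ℝ → ℝ) (t θ φ : ℝ) :
    cgradDot F G t θ φ = cgradDot G F t θ φ := by
  simp only [cgradDot_eq]; ring

lemma cgradDot_comp (hI : IsOpen I) (H : ℝ → ℝ → ℝ → ℝ) (hF : CylContDiff I 1 F) {h : ℝ → ℝ}
    (hh : ContDiff ℝ 1 h) (hp : (t, θ, φ) ∈ regCyl I) :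
    cgradDot H (fun t θ φ => h (F t θ φ)) t θ φ = deriv h (F t θ φ) * cgradDot H F t θ φ := by
  rw [cgradDot_eq, cdt_comp hI hF hh hp, cdθ_comp hI hF hh hp, cdφ_comp hI hF hh hp, cgradDot_eq]
  ring

lemma cgradDot_add (hI : IsOpen I) (H : ℝ → ℝ → ℝ → ℝ) (hF : CylContDiff I 1 F)
    (hG : CylContDiff I 1 G) (hp : (t, θ, φ) ∈ regCyl I) :
    cgradDot H (fun t θ φ => F t θ φ + G t θ φ) t θ φ =
      cgradDot H F t θ φ + cgradDot H G t θ φ := by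
  rw [cgradDot_eq, cdt_add hI hF hG hp, cdθ_add hI hF hG hp, cdφ_add hI hF hG hp, cgradDot_eq,
    cgradDot_eq]
  ring

lemma cgradDot_mul (hI : IsOpen I) (H : ℝ → ℝ → ℝ → ℝ) (hF : CylContDiff I 1 F)
    (hG : CylContDiff I 1 G) (hp : (t, θ, φ) ∈ regCyl I) :
    cgradDot H (fun t θ φ => F t θ φ * G t θ φ) t θ φ =
      cgradDot H F t θ φ * G t θ φ + F t θ φ * cgradDot H G t θ φ := by
  rw [cgradDot_eq, cdt_mul hI hF hG hp, cdθ_mul hI hF hG hp, cdφ_mul hI hF hG hp, cgradDot_eq,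
    cgradDot_eq]
  ring

lemma cL_comp (hI : IsOpen I) (hF : CylContDiff I 2 F) {h : ℝ → ℝ} (hh : ContDiff ℝ 2 h)
    (hp : (t, θ, φ) ∈ regCyl I) :
    cL (fun t θ φ => h (F t θ φ)) t θ φ = deriv h (F t θ φ) * cL F t θ φ
      + deriv (deriv h) (F t θ φ) * cgradNormSq F t θ φ := by
  have hF' := hF.of_le one_le_two
  have hh' := hh.of_le one_le_two
  have ht := deriv_deriv_comp hh (hF.contDiffAt_t hI hp)
  have hθ := deriv_deriv_comp hh (hF.contDiffAt_θ hI hp)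
  have hφ := deriv_deriv_comp hh (hF.contDiffAt_φ hI hp)
  rw [cL_eq, cL_eq, cgradNormSq_eq, cdt_comp hI hF' hh' hp, cdθ_comp hI hF' hh' hp]
  simp only [cdt, cdθ, cdφ, pdθ, pdφ, ht, hθ, hφ]
  ring

lemma cL_add (hI : IsOpen I) (hF : CylContDiff I 2 F) (hG : CylContDiff I 2 G)
    (hp : (t, θ, φ) ∈ regCyl I) :
    cL (fun t θ φ => F t θ φ + G t θ φ) t θ φ = cL F t θ φ + cL G t θ φ := by
  have hF' := hF.of_le one_le_two
  have hG' := hG.of_le one_le_two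
  have ht := deriv_deriv_add (hF.contDiffAt_t hI hp) (hG.contDiffAt_t hI hp)
  have hθ := deriv_deriv_add (hF.contDiffAt_θ hI hp) (hG.contDiffAt_θ hI hp)
  have hφ := deriv_deriv_add (hF.contDiffAt_φ hI hp) (hG.contDiffAt_φ hI hp)
  rw [cL_eq, cL_eq, cL_eq, cdt_add hI hF' hG' hp, cdθ_add hI hF' hG' hp]
  simp only [cdt, cdθ, cdφ, pdθ, pdφ, ht, hθ, hφ]
  ring

lemma cL_mul (hI : IsOpen I) (hF : CylContDiff I 2 F) (hG : CylContDiff I 2 G)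
    (hp : (t, θ, φ) ∈ regCyl I) :
    cL (fun t θ φ => F t θ φ * G t θ φ) t θ φ =
      cL F t θ φ * G t θ φ + 2 * cgradDot F G t θ φ + F t θ φ * cL G t θ φ := by
  have hF' := hF.of_le one_le_two
  have hG' := hG.of_le one_le_two
  have ht := deriv_deriv_mul (hF.contDiffAt_t hI hp) (hG.contDiffAt_t hI hp)
  have hθ := deriv_deriv_mul (hF.contDiffAt_θ hI hp) (hG.contDiffAt_θ hI hp)
  have hφ := deriv_deriv_mul (hF.contDiffAt_φ hI hp) (hG.contDiffAt_φ hI hp)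
  rw [cL_eq, cL_eq, cL_eq, cgradDot_eq, cdt_mul hI hF' hG' hp, cdθ_mul hI hF' hG' hp]
  simp only [cdt, cdθ, cdφ, pdθ, pdφ, ht, hθ, hφ]
  ring

end ChainRule

/-! ### The comparison function -/

/-- `cosh (2 d)`, where `d` is the distance between `(Φ - l, v)` and `(c₁ - l, c₂)` in the
hyperbolic plane with metric `du² + e^{4u} dv²`. -/
def coshDist (c₁ c₂ : ℝ) (Φ l v : ℝ → ℝ → ℝ → ℝ) (t θ φ : ℝ) : ℝ :=
  cosh (2 * (Φ t θ φ - c₁)) +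
    exp (2 * Φ t θ φ + 2 * c₁ + -4 * l t θ φ) * (2 * (v t θ φ - c₂) ^ 2)

/-- The energy density `|∇Φ|² + e^{4u} |∇v|²` with `u = Φ - l`. -/
def energyDensity (Φ l v : ℝ → ℝ → ℝ → ℝ) (t θ φ : ℝ) : ℝ :=
  cgradNormSq Φ t θ φ + exp (4 * (Φ t θ φ - l t θ φ)) * cgradNormSq v t θ φ

/-- The weighted square deviation `|Φ - c₁|² + ω⁻⁴ |v - c₂|²` with `l = ln ω`. -/
def devDensity (c₁ c₂ : ℝ) (Φ l v : ℝ → ℝ → ℝ → ℝ) (t θ φ : ℝ) : ℝ :=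
  (Φ t θ φ - c₁) ^ 2 + exp (-4 * l t θ φ) * (v t θ φ - c₂) ^ 2

section Comparison

variable {I : Set ℝ} {Φ l v η : ℝ → ℝ → ℝ → ℝ} {t θ φ Λ : ℝ} (c₁ c₂ : ℝ)

lemma deriv_cosh_two_mul_sub :
    deriv (fun x => cosh (2 * (x - c₁))) = fun x => 2 * sinh (2 * (x - c₁)) :=
  funext fun x => (((((hasDerivAt_id x).sub_const c₁).const_mul 2).cosh).congr_deriv
    (by simp only [id]; ring)).deriv

lemma deriv_deriv_cosh_two_mul_sub :
    deriv (deriv fun x => cosh (2 * (x - c₁))) = fun x => 4 * cosh (2 * (x - c₁)) := by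
  rw [deriv_cosh_two_mul_sub]
  exact funext fun x => ((((((hasDerivAt_id x).sub_const c₁).const_mul 2).sinh).const_mul
    2).congr_deriv (by simp only [id]; ring)).deriv

lemma deriv_two_mul_sub_sq (x : ℝ) : deriv (fun x => 2 * (x - c₂) ^ 2) x = 4 * (x - c₂) := by
  refine ((((hasDerivAt_id x).sub_const c₂).pow 2).const_mul 2).deriv.trans ?_
  simp only [id]; push_cast; ring

lemma deriv_deriv_two_mul_sub_sq (x : ℝ) : deriv (deriv fun x => 2 * (x - c₂) ^ 2) x = 4 := by
  simp [funext (deriv_two_mul_sub_sq c₂)]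

lemma contDiff_cosh_two_mul_sub (n : ℕ) : ContDiff ℝ n fun x => cosh (2 * (x - c₁)) := by fun_prop

lemma cylContDiff_coshDist_exponent {n : ℕ} (hΦ : CylContDiff I n Φ) (hl : CylContDiff I n l) :
    CylContDiff I n fun t θ φ => 2 * Φ t θ φ + 2 * c₁ + -4 * l t θ φ :=
  (CylContDiff.comp (h := fun x => 2 * x + 2 * c₁) (by fun_prop) hΦ).add
    (CylContDiff.comp (h := fun x => -4 * x) (by fun_prop) hl)

lemma cylContDiff_coshDist {n : ℕ} (hΦ : CylContDiff I n Φ) (hl : CylContDiff I n l)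
    (hv : CylContDiff I n v) : CylContDiff I n (coshDist c₁ c₂ Φ l v) :=
  (hΦ.comp (contDiff_cosh_two_mul_sub c₁ n)).add
    (((cylContDiff_coshDist_exponent c₁ hΦ hl).comp contDiff_exp).mul
      (hv.comp (h := fun x => 2 * (x - c₂) ^ 2) (by fun_prop)))

lemma cgradDot_coshDist_exponent (hI : IsOpen I) (H : ℝ → ℝ → ℝ → ℝ) (hΦ : CylContDiff I 1 Φ)
    (hl : CylContDiff I 1 l) (hp : (t, θ, φ) ∈ regCyl I) :
    cgradDot H (fun t θ φ => 2 * Φ t θ φ + 2 * c₁ + -4 * l t θ φ) t θ φ =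
      2 * cgradDot H Φ t θ φ - 4 * cgradDot H l t θ φ := by
  have h₁ : ContDiff ℝ 1 fun x : ℝ => 2 * x + 2 * c₁ := by fun_prop
  have h₂ : ContDiff ℝ 1 fun x : ℝ => -4 * x := by fun_prop
  rw [cgradDot_add hI H (hΦ.comp h₁) (hl.comp h₂) hp, cgradDot_comp hI H hΦ h₁ hp,
    cgradDot_comp hI H hl h₂ hp]
  simp [sub_eq_add_neg]

lemma cgradNormSq_coshDist_exponent (hI : IsOpen I) (hΦ : CylContDiff I 1 Φ)
    (hl : CylContDiff I 1 l) (hp : (t, θ, φ) ∈ regCyl I) :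
    cgradNormSq (fun t θ φ => 2 * Φ t θ φ + 2 * c₁ + -4 * l t θ φ) t θ φ =
      4 * cgradNormSq Φ t θ φ - 16 * cgradDot Φ l t θ φ + 16 * cgradNormSq l t θ φ := by
  have hgrad := fun H => cgradDot_coshDist_exponent c₁ hI H hΦ hl hp
  rw [cgradNormSq, hgrad, cgradDot_comm (fun t θ φ => 2 * Φ t θ φ + 2 * c₁ + -4 * l t θ φ) Φ,
    cgradDot_comm (fun t θ φ => 2 * Φ t θ φ + 2 * c₁ + -4 * l t θ φ) l, hgrad, hgrad,
    cgradDot_comm l Φ]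
  simp only [cgradNormSq]
  ring

lemma cL_coshDist_exponent (hI : IsOpen I) (hΦ : CylContDiff I 2 Φ) (hl : CylContDiff I 2 l)
    (hp : (t, θ, φ) ∈ regCyl I) :
    cL (fun t θ φ => 2 * Φ t θ φ + 2 * c₁ + -4 * l t θ φ) t θ φ =
      2 * cL Φ t θ φ - 4 * cL l t θ φ := by
  have h₁ : ContDiff ℝ 2 fun x : ℝ => 2 * x + 2 * c₁ := by fun_prop
  have h₂ : ContDiff ℝ 2 fun x : ℝ => -4 * x := by fun_prop
  rw [cL_add hI (hΦ.comp h₁) (hl.comp h₂) hp, cL_comp hI hΦ h₁ hp, cL_comp hI hl h₂ hp]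
  simp [sub_eq_add_neg]

lemma cgradDot_coshDist (hI : IsOpen I) (hΦ : CylContDiff I 1 Φ) (hl : CylContDiff I 1 l)
    (hv : CylContDiff I 1 v) (hp : (t, θ, φ) ∈ regCyl I) (H : ℝ → ℝ → ℝ → ℝ) :
    cgradDot H (coshDist c₁ c₂ Φ l v) t θ φ =
      2 * sinh (2 * (Φ t θ φ - c₁)) * cgradDot H Φ t θ φ
        + 2 * exp (2 * Φ t θ φ + 2 * c₁ + -4 * l t θ φ) *
          ((2 * cgradDot H Φ t θ φ - 4 * cgradDot H l t θ φ) * (v t θ φ - c₂) ^ 2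
          + 2 * (v t θ φ - c₂) * cgradDot H v t θ φ) := by
  have hcosh := contDiff_cosh_two_mul_sub c₁ 1
  have hsq : ContDiff ℝ 1 fun x : ℝ => 2 * (x - c₂) ^ 2 := by fun_prop
  have hw := cylContDiff_coshDist_exponent c₁ hΦ hl
  unfold coshDist
  rw [cgradDot_add hI H (hΦ.comp hcosh) ((hw.comp contDiff_exp).mul (hv.comp hsq)) hp,
    cgradDot_comp hI H hΦ hcosh hp, cgradDot_mul hI H (hw.comp contDiff_exp) (hv.comp hsq) hp,
    cgradDot_comp hI H hw contDiff_exp hp, cgradDot_comp hI H hv hsq hp,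
    cgradDot_coshDist_exponent c₁ hI H hΦ hl hp, deriv_cosh_two_mul_sub, deriv_two_mul_sub_sq,
    Real.deriv_exp]
  ring

lemma cL_coshDist (hI : IsOpen I) (hΦ : CylContDiff I 2 Φ) (hl : CylContDiff I 2 l)
    (hv : CylContDiff I 2 v) (hp : (t, θ, φ) ∈ regCyl I) :
    cL (coshDist c₁ c₂ Φ l v) t θ φ =
      2 * sinh (2 * (Φ t θ φ - c₁)) * cL Φ t θ φ
        + 4 * cosh (2 * (Φ t θ φ - c₁)) * cgradNormSq Φ t θ φ
        + 2 * exp (2 * Φ t θ φ + 2 * c₁ + -4 * l t θ φ) *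
          ((2 * cL Φ t θ φ - 4 * cL l t θ φ + (4 * cgradNormSq Φ t θ φ
            - 16 * cgradDot Φ l t θ φ + 16 * cgradNormSq l t θ φ)) * (v t θ φ - c₂) ^ 2
          + 4 * (v t θ φ - c₂) * (2 * cgradDot Φ v t θ φ - 4 * cgradDot l v t θ φ)
          + 2 * cgradNormSq v t θ φ + 2 * (v t θ φ - c₂) * cL v t θ φ) := by
  have hcosh := contDiff_cosh_two_mul_sub c₁ 2
  have hsq : ContDiff ℝ 2 fun x : ℝ => 2 * (x - c₂) ^ 2 := by fun_prop
  have hw := cylContDiff_coshDist_exponent c₁ hΦ hl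
  have hΦ' := hΦ.of_le one_le_two
  have hl' := hl.of_le one_le_two
  unfold coshDist
  rw [cL_add hI (hΦ.comp hcosh) ((hw.comp contDiff_exp).mul (hv.comp hsq)) hp,
    cL_comp hI hΦ hcosh hp, cL_mul hI (hw.comp contDiff_exp) (hv.comp hsq) hp,
    cL_comp hI hw contDiff_exp hp, cL_comp hI hv hsq hp, cL_coshDist_exponent c₁ hI hΦ hl hp,
    cgradDot_comp hI _ (hv.of_le one_le_two) (hsq.of_le one_le_two) hp, cgradDot_comm _ v,
    cgradDot_comp hI v (hw.of_le one_le_two) (contDiff_exp.of_le one_le_two) hp,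
    cgradDot_coshDist_exponent c₁ hI v hΦ' hl' hp, cgradNormSq_coshDist_exponent c₁ hI hΦ' hl' hp,
    deriv_deriv_cosh_two_mul_sub, deriv_cosh_two_mul_sub, deriv_deriv_two_mul_sub_sq,
    deriv_two_mul_sub_sq, Real.deriv_exp, Real.deriv_exp, cgradDot_comm v Φ, cgradDot_comm v l]
  ring

lemma mul_sq_sub_le_of_component {g : ℝ} (hg : 0 < g) (A Y Z W η N : ℝ) :
    g * η ^ 2 * (A ^ 2 + Y ^ 2)
      - N ^ 2 * ((g - g⁻¹) ^ 2 * g⁻¹ + (2 * g⁻¹ + 4 * g⁻¹ ^ 3) * Z ^ 2) ≤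
    η ^ 2 * (2 * g * (A ^ 2 + Y ^ 2) + 2 * g⁻¹ * ((A - 2 * Z * Y) ^ 2 + (Y + 2 * W) ^ 2))
      + 2 * η * N * ((g - g⁻¹) * A + 4 * g⁻¹ * (W * Z + Z * Y)) := by
  have hk : g * g⁻¹ = 1 := mul_inv_cancel₀ hg.ne'
  have hk0 : 0 < g⁻¹ := inv_pos.2 hg
  generalize g⁻¹ = k at hk hk0 ⊢
  have hA : k * (g * η * A + N * (g - k)) ^ 2
      = g * η ^ 2 * A ^ 2 + 2 * η * A * N * (g - k) + N ^ 2 * (g - k) ^ 2 * k := by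
    linear_combination (η ^ 2 * A ^ 2 * g + 2 * η * A * N * (g - k)) * hk
  have hY : k * (g * η * Y + 2 * k * N * Z) ^ 2
      = g * η ^ 2 * Y ^ 2 + 4 * k * η * Y * N * Z + 4 * k ^ 3 * N ^ 2 * Z ^ 2 := by
    linear_combination (η ^ 2 * Y ^ 2 * g + 4 * k * η * Y * N * Z) * hk
  have hsum : 0 ≤ k * (g * η * A + N * (g - k)) ^ 2 + k * (g * η * Y + 2 * k * N * Z) ^ 2
      + 2 * k * (η * (Y + 2 * W) + N * Z) ^ 2 + 2 * k * η ^ 2 * (A - 2 * Z * Y) ^ 2 := by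
    positivity
  rw [hA, hY] at hsum
  linarith

lemma cgradDot_sq_left (hI : IsOpen I) (hη : CylContDiff I 1 η) (hp : (t, θ, φ) ∈ regCyl I)
    (F : ℝ → ℝ → ℝ → ℝ) :
    cgradDot (fun t θ φ => η t θ φ ^ 2) F t θ φ = 2 * η t θ φ * cgradDot η F t θ φ := by
  rw [cgradDot_comm, cgradDot_comp hI F hη (h := fun x => x ^ 2) (by fun_prop) hp, cgradDot_comm F]
  simp

lemma cgradDot_sub_left (hI : IsOpen I) (hΦ : CylContDiff I 1 Φ) (hl : CylContDiff I 1 l)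
    (hp : (t, θ, φ) ∈ regCyl I) (F : ℝ → ℝ → ℝ → ℝ) :
    cgradDot (fun t θ φ => Φ t θ φ - l t θ φ) F t θ φ =
      cgradDot Φ F t θ φ - cgradDot l F t θ φ := by
  simp only [sub_eq_add_neg]
  rw [cgradDot_comm, cgradDot_add hI F hΦ (hl.comp contDiff_neg) hp,
    cgradDot_comp hI F hl contDiff_neg hp, cgradDot_comm F, cgradDot_comm F]
  simp

lemma sub_le_sq_mul_cL_coshDist (hI : IsOpen I) (hΦ : CylContDiff I 2 Φ) (hl : CylContDiff I 2 l)
    (hv : CylContDiff I 2 v) (hη : CylContDiff I 1 η) (hp : (t, θ, φ) ∈ regCyl I)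
    (eqΦ : cL Φ t θ φ = 2 * exp (4 * (Φ t θ φ - l t θ φ)) * cgradNormSq v t θ φ)
    (eql : cL l t θ φ = 0)
    (eqv : cL v t θ φ = -4 * cgradDot (fun t θ φ => Φ t θ φ - l t θ φ) v t θ φ)
    {g : ℝ} (hg : g = exp (2 * (Φ t θ φ - c₁))) :
    g * η t θ φ ^ 2 * energyDensity Φ l v t θ φ
      - cgradNormSq η t θ φ * ((g - g⁻¹) ^ 2 * g⁻¹ + (2 * g⁻¹ + 4 * g⁻¹ ^ 3) *
          (exp (2 * (Φ t θ φ - l t θ φ)) * (v t θ φ - c₂)) ^ 2) ≤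
    η t θ φ ^ 2 * cL (coshDist c₁ c₂ Φ l v) t θ φ
      + cgradDot (fun t θ φ => η t θ φ ^ 2) (coshDist c₁ c₂ Φ l v) t θ φ := by
  have hg0 : 0 < g := hg ▸ exp_pos _
  have hginv : g⁻¹ = exp (-(2 * (Φ t θ φ - c₁))) := by rw [hg, exp_neg]
  have hX2 : exp (4 * (Φ t θ φ - l t θ φ)) = exp (2 * (Φ t θ φ - l t θ φ)) ^ 2 := by
    rw [← exp_nat_mul]; congr 1; push_cast; ring
  have hψ : exp (2 * Φ t θ φ + 2 * c₁ + -4 * l t θ φ)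
      = exp (2 * (Φ t θ φ - l t θ φ)) ^ 2 * g⁻¹ := by
    rw [← hX2, hginv, ← exp_add]; congr 1; ring
  have hcosh : cosh (2 * (Φ t θ φ - c₁)) = (g + g⁻¹) / 2 := by rw [cosh_eq, hginv, hg]
  have hsinh : sinh (2 * (Φ t θ φ - c₁)) = (g - g⁻¹) / 2 := by rw [sinh_eq, hginv, hg]
  have hΦ' := hΦ.of_le one_le_two
  have hl' := hl.of_le one_le_two
  have hv' := hv.of_le one_le_two
  rw [cgradDot_sub_left hI hΦ' hl' hp] at eqv
  rw [energyDensity]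
  rw [hX2] at eqΦ ⊢
  rw [cgradDot_sq_left hI hη hp, cgradDot_coshDist c₁ c₂ hI hΦ' hl' hv' hp,
    cL_coshDist c₁ c₂ hI hΦ hl hv hp, eqv, eqΦ, eql, hψ, hcosh, hsinh]
  generalize exp (2 * (Φ t θ φ - l t θ φ)) = X
  simp only [cgradNormSq, cgradDot_eq]
  rw [← inv_pow]
  generalize (sin θ)⁻¹ = i
  have hcomp := fun (D : (ℝ → ℝ → ℝ → ℝ) → ℝ → ℝ → ℝ → ℝ) (i : ℝ) =>
    mul_sq_sub_le_of_component hg0 (i * D Φ t θ φ) (X * (i * D v t θ φ))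
    (X * (v t θ φ - c₂)) (X * (v t θ φ - c₂) * (i * D Φ t θ φ - 2 * (i * D l t θ φ)))
    (η t θ φ) (i * D η t θ φ)
  have := add_le_add (hcomp cdt 1) (add_le_add (hcomp cdθ 1) (hcomp cdφ i))
  linarith

lemma devDensity_nonneg (c₁ c₂ : ℝ) (Φ l v : ℝ → ℝ → ℝ → ℝ) (t θ φ : ℝ) :
    0 ≤ devDensity c₁ c₂ Φ l v t θ φ := by
  unfold devDensity
  positivity

lemma energyDensity_nonneg (Φ l v : ℝ → ℝ → ℝ → ℝ) (t θ φ : ℝ) :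
    0 ≤ energyDensity Φ l v t θ φ :=
  add_nonneg (cgradNormSq_nonneg ..) (mul_nonneg (exp_pos _).le (cgradNormSq_nonneg ..))

lemma abs_sinh_le_abs_mul_exp_abs (x : ℝ) : |sinh x| ≤ |x| * exp |x| := by
  rw [abs_sinh, sinh_eq]
  have h : 1 - 2 * |x| ≤ exp (-2 * |x|) := by linarith [add_one_le_exp (-2 * |x|)]
  have hexp : exp (-|x|) = exp |x| * exp (-2 * |x|) := by rw [← exp_add]; congr 1; ring
  rw [hexp]
  nlinarith [exp_pos |x|]

lemma exp_two_mul_sub_inv_sq_le {x : ℝ} (hx : |x| ≤ 2 * Λ) :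
    (exp (2 * x) - (exp (2 * x))⁻¹) ^ 2 ≤ 16 * exp (8 * Λ) * x ^ 2 := by
  have hsinh : exp (2 * x) - (exp (2 * x))⁻¹ = 2 * sinh (2 * x) := by
    rw [sinh_eq, exp_neg]; ring
  have h := abs_sinh_le_abs_mul_exp_abs (2 * x)
  rw [abs_mul, abs_two] at h
  calc (exp (2 * x) - (exp (2 * x))⁻¹) ^ 2 = 4 * |sinh (2 * x)| ^ 2 := by
        rw [hsinh, sq_abs]; ring
    _ ≤ 4 * (2 * |x| * exp (4 * Λ)) ^ 2 := by
        have : exp (2 * |x|) ≤ exp (4 * Λ) := exp_le_exp.2 (by linarith)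
        gcongr
        exact h.trans (by gcongr)
    _ = 16 * exp (8 * Λ) * x ^ 2 := by
        rw [mul_pow, mul_pow, sq_abs, ← exp_nat_mul]; push_cast; ring_nf

lemma coshDist_error_le (hΛ : 0 ≤ Λ) (hb : |Φ t θ φ| ≤ Λ) (hc : |c₁| ≤ Λ)
    {g : ℝ} (hg : g = exp (2 * (Φ t θ φ - c₁))) :
    (g - g⁻¹) ^ 2 * g⁻¹ + (2 * g⁻¹ + 4 * g⁻¹ ^ 3) *
        (exp (2 * (Φ t θ φ - l t θ φ)) * (v t θ φ - c₂)) ^ 2 ≤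
      16 * exp (16 * Λ) * devDensity c₁ c₂ Φ l v t θ φ := by
  have hx : |Φ t θ φ - c₁| ≤ 2 * Λ := (abs_sub _ _).trans (by linarith)
  have hg0 : 0 < g := hg ▸ exp_pos _
  have hginv : g⁻¹ ≤ exp (4 * Λ) := by
    rw [hg, ← exp_neg]; exact exp_le_exp.2 (by linarith [(abs_le.1 hx).1])
  have hpow (n m : ℕ) (hnm : n * 4 ≤ m) : exp (4 * Λ) ^ n ≤ exp (m * Λ) := by
    rw [← exp_nat_mul, exp_le_exp, ← mul_assoc]
    exact mul_le_mul_of_nonneg_right (by exact_mod_cast hnm) hΛ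
  have hweight : (exp (2 * (Φ t θ φ - l t θ φ)) * (v t θ φ - c₂)) ^ 2
      ≤ exp (4 * Λ) * (exp (-4 * l t θ φ) * (v t θ φ - c₂) ^ 2) := by
    rw [mul_pow, ← exp_nat_mul, ← mul_assoc (exp (4 * Λ)), ← exp_add]
    gcongr
    push_cast
    linarith [(abs_le.1 hb).2]
  rw [devDensity, mul_add]
  refine add_le_add ?_ ?_
  · calc (g - g⁻¹) ^ 2 * g⁻¹ ≤ 16 * exp (8 * Λ) * (Φ t θ φ - c₁) ^ 2 * exp (4 * Λ) := by
          gcongr; exact hg ▸ exp_two_mul_sub_inv_sq_le hx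
      _ = 16 * exp (12 * Λ) * (Φ t θ φ - c₁) ^ 2 := by
          rw [mul_right_comm, mul_assoc 16, ← exp_add]; ring_nf
      _ ≤ 16 * exp (16 * Λ) * (Φ t θ φ - c₁) ^ 2 := by gcongr; norm_num
  · set R := exp (-4 * l t θ φ) * (v t θ φ - c₂) ^ 2
    calc _ ≤ (2 * exp (4 * Λ) + 4 * exp (4 * Λ) ^ 3) * (exp (4 * Λ) * R) := by gcongr
      _ = (2 * exp (4 * Λ) ^ 2 + 4 * exp (4 * Λ) ^ 4) * R := by ring
      _ ≤ (2 * exp ((16 : ℕ) * Λ) + 4 * exp ((16 : ℕ) * Λ)) * R := by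
          have h2 := hpow 2 16 (by norm_num)
          have h4 := hpow 4 16 (by norm_num)
          gcongr
      _ ≤ 16 * exp (16 * Λ) * R := by
          push_cast
          have : 0 ≤ exp (16 * Λ) := (exp_pos _).le
          gcongr
          linarith

lemma energyDensity_sub_le_sq_mul_cL_coshDist (hI : IsOpen I) (hΦ : CylContDiff I 2 Φ)
    (hl : CylContDiff I 2 l) (hv : CylContDiff I 2 v) (hη : CylContDiff I 1 η)
    (hp : (t, θ, φ) ∈ regCyl I) (hΛ : 0 ≤ Λ) (hb : |Φ t θ φ| ≤ Λ) (hc : |c₁| ≤ Λ)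
    (eqΦ : cL Φ t θ φ = 2 * exp (4 * (Φ t θ φ - l t θ φ)) * cgradNormSq v t θ φ)
    (eql : cL l t θ φ = 0)
    (eqv : cL v t θ φ = -4 * cgradDot (fun t θ φ => Φ t θ φ - l t θ φ) v t θ φ) :
    exp (-4 * Λ) * η t θ φ ^ 2 * energyDensity Φ l v t θ φ
      - 16 * exp (16 * Λ) * cgradNormSq η t θ φ * devDensity c₁ c₂ Φ l v t θ φ ≤
    η t θ φ ^ 2 * cL (coshDist c₁ c₂ Φ l v) t θ φ
      + cgradDot (fun t θ φ => η t θ φ ^ 2) (coshDist c₁ c₂ Φ l v) t θ φ := by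
  refine le_trans ?_ (sub_le_sq_mul_cL_coshDist c₁ c₂ hI hΦ hl hv hη hp eqΦ eql eqv rfl)
  have hx : |Φ t θ φ - c₁| ≤ 2 * Λ := (abs_sub _ _).trans (by linarith)
  have hlow : exp (-4 * Λ) ≤ exp (2 * (Φ t θ φ - c₁)) :=
    exp_le_exp.2 (by linarith [(abs_le.1 hx).1])
  have herr := coshDist_error_le (l := l) (v := v) c₁ c₂ hΛ hb hc rfl
  have hη0 := cgradNormSq_nonneg η t θ φ
  have he0 := energyDensity_nonneg Φ l v t θ φ
  rw [mul_comm (16 * exp (16 * Λ)) (cgradNormSq η t θ φ), mul_assoc (cgradNormSq η t θ φ)]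
  gcongr

end Comparison

section ExpPotential

variable {I : Set ℝ} {Φ l v η : ℝ → ℝ → ℝ → ℝ} {t θ φ : ℝ}

lemma neg_cgradNormSq_le_sq_mul_add (F G : ℝ → ℝ → ℝ → ℝ) (a : ℝ) :
    -cgradNormSq G t θ φ ≤ a ^ 2 * cgradNormSq F t θ φ + 2 * a * cgradDot G F t θ φ := by
  rw [cgradNormSq_eq, cgradNormSq_eq, cgradDot_eq]
  have hsum : 0 ≤ (a * cdt F t θ φ + cdt G t θ φ) ^ 2 + (a * cdθ F t θ φ + cdθ G t θ φ) ^ 2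
      + (sin θ ^ 2)⁻¹ * (a * cdφ F t θ φ + cdφ G t θ φ) ^ 2 := by positivity
  linarith

lemma sub_le_sq_mul_cL_exp (hI : IsOpen I) (hΦ : CylContDiff I 2 Φ) (hη : CylContDiff I 1 η)
    (hp : (t, θ, φ) ∈ regCyl I)
    (eqΦ : cL Φ t θ φ = 2 * exp (4 * (Φ t θ φ - l t θ φ)) * cgradNormSq v t θ φ) :
    exp (Φ t θ φ) *
        (2 * η t θ φ ^ 2 * (exp (4 * (Φ t θ φ - l t θ φ)) * cgradNormSq v t θ φ))
      - exp (Φ t θ φ) * cgradNormSq η t θ φ ≤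
    η t θ φ ^ 2 * cL (fun t θ φ => exp (Φ t θ φ)) t θ φ
      + cgradDot (fun t θ φ => η t θ φ ^ 2) (fun t θ φ => exp (Φ t θ φ)) t θ φ := by
  rw [cgradDot_sq_left hI hη hp, cgradDot_comp hI η (hΦ.of_le one_le_two) contDiff_exp hp,
    cL_comp hI hΦ contDiff_exp hp, eqΦ]
  simp only [Real.deriv_exp]
  have hsq := mul_le_mul_of_nonneg_left
    (neg_cgradNormSq_le_sq_mul_add (t := t) (θ := θ) (φ := φ) Φ η (η t θ φ))
    (exp_pos (Φ t θ φ)).le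
  linarith

end ExpPotential

/-! ### Vanishing at the poles -/

section Poles

open scoped Topology

variable {F : ℝ → ℝ → ℝ → ℝ} {t₁ t₂ t θ φ a c : ℝ}

lemma not_integrableAtFilter_inv_nhdsGT_zero :
    ¬ IntegrableAtFilter (fun x : ℝ => x⁻¹) (𝓝[>] 0) := by
  rintro ⟨s, hs, hint⟩
  obtain ⟨h, hh, hsub⟩ := mem_nhdsGT_iff_exists_Ioo_subset.1 hs
  have hrpow : IntegrableOn (fun x : ℝ => x ^ (-1 : ℝ)) (Ioo 0 h) := by
    simpa only [rpow_neg_one] using hint.mono_set hsub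
  exact lt_irrefl _ ((intervalIntegral.integrableOn_Ioo_rpow_iff hh).1 hrpow)

lemma not_integrableOn_sq_div_sin_cube_of_isBigO {f : ℝ → ℝ} (hf : (fun x => x) =O[𝓝[>] 0] f) :
    ¬ IntegrableOn (fun x => f x ^ 2 * (sin x ^ 3)⁻¹) (Ioo 0 π) := by
  intro hint
  have hsin : (fun x : ℝ => (x ^ 3)⁻¹) =O[𝓝[>] 0] fun x => (sin x ^ 3)⁻¹ := by
    refine Asymptotics.IsBigO.of_bound 1 ?_
    filter_upwards [Ioo_mem_nhdsGT pi_pos] with x hx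
    have hs : 0 < sin x := sin_pos_of_mem_Ioo hx
    have hx0 : 0 < x := hx.1
    rw [one_mul, norm_of_nonneg (by positivity), norm_of_nonneg (by positivity)]
    gcongr
    exact sin_le hx0.le
  have hinv : (fun x : ℝ => x⁻¹) =O[𝓝[>] 0] fun x => f x ^ 2 * (sin x ^ 3)⁻¹ :=
    ((hf.pow 2).mul hsin).congr' (eventually_nhdsWithin_of_forall fun x hx => by
      have : x ≠ 0 := hx.ne'
      field_simp) .rfl
  refine not_integrableAtFilter_inv_nhdsGT_zero (hinv.integrableAtFilter ?_
    ⟨_, Ioo_mem_nhdsGT pi_pos, hint⟩)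
  exact measurable_inv.stronglyMeasurable.stronglyMeasurableAtFilter

lemma eq_zero_of_integrableOn_sq_div_sin_cube {f : ℝ → ℝ} {f' : ℝ}
    (hf : HasDerivWithinAt f f' (Ioi 0) 0)
    (hint : IntegrableOn (fun x => f x ^ 2 * (sin x ^ 3)⁻¹) (Ioo 0 π)) : f 0 = 0 ∧ f' = 0 := by
  have hf0 : f 0 = 0 := by
    by_contra h0
    have hconst : (fun _ => f 0) =O[𝓝[>] 0] f :=
      ((Asymptotics.isEquivalent_const_iff_tendsto h0).2 hf.continuousWithinAt).isTheta.symm.isBigO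
    have hid : (fun x : ℝ => x) =O[𝓝[>] 0] fun _ => f 0 :=
      (Asymptotics.isLittleO_id_const h0).isBigO.mono nhdsWithin_le_nhds
    exact not_integrableOn_sq_div_sin_cube_of_isBigO (hid.trans hconst) hint
  refine ⟨hf0, ?_⟩
  by_contra hne
  refine not_integrableOn_sq_div_sin_cube_of_isBigO ?_ hint
  have hsub := (hf.isTheta_sub hne).symm.isBigO.comp_tendsto
    (tendsto_id.prodMk tendsto_const_pure)
  simpa only [Function.comp_def, id, hf0, sub_zero] using hsub

lemma ae_ae_integrableOn_of_integrableOn_prod {g : ℝ × ℝ × ℝ → ℝ} {A B C : Set ℝ}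
    (hg : IntegrableOn g (A ×ˢ (B ×ˢ C))) :
    ∀ᵐ t ∂volume.restrict A, ∀ᵐ φ ∂volume.restrict C, IntegrableOn (fun θ => g (t, θ, φ)) B := by
  rw [IntegrableOn, Measure.volume_eq_prod, ← Measure.prod_restrict] at hg
  filter_upwards [hg.prod_right_ae] with t ht
  rw [Measure.volume_eq_prod, ← Measure.prod_restrict] at ht
  exact ht.prod_left_ae

lemma eq_zero_of_ae_ae_eq_zero {g : ℝ → ℝ → ℝ} {α β : ℝ} (h12 : t₁ < t₂) (hαβ : α < β)
    (hg : ContinuousOn ↿g (Icc t₁ t₂ ×ˢ Icc α β))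
    (h0 : ∀ᵐ t ∂volume.restrict (Icc t₁ t₂), ∀ᵐ φ ∂volume.restrict (Icc α β), g t φ = 0)
    (ht : t ∈ Icc t₁ t₂) (hφ : φ ∈ Icc α β) : g t φ = 0 := by
  refine Measure.eqOn_Icc_of_ae_eq volume (g := fun _ => 0) h12.ne ?_
    (hg.comp (f := fun s => (s, φ)) (by fun_prop) fun s hs => ⟨hs, hφ⟩) continuousOn_const ht
  filter_upwards [h0, ae_restrict_mem measurableSet_Icc] with s hs hmem
  exact Measure.eqOn_Icc_of_ae_eq volume (g := fun _ => 0) hαβ.ne hs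
    (hg.comp (f := fun x => (s, x)) (by fun_prop) fun x hx => ⟨hmem, hx⟩) continuousOn_const hφ

/-- The coordinate domain of `[t₁, t₂] × S²`, poles included. -/
def closedCyl (t₁ t₂ : ℝ) : Set (ℝ × ℝ × ℝ) := Icc t₁ t₂ ×ˢ (Icc 0 π ×ˢ univ)

/-- `F` is of class `C^n` in the coordinates `(t, θ, φ)` up to the poles. -/
def ClosedCylContDiff (t₁ t₂ : ℝ) (n : ℕ) (F : ℝ → ℝ → ℝ → ℝ) : Prop :=
  ContDiffOn ℝ n ↿F (closedCyl t₁ t₂)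

/-- The `θ`-derivative on `[0, π]`, one-sided at the poles. -/
def cdθIcc (F : ℝ → ℝ → ℝ → ℝ) (t θ φ : ℝ) : ℝ := derivWithin (fun x => F t x φ) (Icc 0 π) θ

lemma ClosedCylContDiff.hasDerivWithinAt {n : ℕ} (hF : ClosedCylContDiff t₁ t₂ (n + 1) F)
    (ht : t ∈ Icc t₁ t₂) (hθ : θ ∈ Icc 0 π) :
    HasDerivWithinAt (fun x => F t x φ) (cdθIcc F t θ φ) (Icc 0 π) θ := by
  have hmaps : MapsTo (fun x : ℝ => (t, x, φ)) (Icc 0 π) (closedCyl t₁ t₂) :=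
    fun x hx => ⟨ht, hx, mem_univ _⟩
  exact ((hF.differentiableOn (by simp) _ (hmaps hθ)).comp θ
    (by fun_prop) hmaps).hasDerivWithinAt

lemma ClosedCylContDiff.deriv_theta {n : ℕ} (hF : ClosedCylContDiff t₁ t₂ (n + 1) F)
    (h12 : t₁ < t₂) :
    ClosedCylContDiff t₁ t₂ n (cdθIcc F) := by
  have hU : UniqueDiffOn ℝ (closedCyl t₁ t₂) :=
    (uniqueDiffOn_Icc h12).prod ((uniqueDiffOn_Icc pi_pos).prod uniqueDiffOn_univ)
  have hfd : ContDiffOn ℝ n (fderivWithin ℝ ↿F (closedCyl t₁ t₂)) (closedCyl t₁ t₂) :=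
    ContDiffOn.fderivWithin hF hU (by norm_cast)
  refine (hfd.clm_apply (contDiffOn_const (c := ((0 : ℝ), (1 : ℝ), (0 : ℝ))))).congr ?_
  rintro ⟨t, θ, φ⟩ ⟨ht, hθ, -⟩
  have hmaps : MapsTo (fun x : ℝ => (t, x, φ)) (Icc 0 π) (closedCyl t₁ t₂) :=
    fun x hx => ⟨ht, hx, mem_univ _⟩
  have hline : HasDerivWithinAt (fun x : ℝ => (t, x, φ)) (0, 1, 0) (Icc 0 π) θ :=
    ((hasDerivAt_const θ t).prodMk
      ((hasDerivAt_id θ).prodMk (hasDerivAt_const θ φ))).hasDerivWithinAt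
  exact ((hF.differentiableOn (by simp) _ (hmaps hθ)).hasFDerivWithinAt.comp_hasDerivWithinAt θ
    hline hmaps).derivWithin (uniqueDiffOn_Icc pi_pos θ hθ)

lemma cdθIcc_eq_cdθ (hθ : θ ∈ Ioo 0 π) : cdθIcc F t θ φ = cdθ F t θ φ :=
  derivWithin_of_mem_nhds (Icc_mem_nhds hθ.1 hθ.2)

lemma ClosedCylContDiff.continuousOn_theta {n : ℕ} (hF : ClosedCylContDiff t₁ t₂ n F)
    (hθ : θ ∈ Icc 0 π) (s : Set ℝ) :
    ContinuousOn ↿(fun t φ => F t θ φ) (Icc t₁ t₂ ×ˢ s) :=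
  hF.continuousOn.comp (f := fun q : ℝ × ℝ => (q.1, θ, q.2)) (by fun_prop)
    fun _ hq => ⟨hq.1, hθ, mem_univ _⟩

lemma cdθIcc_north_eq_zero (hF : ClosedCylContDiff t₁ t₂ 3 F) (h12 : t₁ < t₂)
    (hint : IntegrableOn (fun p => cdθ F p.1 p.2.1 p.2.2 ^ 2 * (sin p.2.1 ^ 3)⁻¹)
      (Icc t₁ t₂ ×ˢ (Ioo 0 π ×ˢ Ioo 0 (2 * π))))
    (ht : t ∈ Icc t₁ t₂) (hφ : φ ∈ Icc 0 (2 * π)) :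
    cdθIcc F t 0 φ = 0 ∧ cdθIcc (cdθIcc F) t 0 φ = 0 := by
  have hF₁ : ClosedCylContDiff t₁ t₂ 2 (cdθIcc F) := hF.deriv_theta h12
  have hF₂ : ClosedCylContDiff t₁ t₂ 1 (cdθIcc (cdθIcc F)) := hF₁.deriv_theta h12
  have h0 : (0 : ℝ) ∈ Icc 0 π := left_mem_Icc.2 pi_pos.le
  have hae : ∀ᵐ t ∂volume.restrict (Icc t₁ t₂), ∀ᵐ φ ∂volume.restrict (Icc 0 (2 * π)),
      cdθIcc F t 0 φ = 0 ∧ cdθIcc (cdθIcc F) t 0 φ = 0 := by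
    filter_upwards [ae_ae_integrableOn_of_integrableOn_prod hint,
      ae_restrict_mem measurableSet_Icc] with t hs ht
    rw [restrict_Ioo_eq_restrict_Icc] at hs
    filter_upwards [hs] with φ hs
    have hd : HasDerivWithinAt (fun x => cdθIcc F t x φ) _ (Ioi 0) 0 :=
      (hF₁.hasDerivWithinAt ht h0).mono_of_mem_nhdsWithin (Icc_mem_nhdsGT pi_pos)
    have hs' : IntegrableOn (fun x => cdθIcc F t x φ ^ 2 * (sin x ^ 3)⁻¹) (Ioo 0 π) :=
      hs.congr_fun (fun x hx => by rw [cdθIcc_eq_cdθ hx]) measurableSet_Ioo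
    exact eq_zero_of_integrableOn_sq_div_sin_cube hd hs'
  exact ⟨eq_zero_of_ae_ae_eq_zero (g := fun t φ => cdθIcc F t 0 φ) h12 two_pi_pos
      (hF₁.continuousOn_theta h0 _) (hae.mono fun t h => h.mono fun φ h => h.1) ht hφ,
    eq_zero_of_ae_ae_eq_zero (g := fun t φ => cdθIcc (cdθIcc F) t 0 φ) h12 two_pi_pos
      (hF₂.continuousOn_theta h0 _) (hae.mono fun t h => h.mono fun φ h => h.2) ht hφ⟩

lemma abs_le_mul_pow_succ_of_deriv {f f' : ℝ → ℝ} {C b : ℝ} {n : ℕ} (hC : 0 ≤ C)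
    (hf : ∀ x ∈ Icc 0 b, HasDerivWithinAt f (f' x) (Icc 0 b) x) (h0 : f 0 = 0)
    (hbd : ∀ x ∈ Icc 0 b, |f' x| ≤ C * x ^ n) {x : ℝ} (hx : x ∈ Icc 0 b) :
    |f x| ≤ C * x ^ (n + 1) := by
  have hsub : Icc 0 x ⊆ Icc 0 b := Icc_subset_Icc_right hx.2
  have hmv := (convex_Icc 0 x).norm_image_sub_le_of_norm_hasDerivWithin_le (C := C * x ^ n)
    (fun y hy => (hf y (hsub hy)).mono hsub)
    (fun y hy => (hbd y (hsub hy)).trans (by gcongr; exacts [hy.1, hy.2]))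
    (left_mem_Icc.2 hx.1) (right_mem_Icc.2 hx.1)
  rwa [h0, sub_zero, sub_zero, norm_eq_abs, norm_of_nonneg hx.1, mul_assoc, ← pow_succ] at hmv

lemma exists_abs_sub_le_mul_pow_north (h12 : t₁ < t₂) (hF : ClosedCylContDiff t₁ t₂ 3 F)
    (hper : ∀ t θ φ, F t θ (φ + 2 * π) = F t θ φ)
    (hint : IntegrableOn (fun p => cdθ F p.1 p.2.1 p.2.2 ^ 2 * (sin p.2.1 ^ 3)⁻¹)
      (Icc t₁ t₂ ×ˢ (Ioo 0 π ×ˢ Ioo 0 (2 * π))))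
    (ha : ∀ t ∈ Icc t₁ t₂, ∀ φ, F t 0 φ = a) :
    ∃ M, 0 ≤ M ∧ ∀ t ∈ Icc t₁ t₂, ∀ θ ∈ Ioo 0 π, ∀ φ,
      |F t θ φ - a| ≤ M * θ ^ 3 ∧ |cdθ F t θ φ| ≤ M * θ ^ 2 := by
  have hF₁ : ClosedCylContDiff t₁ t₂ 2 (cdθIcc F) := hF.deriv_theta h12
  have hF₂ : ClosedCylContDiff t₁ t₂ 1 (cdθIcc (cdθIcc F)) := hF₁.deriv_theta h12
  have hF₃ : ClosedCylContDiff t₁ t₂ 0 (cdθIcc (cdθIcc (cdθIcc F))) := hF₂.deriv_theta h12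
  obtain ⟨M, hM⟩ := (isCompact_Icc.prod (isCompact_Icc.prod isCompact_Icc)
      : IsCompact (Icc t₁ t₂ ×ˢ (Icc 0 π ×ˢ Icc 0 (2 * π)))).exists_bound_of_continuousOn
    (hF₃.continuousOn.mono (prod_mono_right (prod_mono_right (subset_univ _))))
  refine ⟨|M|, abs_nonneg M, fun t ht θ hθ φ => ?_⟩
  obtain ⟨ψ, hψ, hφψ⟩ := Function.Periodic.exists_mem_Ico₀
    (f := fun φ => (F t θ φ, cdθ F t θ φ)) (c := 2 * π)
    (fun φ => by simp only [cdθ, pdθ, hper]) two_pi_pos φ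
  obtain ⟨hFψ, hcdψ⟩ := Prod.mk.inj hφψ
  have hψ' : ψ ∈ Icc 0 (2 * π) := Ico_subset_Icc_self hψ
  have hθ' : θ ∈ Icc 0 π := Ioo_subset_Icc_self hθ
  obtain ⟨hz₁, hz₂⟩ := cdθIcc_north_eq_zero hF h12 hint ht hψ'
  have hM₂ {x : ℝ} (hx : x ∈ Icc 0 π) : |cdθIcc (cdθIcc F) t x ψ| ≤ |M| * x ^ 1 :=
    abs_le_mul_pow_succ_of_deriv (abs_nonneg M) (fun y hy => hF₂.hasDerivWithinAt ht hy) hz₂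
      (fun y hy => by
        rw [pow_zero, mul_one]
        exact (hM (t, y, ψ) ⟨ht, hy, hψ'⟩).trans (le_abs_self M)) hx
  have hM₁ {x : ℝ} (hx : x ∈ Icc 0 π) : |cdθIcc F t x ψ| ≤ |M| * x ^ 2 :=
    abs_le_mul_pow_succ_of_deriv (abs_nonneg M) (fun y hy => hF₁.hasDerivWithinAt ht hy) hz₁
      (fun y hy => hM₂ hy) hx
  rw [hFψ, hcdψ, ← cdθIcc_eq_cdθ hθ]
  refine ⟨?_, hM₁ hθ'⟩
  exact abs_le_mul_pow_succ_of_deriv (f := fun x => F t x ψ - a) (abs_nonneg M)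
    (fun y hy => (hF.hasDerivWithinAt ht hy).sub_const a) (by rw [ha t ht, sub_self])
    (fun y hy => hM₁ hy) hθ'

lemma exists_abs_sub_le_mul_sin_pow_north {θ₀ δ : ℝ} (h12 : t₁ < t₂)
    (hF : ClosedCylContDiff t₁ t₂ 3 F) (hper : ∀ t θ φ, F t θ (φ + 2 * π) = F t θ φ)
    (hint : IntegrableOn (fun p => cdθ F p.1 p.2.1 p.2.2 ^ 2 * (sin p.2.1 ^ 3)⁻¹)
      (Icc t₁ t₂ ×ˢ (Ioo 0 π ×ˢ Ioo 0 (2 * π))))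
    (ha : ∀ t ∈ Icc t₁ t₂, ∀ φ, F t 0 φ = a) (hδ : 0 < δ) (hc : θ₀ < 2 * δ → c = a) :
    ∃ M, 0 ≤ M ∧ ∀ t ∈ Icc t₁ t₂, ∀ θ ∈ Ioc 0 (π / 2), |θ - θ₀| < δ → ∀ φ,
      |F t θ φ - c| ≤ M * sin θ ^ 3 ∧ |cdθ F t θ φ| ≤ M * sin θ ^ 2 := by
  obtain ⟨M, hM0, hM⟩ := exists_abs_sub_le_mul_pow_north h12 hF hper hint ha
  have hac {θ : ℝ} (hθδ : |θ - θ₀| < δ) : |a - c| ≤ |a - c| / δ ^ 3 * θ ^ 3 := by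
    rcases lt_or_ge θ₀ (2 * δ) with h | h
    · simp [hc h]
    · have : δ ≤ θ := by linarith [(abs_lt.1 hθδ).1]
      rw [div_mul_eq_mul_div, le_div_iff₀ (by positivity)]
      gcongr
  set K := M + |a - c| / δ ^ 3
  have hMK : M ≤ K := le_add_of_nonneg_right (by positivity)
  have : 0 ≤ K := hM0.trans hMK
  have hπ2 : 1 ≤ π / 2 := by linarith [pi_gt_three]
  refine ⟨K * (π / 2) ^ 3, by positivity, fun t ht θ hθ hθδ φ => ?_⟩
  have hsin : θ ≤ π / 2 * sin θ := by
    have := mul_le_sin hθ.1.le hθ.2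
    rwa [div_mul_eq_mul_div, div_le_iff₀ pi_pos, mul_comm 2, mul_comm (sin θ),
      ← le_div_iff₀ two_pos, mul_div_right_comm] at this
  have hθ0 := hθ.1.le
  obtain ⟨hv, hd⟩ := hM t ht θ ⟨hθ.1, by linarith [hθ.2, pi_pos]⟩ φ
  constructor
  · calc |F t θ φ - c| ≤ |F t θ φ - a| + |a - c| := abs_sub_le _ _ _
      _ ≤ M * θ ^ 3 + |a - c| / δ ^ 3 * θ ^ 3 := add_le_add hv (hac hθδ)
      _ = K * θ ^ 3 := (add_mul _ _ _).symm
      _ ≤ K * (π / 2 * sin θ) ^ 3 := by gcongr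
      _ = _ := by ring
  · calc |cdθ F t θ φ| ≤ K * θ ^ 2 := hd.trans (by gcongr)
      _ ≤ K * (π / 2 * sin θ) ^ 2 := by gcongr
      _ = K * (π / 2) ^ 2 * sin θ ^ 2 := by ring
      _ ≤ K * (π / 2) ^ 3 * sin θ ^ 2 := by gcongr; norm_num

lemma cdθ_reflect (F : ℝ → ℝ → ℝ → ℝ) (t θ φ : ℝ) :
    cdθ (fun t θ φ => F t (π - θ) φ) t θ φ = -cdθ F t (π - θ) φ :=
  deriv_comp_const_sub (f := fun x => F t x φ) π θ

lemma ClosedCylContDiff.reflect {n : ℕ} (hF : ClosedCylContDiff t₁ t₂ n F) :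
    ClosedCylContDiff t₁ t₂ n fun t θ φ => F t (π - θ) φ := by
  have hc : ContDiff ℝ n fun p : ℝ × ℝ × ℝ => (p.1, π - p.2.1, p.2.2) := by fun_prop
  exact hF.comp hc.contDiffOn fun p hp =>
    ⟨hp.1, ⟨sub_nonneg.2 hp.2.1.2, sub_le_self _ hp.2.1.1⟩, mem_univ _⟩

lemma integrableOn_reflect {g : ℝ × ℝ × ℝ → ℝ} {A C : Set ℝ}
    (hg : IntegrableOn g (A ×ˢ (Ioo 0 π ×ˢ C))) :
    IntegrableOn (fun p => g (p.1, π - p.2.1, p.2.2)) (A ×ˢ (Ioo 0 π ×ˢ C)) := by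
  let e : ℝ × ℝ × ℝ → ℝ × ℝ × ℝ := Prod.map id (Prod.map (fun x => π - x) id)
  have hmp : MeasurePreserving e volume volume :=
    (MeasurePreserving.id volume).prod
      ((Measure.measurePreserving_sub_left volume π).prod (MeasurePreserving.id volume))
  have hinv : Function.Involutive e := by rintro ⟨x, y, z⟩; simp [e]
  have hpre : e ⁻¹' (A ×ˢ (Ioo 0 π ×ˢ C)) = A ×ˢ (Ioo 0 π ×ˢ C) := by
    ext p
    simp [e, and_comm (a := (0 : ℝ) < p.2.1)]
  have := (hmp.integrableOn_comp_preimage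
    (MeasurableEquiv.ofInvolutive e hinv hmp.measurable).measurableEmbedding).2 hg
  rwa [hpre] at this

lemma exists_abs_sub_le_mul_sin_pow {b θ₀ δ : ℝ} (h12 : t₁ < t₂)
    (hF : ClosedCylContDiff t₁ t₂ 3 F) (hper : ∀ t θ φ, F t θ (φ + 2 * π) = F t θ φ)
    (hint : IntegrableOn (fun p => cdθ F p.1 p.2.1 p.2.2 ^ 2 * (sin p.2.1 ^ 3)⁻¹)
      (Icc t₁ t₂ ×ˢ (Ioo 0 π ×ˢ Ioo 0 (2 * π))))
    (ha : ∀ t ∈ Icc t₁ t₂, ∀ φ, F t 0 φ = a) (hb : ∀ t ∈ Icc t₁ t₂, ∀ φ, F t π φ = b)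
    (hδ : 0 < δ) (hca : θ₀ < 2 * δ → c = a) (hcb : π - θ₀ < 2 * δ → c = b) :
    ∃ M, 0 ≤ M ∧ ∀ t ∈ Icc t₁ t₂, ∀ θ ∈ Ioo 0 π, |θ - θ₀| < δ → ∀ φ,
      |F t θ φ - c| ≤ M * sin θ ^ 3 ∧ |cdθ F t θ φ| ≤ M * sin θ ^ 2 := by
  obtain ⟨M, hM0, hM⟩ := exists_abs_sub_le_mul_sin_pow_north h12 hF hper hint ha hδ hca
  obtain ⟨N, -, hN⟩ := exists_abs_sub_le_mul_sin_pow_north (θ₀ := π - θ₀) h12 hF.reflect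
    (fun t θ φ => hper _ _ _)
    (by simpa only [cdθ_reflect, neg_sq, sin_pi_sub] using integrableOn_reflect hint)
    (fun t ht φ => by rw [sub_zero, hb t ht]) hδ hcb
  refine ⟨max M N, hM0.trans (le_max_left _ _), fun t ht θ hθ hθδ φ => ?_⟩
  have hs := (sin_pos_of_mem_Ioo hθ).le
  rcases le_total θ (π / 2) with h | h
  · refine (hM t ht θ ⟨hθ.1, h⟩ hθδ φ).imp (le_trans · ?_) (le_trans · ?_) <;>
      gcongr <;> exact le_max_left _ _
  · have := hN t ht (π - θ) ⟨sub_pos.2 hθ.2, by linarith⟩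
      (by rwa [sub_sub_sub_cancel_left, abs_sub_comm]) φ
    rw [cdθ_reflect, abs_neg, sin_pi_sub, sub_sub_cancel] at this
    refine this.imp (le_trans · ?_) (le_trans · ?_) <;> gcongr <;> exact le_max_right _ _

end Poles

/-! ### Bounds for renormalizers and solutions -/

section Bounds

variable {I : Set ℝ} {A₁ Λ a t θ φ t₁ t₂ : ℝ} {R : Renormalizer I A₁}

lemma exp_neg_four_mul_log {x : ℝ} (hx : 0 < x) : exp (-4 * log x) = (x ^ 4)⁻¹ := by
  rw [neg_mul, exp_neg, show (4 : ℝ) * log x = (4 : ℕ) * log x by norm_num, exp_nat_mul,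
    exp_log hx]

/-- The function `ln ω` of a renormalizer `ω`. -/
def Renormalizer.logω (R : Renormalizer I A₁) (t θ φ : ℝ) : ℝ := log (R.ω t θ φ)

namespace Renormalizer

lemma cylContDiff_logω (R : Renormalizer I A₁) (n : ℕ) : CylContDiff I n R.logω :=
  ContDiffOn.log (ContDiffOn.of_le R.smooth (by exact_mod_cast le_top))
    fun _ hp => (R.pos _ hp.1 _ hp.2.1 _).ne'

lemma exp_neg_four_mul_logω (hp : (t, θ, φ) ∈ regCyl I) :
    exp (-4 * R.logω t θ φ) = (R.ω t θ φ ^ 4)⁻¹ :=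
  exp_neg_four_mul_log (R.pos _ hp.1 _ hp.2.1 _)

lemma abs_logω_sub_log_sin_le (hp : (t, θ, φ) ∈ regCyl I) :
    |R.logω t θ φ - log (sin θ)| ≤ A₁ := by
  obtain ⟨G, -, hG, hGA⟩ := R.deriv_ext 0 0 0 (by norm_num)
  have hGt := hGA t hp.1 θ (Ioo_subset_Icc_self hp.2.1) φ
  rwa [hG t hp.1 θ hp.2.1 φ] at hGt

lemma abs_cdθ_logω_sub_cot_le (hI : IsOpen I) (hp : (t, θ, φ) ∈ regCyl I) :
    |cdθ R.logω t θ φ - cos θ / sin θ| ≤ A₁ := by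
  obtain ⟨ht, hθ⟩ := mem_regCyl.1 hp
  obtain ⟨G, -, hG, hGA⟩ := R.deriv_ext 0 1 0 (by norm_num)
  have hGt := hGA t ht θ (Ioo_subset_Icc_self hθ) φ
  rw [hG t ht θ hθ φ] at hGt
  have hd : HasDerivAt (fun x => log (R.ω t x φ) - log (sin x))
      (cdθ R.logω t θ φ - cos θ / sin θ) θ :=
    ((R.cylContDiff_logω 1).hasDerivAt_cdθ (n := 0) hI hp).sub
      ((hasDerivAt_sin θ).log (sin_pos_of_mem_Ioo hθ).ne')
  rw [← hd.deriv]
  exact hGt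

lemma abs_cdθ_logω_le (hI : IsOpen I) (hp : (t, θ, φ) ∈ regCyl I) :
    |cdθ R.logω t θ φ| ≤ A₁ + (sin θ)⁻¹ := by
  have hs : 0 < sin θ := sin_pos_of_mem_Ioo (mem_regCyl.1 hp).2
  have hcot : |cos θ / sin θ| ≤ (sin θ)⁻¹ := by
    rw [abs_div, abs_of_pos hs, div_eq_mul_inv]
    exact mul_le_of_le_one_left (inv_nonneg.2 hs.le) (abs_cos_le_one θ)
  calc |cdθ R.logω t θ φ| = |cdθ R.logω t θ φ - cos θ / sin θ + cos θ / sin θ| := by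
        rw [sub_add_cancel]
    _ ≤ _ := (abs_add_le _ _).trans
      (add_le_add (R.abs_cdθ_logω_sub_cot_le hI hp) hcot)

lemma exp_neg_four_mul_logω_le (hp : (t, θ, φ) ∈ regCyl I) :
    exp (-4 * R.logω t θ φ) ≤ exp (4 * A₁) * (sin θ ^ 4)⁻¹ := by
  rw [← exp_neg_four_mul_log (sin_pos_of_mem_Ioo (mem_regCyl.1 hp).2), ← exp_add]
  exact exp_le_exp.2 (by linarith [neg_le_of_abs_le (R.abs_logω_sub_log_sin_le hp)])

lemma inv_sin_pow_four_le (hp : (t, θ, φ) ∈ regCyl I) :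
    (sin θ ^ 4)⁻¹ ≤ exp (4 * A₁) * exp (-4 * R.logω t θ φ) := by
  rw [← exp_neg_four_mul_log (sin_pos_of_mem_Ioo (mem_regCyl.1 hp).2), ← exp_add]
  exact exp_le_exp.2 (by linarith [le_of_abs_le (R.abs_logω_sub_log_sin_le hp)])

end Renormalizer

lemma ClosedCylContDiff.exists_abs_cdθ_le {F : ℝ → ℝ → ℝ → ℝ} (hF : ClosedCylContDiff t₁ t₂ 1 F)
    (h12 : t₁ < t₂) (φ₁ φ₂ : ℝ) :
    ∃ M, 0 ≤ M ∧ ∀ t ∈ Icc t₁ t₂, ∀ θ ∈ Ioo 0 π, ∀ φ ∈ Icc φ₁ φ₂, |cdθ F t θ φ| ≤ M := by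
  have hF' : ClosedCylContDiff t₁ t₂ 0 (cdθIcc F) := hF.deriv_theta (n := 0) h12
  obtain ⟨M, hM⟩ := (isCompact_Icc.prod (isCompact_Icc.prod isCompact_Icc)
      : IsCompact (Icc t₁ t₂ ×ˢ (Icc 0 π ×ˢ Icc φ₁ φ₂))).exists_bound_of_continuousOn
    (hF'.continuousOn.mono (prod_mono_right (prod_mono_right (subset_univ _))))
  refine ⟨|M|, abs_nonneg M, fun t ht θ hθ φ hφ => ?_⟩
  rw [← cdθIcc_eq_cdθ hθ]
  exact (hM (t, θ, φ) ⟨ht, Ioo_subset_Icc_self hθ, hφ⟩).trans (le_abs_self M)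

namespace RHMSolution

variable (S : RHMSolution I A₁ R Λ a)

lemma cylContDiff_Φ : CylContDiff I 3 S.Φ :=
  ContDiffOn.mono S.regΦ (prod_mono_right (prod_mono_left Ioo_subset_Icc_self))

lemma cylContDiff_v : CylContDiff I 3 S.v :=
  ContDiffOn.mono S.regv (prod_mono_right (prod_mono_left Ioo_subset_Icc_self))

lemma abs_Φ_le (hp : (t, θ, φ) ∈ regCyl I) : |S.Φ t θ φ| ≤ Λ :=
  S.bddΦ t hp.1 θ (Ioo_subset_Icc_self hp.2.1) φ

lemma cL_Φ_eq (hp : (t, θ, φ) ∈ regCyl I) (hL : cL R.logω t θ φ = 0) :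
    cL S.Φ t θ φ = 2 * exp (4 * (S.Φ t θ φ - R.logω t θ φ)) * cgradNormSq S.v t θ φ :=
  (S.eqΦ t hp.1 θ hp.2.1 φ).trans (add_eq_left.2 hL)

lemma exists_abs_cdθ_Φ_le (ht : Icc t₁ t₂ ⊆ I) (h12 : t₁ < t₂) (φ₁ φ₂ : ℝ) :
    ∃ M, 0 ≤ M ∧ ∀ t ∈ Icc t₁ t₂, ∀ θ ∈ Ioo 0 π, ∀ φ ∈ Icc φ₁ φ₂, |cdθ S.Φ t θ φ| ≤ M :=
  ClosedCylContDiff.exists_abs_cdθ_le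
    (ContDiffOn.of_le (ContDiffOn.mono S.regΦ (prod_mono_left ht)) (by norm_num)) h12 φ₁ φ₂

lemma closedCylContDiff_v (ht : Icc t₁ t₂ ⊆ I) : ClosedCylContDiff t₁ t₂ 3 S.v :=
  ContDiffOn.mono S.regv (prod_mono_left ht)

lemma integrableOn_cdθ_v_sq (hI : IsOpen I) (ht : Icc t₁ t₂ ⊆ I) :
    IntegrableOn (fun p => cdθ S.v p.1 p.2.1 p.2.2 ^ 2 * (sin p.2.1 ^ 3)⁻¹)
      (Icc t₁ t₂ ×ˢ (Ioo 0 π ×ˢ Ioo 0 (2 * π))) := by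
  have hms : MeasurableSet (Icc t₁ t₂ ×ˢ (Ioo 0 π ×ˢ Ioo 0 (2 * π))) :=
    measurableSet_Icc.prod (measurableSet_Ioo.prod measurableSet_Ioo)
  have hsub : Icc t₁ t₂ ×ˢ (Ioo 0 π ×ˢ Ioo 0 (2 * π)) ⊆ regCyl I :=
    prod_mono ht (prod_mono_right (subset_univ _))
  refine ((S.energy_loc _ ht isCompact_Icc).const_mul (exp (4 * A₁))).mono' ?_ ?_
  · refine ContinuousOn.aestronglyMeasurable ?_ hms
    refine (((S.cylContDiff_v.cdθ (n := 2) hI).continuousOn.mono hsub).pow 2).mul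
      (ContinuousOn.inv₀ (by fun_prop) fun p hp => ?_)
    exact pow_ne_zero _ (sin_pos_of_mem_Ioo hp.2.1).ne'
  · rw [ae_restrict_iff' hms]
    refine .of_forall ?_
    rintro ⟨t, θ, φ⟩ hp
    have hO : (t, θ, φ) ∈ regCyl I := hsub hp
    have hs : 0 < sin θ := sin_pos_of_mem_Ioo (mem_regCyl.1 hO).2
    have hΦ := cgradNormSq_nonneg S.Φ t θ φ
    rw [norm_of_nonneg (by positivity)]
    calc cdθ S.v t θ φ ^ 2 * (sin θ ^ 3)⁻¹
        = cdθ S.v t θ φ ^ 2 * ((sin θ ^ 4)⁻¹ * sin θ) := by field_simp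
      _ ≤ cgradNormSq S.v t θ φ * (exp (4 * A₁) * (R.ω t θ φ ^ 4)⁻¹ * sin θ) := by
        gcongr
        · exact cgradNormSq_nonneg _ _ _ _
        · exact cdθ_sq_le_cgradNormSq _ _ _ _
        · rw [← R.exp_neg_four_mul_logω hO]
          exact R.inv_sin_pow_four_le hO
      _ = exp (4 * A₁) * ((0 + (R.ω t θ φ ^ 4)⁻¹ * cgradNormSq S.v t θ φ) * sin θ) := by ring
      _ ≤ _ := by gcongr

lemma exists_abs_v_sub_le_mul_sin_pow {c θ₀ δ : ℝ} (hI : IsOpen I) (ht : Icc t₁ t₂ ⊆ I)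
    (h12 : t₁ < t₂) (hδ : 0 < δ) (hcN : θ₀ < 2 * δ → c = a) (hcS : π - θ₀ < 2 * δ → c = -a) :
    ∃ M, 0 ≤ M ∧ ∀ t ∈ Icc t₁ t₂, ∀ θ ∈ Ioo 0 π, |θ - θ₀| < δ → ∀ φ,
      |S.v t θ φ - c| ≤ M * sin θ ^ 3 ∧ |cdθ S.v t θ φ| ≤ M * sin θ ^ 2 :=
  exists_abs_sub_le_mul_sin_pow h12 (S.closedCylContDiff_v ht) S.periodicv
    (S.integrableOn_cdθ_v_sq hI ht) (fun t h => S.traceN t (ht h)) (fun t h => S.traceS t (ht h))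
    hδ hcN hcS

end RHMSolution

end Bounds

/-! ### Integrability of the deviation up to the ends of the cylinder -/

/-- The parabola `τ² - (t - t₀)²`, a cutoff in time that vanishes at `t₀ ± τ`. -/
def timeBump (t₀ τ t : ℝ) : ℝ := τ ^ 2 - (t - t₀) ^ 2

section Hardy

variable {I : Set ℝ} {A₁ Λ a c t θ φ t₀ τ δ α β φ₁ φ₂ K M : ℝ} {R : Renormalizer I A₁}
  {v : ℝ → ℝ → ℝ → ℝ}

lemma hasDerivAt_timeBump : HasDerivAt (timeBump t₀ τ) (-(2 * (t - t₀))) t :=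
  ((((hasDerivAt_id t).sub_const t₀).pow 2).const_sub (τ ^ 2)).congr_deriv (by simp)

lemma cylContDiff_timeBump (n : ℕ) : CylContDiff I n fun t _ _ => timeBump t₀ τ t :=
  ContDiff.contDiffOn ((contDiff_const.sub ((contDiff_fst.sub contDiff_const).pow 2)))

lemma cgradNormSq_timeBump :
    cgradNormSq (fun t _ _ => timeBump t₀ τ t) t θ φ = 4 * (t - t₀) ^ 2 := by
  simp only [cgradNormSq_eq, cdt, cdθ, cdφ, pdθ, pdφ, hasDerivAt_timeBump.deriv, deriv_const]
  ring

/-- The flux `-(t - t₀) (τ² - (t - t₀)²) (v - c)² (sin θ)⁻³` behind Hardy's inequality in time. -/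
def hardyFlux (t₀ τ c : ℝ) (v : ℝ → ℝ → ℝ → ℝ) (t θ φ : ℝ) : ℝ :=
  -((t - t₀) * timeBump t₀ τ t) * (v t θ φ - c) ^ 2 * (sin θ ^ 3)⁻¹

lemma cylContDiff_inv_sin_pow (k n : ℕ) : CylContDiff I n fun _ θ _ => (sin θ ^ k)⁻¹ :=
  ((contDiff_sin.comp (contDiff_fst.comp contDiff_snd)).pow k).contDiffOn.inv
    fun _ hp => (pow_pos (sin_pos_of_mem_regCyl hp) k).ne'

lemma cylContDiff_hardyFlux (hv : CylContDiff I 1 v) : CylContDiff I 1 (hardyFlux t₀ τ c v) :=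
  (CylContDiff.mul (F := fun t θ φ => -((t - t₀) * timeBump t₀ τ t) * (v t θ φ - c) ^ 2)
    (ContDiffOn.mul (ContDiff.contDiffOn (((contDiff_fst.sub contDiff_const).mul
      (contDiff_const.sub ((contDiff_fst.sub contDiff_const).pow 2))).neg))
      ((ContDiffOn.sub hv contDiffOn_const).pow 2)) (cylContDiff_inv_sin_pow 3 1))

lemma sub_le_cdt_hardyFlux (hI : IsOpen I) (hv : CylContDiff I 1 v) (hp : (t, θ, φ) ∈ regCyl I) :
    (2 * (t - t₀) ^ 2 - τ ^ 2) * ((v t θ φ - c) ^ 2 * (sin θ ^ 3)⁻¹)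
      - timeBump t₀ τ t ^ 2 * (cdt v t θ φ ^ 2 * (sin θ ^ 3)⁻¹) ≤
    cdt (hardyFlux t₀ τ c v) t θ φ := by
  have hd : HasDerivAt (fun s => hardyFlux t₀ τ c v s θ φ) _ t :=
    (((((hasDerivAt_id t).sub_const t₀).mul hasDerivAt_timeBump).neg.mul
      (((hv.hasDerivAt_cdt (n := 0) hI hp).sub_const c).pow 2)).mul_const (sin θ ^ 3)⁻¹)
  have hs : 0 ≤ (sin θ ^ 3)⁻¹ :=
    inv_nonneg.2 (pow_nonneg (sin_pos_of_mem_Ioo (mem_regCyl.1 hp).2).le 3)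
  have hdt : cdt (hardyFlux t₀ τ c v) t θ φ = _ := hd.deriv
  have hsq : 0 ≤ ((t - t₀) * (v t θ φ - c) - timeBump t₀ τ t * cdt v t θ φ) ^ 2 * (sin θ ^ 3)⁻¹ :=
    mul_nonneg (sq_nonneg _) hs
  simp only [timeBump, id, Pi.mul_apply, Pi.neg_apply, Pi.pow_apply] at hdt hsq ⊢
  rw [hdt]
  linear_combination hsq

lemma mul_sub_sq_le_of_abs_sub_le {q : ℝ} (hτ : τ ∈ Ico (δ / 2) δ) (hδ : 0 < δ) (hθ : θ ∈ Ioo 0 π)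
    (hM : |t - t₀| ≤ 9 / 10 * δ → |q| ≤ M * sin θ ^ 3) :
    (δ ^ 2 / 8 + τ ^ 2 - 2 * (t - t₀) ^ 2) * (q ^ 2 * (sin θ ^ 3)⁻¹) ≤ 2 * δ ^ 2 * M ^ 2 := by
  have hs : 0 < sin θ := sin_pos_of_mem_Ioo hθ
  have hqs : 0 ≤ q ^ 2 * (sin θ ^ 3)⁻¹ := by positivity
  have hτδ : τ ^ 2 ≤ δ ^ 2 := pow_le_pow_left₀ (by linarith [hτ.1]) hτ.2.le 2
  rcases le_or_gt |t - t₀| (9 / 10 * δ) with h | h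
  · have hle : q ^ 2 * (sin θ ^ 3)⁻¹ ≤ M ^ 2 :=
      calc q ^ 2 * (sin θ ^ 3)⁻¹ ≤ (M * sin θ ^ 3) ^ 2 * (sin θ ^ 3)⁻¹ := by
            rw [← sq_abs]; gcongr; exact hM h
        _ = M ^ 2 * sin θ ^ 3 := by field_simp
        _ ≤ M ^ 2 := mul_le_of_le_one_right (sq_nonneg M) (pow_le_one₀ hs.le (sin_le_one θ))
    nlinarith [sq_nonneg (t - t₀), sq_nonneg M]
  · have hlt : (9 / 10 * δ) ^ 2 ≤ (t - t₀) ^ 2 := by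
      rw [← sq_abs (t - t₀)]; exact pow_le_pow_left₀ (by positivity) h.le 2
    have hneg : δ ^ 2 / 8 + τ ^ 2 - 2 * (t - t₀) ^ 2 ≤ 0 := by nlinarith
    exact (mul_nonpos_of_nonpos_of_nonneg hneg hqs).trans (by positivity)

lemma Icc_subset_of_Ioo_subset (hτ : τ < δ) (hδI : Ioo (t₀ - δ) (t₀ + δ) ⊆ I) :
    Icc (t₀ - τ) (t₀ + τ) ⊆ I :=
  (Icc_subset_Ioo (by linarith) (by linarith)).trans hδI

lemma aecover_coordBox_expand_t {τ : ℕ → ℝ} (hτ : Tendsto τ atTop (nhds δ)) :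
    AECover (volume.restrict (coordBox (t₀ - δ) (t₀ + δ) α β φ₁ φ₂)) atTop
      fun n => coordBox (t₀ - τ n) (t₀ + τ n) α β φ₁ φ₂ where
  ae_eventually_mem := by
    filter_upwards [ae_restrict_mem measurableSet_coordBox] with p hp
    filter_upwards [(tendsto_const_nhds.sub hτ).eventually_lt_const hp.1.1,
      (tendsto_const_nhds.add hτ).eventually_const_lt hp.1.2] with n h₁ h₂
    exact ⟨⟨h₁, h₂⟩, hp.2⟩
  measurableSet _ := measurableSet_coordBox

-- Hardy's inequality in time: near `t₀ ± δ` only `∂ₜ v` is under control, and it is integrated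
-- from the middle part of the cylinder, where `v - c` vanishes to third order at the poles.
lemma integrableOn_and_setIntegral_sub_sq_mul_inv_sin_cube_le (hI : IsOpen I)
    (hv : CylContDiff I 1 v) (hδ : 0 < δ) (hδI : Ioo (t₀ - δ) (t₀ + δ) ⊆ I) (hα : 0 ≤ α)
    (hβ : β ≤ π) (hαβ : α < β) (hφ : φ₁ ≤ φ₂)
    (hM : ∀ t, |t - t₀| ≤ 9 / 10 * δ → ∀ θ ∈ Ioo α β, ∀ φ, |v t θ φ - c| ≤ M * sin θ ^ 3)
    (hτ : τ ∈ Ico (δ / 2) δ)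
    (hE : IntegrableOn (fun p => timeBump t₀ τ p.1 ^ 2 *
        (cdt v p.1 p.2.1 p.2.2 ^ 2 * (sin p.2.1 ^ 3)⁻¹))
      (coordBox (t₀ - τ) (t₀ + τ) α β φ₁ φ₂)) :
    IntegrableOn (fun p => δ ^ 2 / 8 * ((v p.1 p.2.1 p.2.2 - c) ^ 2 * (sin p.2.1 ^ 3)⁻¹))
      (coordBox (t₀ - τ) (t₀ + τ) α β φ₁ φ₂) ∧
    ∫ p in coordBox (t₀ - τ) (t₀ + τ) α β φ₁ φ₂,
        δ ^ 2 / 8 * ((v p.1 p.2.1 p.2.2 - c) ^ 2 * (sin p.2.1 ^ 3)⁻¹) ≤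
      (∫ p in coordBox (t₀ - τ) (t₀ + τ) α β φ₁ φ₂, 2 * δ ^ 2 * M ^ 2) +
        ∫ p in coordBox (t₀ - τ) (t₀ + τ) α β φ₁ φ₂, timeBump t₀ τ p.1 ^ 2 *
          (cdt v p.1 p.2.1 p.2.2 ^ 2 * (sin p.2.1 ^ 3)⁻¹) := by
  have hθ_sub : Ioo α β ⊆ Ioo 0 π := Ioo_subset_Ioo hα hβ
  have hIcc := Icc_subset_of_Ioo_subset hτ.2 hδI
  have hconst : IntegrableOn (fun _ => 2 * δ ^ 2 * M ^ 2)
      (coordBox (t₀ - τ) (t₀ + τ) α β φ₁ φ₂) := integrableOn_const volume_coordBox_lt_top.ne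
  have hg : ContinuousOn (fun p : ℝ × ℝ × ℝ =>
      δ ^ 2 / 8 * ((v p.1 p.2.1 p.2.2 - c) ^ 2 * (sin p.2.1 ^ 3)⁻¹)) (regCyl I) :=
    continuousOn_const.mul (((hv.continuousOn.sub continuousOn_const).pow 2).mul
      (cylContDiff_inv_sin_pow 3 0).continuousOn)
  refine (integrableOn_and_setIntegral_le_of_sub_le_coordDiv hI (cylContDiff_hardyFlux
    (t₀ := t₀) (τ := τ) (c := c) hv) (Y := 0) (Z := 0) (K := 0) contDiffOn_const
    contDiffOn_const hIcc (by linarith [hτ.1]) hα hβ hαβ hφ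
    (fun θ φ => by simp [hardyFlux, timeBump]) (fun _ _ => rfl) (fun _ _ _ _ _ _ => by simp)
    hg (fun p hp => ?_) (hconst.add hE) fun p hp => ?_).imp_right
      fun h => h.trans_eq (integral_add hconst hE)
  · have hs : 0 < sin p.2.1 := sin_pos_of_mem_Ioo (hθ_sub hp.2.1)
    positivity
  · have hflux := sub_le_cdt_hardyFlux (t₀ := t₀) (τ := τ) (c := c) hI hv (mem_regCyl.2
      ⟨hIcc (Ioo_subset_Icc_self hp.1), hθ_sub hp.2.1⟩ : (p.1, p.2.1, p.2.2) ∈ regCyl I)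
    have hmid := mul_sub_sq_le_of_abs_sub_le hτ hδ (hθ_sub hp.2.1)
      fun h => hM p.1 h p.2.1 hp.2.1 p.2.2
    simp only [coordDiv, cdθ, cdφ, pdθ, pdφ, Pi.zero_apply, deriv_const, add_zero, Pi.add_apply]
    linarith

lemma integrableOn_sub_sq_mul_inv_sin_cube (hI : IsOpen I) (hv : CylContDiff I 1 v) (hδ : 0 < δ)
    (hδI : Ioo (t₀ - δ) (t₀ + δ) ⊆ I) (hα : 0 ≤ α) (hβ : β ≤ π) (hαβ : α < β) (hφ : φ₁ ≤ φ₂)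
    (hM : ∀ t, |t - t₀| ≤ 9 / 10 * δ → ∀ θ ∈ Ioo α β, ∀ φ, |v t θ φ - c| ≤ M * sin θ ^ 3)
    (hK : ∀ τ ∈ Ioo 0 δ,
      IntegrableOn (fun p => timeBump t₀ τ p.1 ^ 2 *
          (cdt v p.1 p.2.1 p.2.2 ^ 2 * (sin p.2.1 ^ 3)⁻¹))
        (coordBox (t₀ - τ) (t₀ + τ) α β φ₁ φ₂) ∧
      ∫ p in coordBox (t₀ - τ) (t₀ + τ) α β φ₁ φ₂, timeBump t₀ τ p.1 ^ 2 *
          (cdt v p.1 p.2.1 p.2.2 ^ 2 * (sin p.2.1 ^ 3)⁻¹) ≤ K) :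
    IntegrableOn (fun p => (v p.1 p.2.1 p.2.2 - c) ^ 2 * (sin p.2.1 ^ 3)⁻¹)
      (coordBox (t₀ - δ) (t₀ + δ) α β φ₁ φ₂) := by
  obtain ⟨τ, -, hτ, hτ_lim⟩ := exists_seq_strictMono_tendsto' (show δ / 2 < δ by linarith)
  have hbound : ∀ n, _ := fun n => integrableOn_and_setIntegral_sub_sq_mul_inv_sin_cube_le hI hv
    hδ hδI hα hβ hαβ hφ hM (Ioo_subset_Ico_self (hτ n))
    (hK (τ n) ⟨by linarith [(hτ n).1], (hτ n).2⟩).1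
  have hint : IntegrableOn
      (fun p => δ ^ 2 / 8 * ((v p.1 p.2.1 p.2.2 - c) ^ 2 * (sin p.2.1 ^ 3)⁻¹))
      (coordBox (t₀ - δ) (t₀ + δ) α β φ₁ φ₂) :=
    (integrableOn_and_setIntegral_le_of_aecover measurableSet_coordBox
      (aecover_coordBox_expand_t hτ_lim)
      (fun n => coordBox_mono (by linarith [(hτ n).2]) (by linarith [(hτ n).2]) le_rfl le_rfl
        le_rfl le_rfl)
      (fun n => (hbound n).1)
      (fun p hp => by
        have hs : 0 < sin p.2.1 := sin_pos_of_mem_Ioo (Ioo_subset_Ioo hα hβ hp.2.1)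
        positivity)
      (integrableOn_const volume_coordBox_lt_top.ne) tendsto_const_nhds
      fun n => (hbound n).2.trans (add_le_add_right
        (hK (τ n) ⟨by linarith [(hτ n).1], (hτ n).2⟩).2 _)).1
  simpa [IntegrableOn, integrable_const_mul_iff, hδ.ne'] using hint

namespace RHMSolution

variable (S : RHMSolution I A₁ R Λ a)

lemma exp_neg_mul_sin_inv_le (hp : (t, θ, φ) ∈ regCyl I) :
    exp (-(5 * Λ + 4 * A₁)) * (sin θ ^ 4)⁻¹ ≤
      exp (S.Φ t θ φ) * exp (4 * (S.Φ t θ φ - R.logω t θ φ)) := by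
  have hΦ := abs_le.1 (S.abs_Φ_le hp)
  have hω := abs_le.1 (R.abs_logω_sub_log_sin_le hp)
  rw [← exp_neg_four_mul_log (sin_pos_of_mem_Ioo (mem_regCyl.1 hp).2), ← exp_add, ← exp_add]
  exact exp_le_exp.2 (by linarith [hΦ.1, hω.2])

lemma exists_abs_mul_cdθ_exp_Φ_le (hI : IsOpen I) (ht : Icc (t₀ - τ) (t₀ + τ) ⊆ I) (hτ : 0 < τ)
    (φ₁ φ₂ : ℝ) :
    ∃ K, ∀ t ∈ Icc (t₀ - τ) (t₀ + τ), ∀ θ ∈ Ioo 0 π, ∀ φ ∈ Icc φ₁ φ₂,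
      |timeBump t₀ τ t ^ 2 * cdθ (fun t θ φ => exp (S.Φ t θ φ)) t θ φ| ≤ K := by
  obtain ⟨M, -, hM⟩ := S.exists_abs_cdθ_Φ_le ht (by linarith) φ₁ φ₂
  refine ⟨(τ ^ 2) ^ 2 * (exp Λ * M), fun t h θ hθ φ hφ => ?_⟩
  have hp : (t, θ, φ) ∈ regCyl I := mem_regCyl.2 ⟨ht h, hθ⟩
  rw [cdθ_comp hI (S.cylContDiff_Φ.of_le (by norm_num)) contDiff_exp hp, Real.deriv_exp, abs_mul,
    abs_mul, abs_of_nonneg (sq_nonneg _), abs_of_pos (exp_pos _)]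
  have hb : timeBump t₀ τ t ∈ Icc 0 (τ ^ 2) :=
    ⟨sub_nonneg.2 (sq_le_sq' (by linarith [h.1]) (by linarith [h.2])),
      sub_le_self _ (sq_nonneg _)⟩
  gcongr
  · exact hb.1
  · exact hb.2
  · exact le_of_abs_le (S.abs_Φ_le hp)
  · exact hM t h θ hθ φ hφ

lemma timeBump_sq_mul_sub_le (hI : IsOpen I) (hp : (t, θ, φ) ∈ regCyl I)
    (hL : cL R.logω t θ φ = 0) :
    exp (-(5 * Λ + 4 * A₁)) * (timeBump t₀ τ t ^ 2 * ((sin θ ^ 4)⁻¹ * cgradNormSq S.v t θ φ))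
      - exp Λ * (4 * (t - t₀) ^ 2) ≤
    timeBump t₀ τ t ^ 2 * cL (fun t θ φ => exp (S.Φ t θ φ)) t θ φ
      + cgradDot (fun t _ _ => timeBump t₀ τ t ^ 2) (fun t θ φ => exp (S.Φ t θ φ)) t θ φ := by
  refine le_trans (sub_le_sub ?_ ?_) (sub_le_sq_mul_cL_exp hI (S.cylContDiff_Φ.of_le (by norm_num))
    (cylContDiff_timeBump 1) hp (S.cL_Φ_eq hp hL))
  · have hnn := mul_nonneg (sq_nonneg (timeBump t₀ τ t)) (cgradNormSq_nonneg S.v t θ φ)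
    calc _ = exp (-(5 * Λ + 4 * A₁)) * (sin θ ^ 4)⁻¹ *
            (timeBump t₀ τ t ^ 2 * cgradNormSq S.v t θ φ) := by ring
      _ ≤ exp (S.Φ t θ φ) * exp (4 * (S.Φ t θ φ - R.logω t θ φ)) *
            (2 * (timeBump t₀ τ t ^ 2 * cgradNormSq S.v t θ φ)) :=
        mul_le_mul (S.exp_neg_mul_sin_inv_le hp) (by linarith) hnn (by positivity)
      _ = _ := by ring
  · rw [cgradNormSq_timeBump]
    gcongr
    exact le_of_abs_le (S.abs_Φ_le hp)

-- Tested against `timeBump ^ 2`, the subsolution `exp Φ` bounds the energy uniformly in `τ`.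
lemma exists_integral_timeBump_sq_mul_le (hI : IsOpen I) (hδI : Ioo (t₀ - δ) (t₀ + δ) ⊆ I)
    (hL : ∀ t ∈ I, ∀ θ ∈ Ioo 0 π, ∀ φ, cL R.logω t θ φ = 0) (φ₁ : ℝ) :
    ∃ K, ∀ τ ∈ Ioo 0 δ,
      IntegrableOn (fun p => expSin p.1 p.2.1 * (exp (-(5 * Λ + 4 * A₁)) *
          (timeBump t₀ τ p.1 ^ 2 * ((sin p.2.1 ^ 4)⁻¹ * cgradNormSq S.v p.1 p.2.1 p.2.2))))
        (coordBox (t₀ - τ) (t₀ + τ) 0 π φ₁ (φ₁ + 2 * π)) ∧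
      ∫ p in coordBox (t₀ - τ) (t₀ + τ) 0 π φ₁ (φ₁ + 2 * π), expSin p.1 p.2.1 *
        (exp (-(5 * Λ + 4 * A₁)) * (timeBump t₀ τ p.1 ^ 2 *
          ((sin p.2.1 ^ 4)⁻¹ * cgradNormSq S.v p.1 p.2.1 p.2.2))) ≤ K := by
  have hh : ∀ τ, IntegrableOn (fun p => expSin p.1 p.2.1 * (exp Λ * (4 * (p.1 - t₀) ^ 2)))
      (coordBox (t₀ - τ) (t₀ + τ) 0 π φ₁ (φ₁ + 2 * π)) := fun τ =>
    integrableOn_coordBox_of_continuousOn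
      ((contDiff_expSin 0).continuous.mul (by fun_prop)).continuousOn
  refine ⟨∫ p in coordBox (t₀ - δ) (t₀ + δ) 0 π φ₁ (φ₁ + 2 * π),
    expSin p.1 p.2.1 * (exp Λ * (4 * (p.1 - t₀) ^ 2)), fun τ hτ => ?_⟩
  have hIcc := Icc_subset_of_Ioo_subset hτ.2 hδI
  have hexp : CylContDiff I 2 fun t θ φ => exp (S.Φ t θ φ) :=
    (S.cylContDiff_Φ.of_le (by norm_num)).exp
  have hζ : CylContDiff I 1 fun t _ _ => timeBump t₀ τ t ^ 2 :=
    ContDiffOn.pow (cylContDiff_timeBump 1) 2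
  obtain ⟨K, hK⟩ := S.exists_abs_mul_cdθ_exp_Φ_le hI hIcc hτ.1 φ₁ (φ₁ + 2 * π)
  have hg : ContinuousOn (↿fun t θ φ => exp (-(5 * Λ + 4 * A₁)) *
      (timeBump t₀ τ t ^ 2 * ((sin θ ^ 4)⁻¹ * cgradNormSq S.v t θ φ))) (regCyl I) :=
    continuousOn_const.mul (hζ.continuousOn.mul ((cylContDiff_inv_sin_pow 4 0).continuousOn.mul
      ((S.cylContDiff_v.of_le (by norm_num)).continuousOn_cgradNormSq hI)))
  refine (integrableOn_and_setIntegral_le_of_sub_le_cL hI hexp hζ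
    (fun t θ φ => by rw [S.periodicΦ]) (fun _ _ _ => rfl) hIcc (by linarith [hτ.1])
    (fun _ _ => by simp [timeBump]) (fun _ _ => by simp [timeBump]) hK hg
    (fun t _ θ _ φ => mul_nonneg (exp_pos _).le (mul_nonneg (sq_nonneg _)
      (mul_nonneg (inv_nonneg.2 (by positivity)) (cgradNormSq_nonneg _ _ _ _)))) (hh τ)
    fun t ht θ hθ φ => S.timeBump_sq_mul_sub_le hI (mem_regCyl.2 ⟨ht, hθ⟩)
      (hL t ht θ hθ φ)).imp_right fun hle => hle.trans (setIntegral_mono_set (hh δ) ?_ ?_)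
  · filter_upwards [ae_restrict_mem measurableSet_coordBox] with p hp
    have : 0 < sin p.2.1 := sin_pos_of_mem_Ioo hp.2.1
    simp only [expSin, Pi.zero_apply]
    positivity
  · exact (coordBox_mono (by linarith [hτ.2]) (by linarith [hτ.2]) le_rfl le_rfl le_rfl
      le_rfl).eventuallyLE

lemma timeBump_sq_mul_cdt_sq_le (hp : (t, θ, φ) ∈ regCyl I) (ht : t ≤ t₀ + δ) :
    timeBump t₀ τ t ^ 2 * (cdt S.v t θ φ ^ 2 * (sin θ ^ 3)⁻¹) ≤
      exp (t₀ + δ + (5 * Λ + 4 * A₁)) * (expSin t θ * (exp (-(5 * Λ + 4 * A₁)) *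
        (timeBump t₀ τ t ^ 2 * ((sin θ ^ 4)⁻¹ * cgradNormSq S.v t θ φ)))) := by
  have hs : 0 < sin θ := sin_pos_of_mem_Ioo (mem_regCyl.1 hp).2
  calc _ = 1 * (timeBump t₀ τ t ^ 2 * ((sin θ ^ 3)⁻¹ * cdt S.v t θ φ ^ 2)) := by ring
    _ ≤ exp (t₀ + δ - t) * (timeBump t₀ τ t ^ 2 * ((sin θ ^ 3)⁻¹ * cgradNormSq S.v t θ φ)) := by
      gcongr
      · exact one_le_exp (by linarith)
      · exact cdt_sq_le_cgradNormSq _ _ _ _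
    _ = exp (t₀ + δ + (5 * Λ + 4 * A₁)) * exp (-t) * exp (-(5 * Λ + 4 * A₁)) *
        (timeBump t₀ τ t ^ 2 * ((sin θ ^ 3)⁻¹ * cgradNormSq S.v t θ φ)) := by
      rw [← exp_add, ← exp_add]
      ring_nf
    _ = _ := by
      rw [expSin]
      field_simp

lemma exists_integral_timeBump_sq_mul_cdt_sq_le (hI : IsOpen I)
    (hδI : Ioo (t₀ - δ) (t₀ + δ) ⊆ I) (hL : ∀ t ∈ I, ∀ θ ∈ Ioo 0 π, ∀ φ, cL R.logω t θ φ = 0)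
    (hα : 0 ≤ α) (hβ : β ≤ π) (φ₁ : ℝ) :
    ∃ K, ∀ τ ∈ Ioo 0 δ,
      IntegrableOn (fun p => timeBump t₀ τ p.1 ^ 2 *
          (cdt S.v p.1 p.2.1 p.2.2 ^ 2 * (sin p.2.1 ^ 3)⁻¹))
        (coordBox (t₀ - τ) (t₀ + τ) α β φ₁ (φ₁ + 2 * π)) ∧
      ∫ p in coordBox (t₀ - τ) (t₀ + τ) α β φ₁ (φ₁ + 2 * π), timeBump t₀ τ p.1 ^ 2 *
          (cdt S.v p.1 p.2.1 p.2.2 ^ 2 * (sin p.2.1 ^ 3)⁻¹) ≤ K := by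
  obtain ⟨K, hK⟩ := S.exists_integral_timeBump_sq_mul_le hI hδI hL φ₁
  refine ⟨exp (t₀ + δ + (5 * Λ + 4 * A₁)) * K, fun τ hτ => ?_⟩
  obtain ⟨hE, hEK⟩ := hK τ hτ
  have hreg : coordBox (t₀ - τ) (t₀ + τ) 0 π φ₁ (φ₁ + 2 * π) ⊆ regCyl I :=
    prod_mono ((Ioo_subset_Icc_self).trans (Icc_subset_of_Ioo_subset hτ.2 hδI))
      (prod_mono_right (subset_univ _))
  have hsub : coordBox (t₀ - τ) (t₀ + τ) α β φ₁ (φ₁ + 2 * π) ⊆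
      coordBox (t₀ - τ) (t₀ + τ) 0 π φ₁ (φ₁ + 2 * π) :=
    coordBox_mono le_rfl le_rfl hα hβ le_rfl le_rfl
  have hpt : ∀ p ∈ coordBox (t₀ - τ) (t₀ + τ) 0 π φ₁ (φ₁ + 2 * π), _ := fun p hp =>
    S.timeBump_sq_mul_cdt_sq_le (t₀ := t₀) (τ := τ) (δ := δ)
      (hreg hp : (p.1, p.2.1, p.2.2) ∈ regCyl I) (by linarith [hp.1.2, hτ.2])
  have hnn : ∀ p ∈ coordBox (t₀ - τ) (t₀ + τ) 0 π φ₁ (φ₁ + 2 * π), 0 ≤ timeBump t₀ τ p.1 ^ 2 *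
      (cdt S.v p.1 p.2.1 p.2.2 ^ 2 * (sin p.2.1 ^ 3)⁻¹) := fun p hp => by
    have : 0 < sin p.2.1 := sin_pos_of_mem_Ioo hp.2.1
    positivity
  have hint : IntegrableOn (fun p => timeBump t₀ τ p.1 ^ 2 *
      (cdt S.v p.1 p.2.1 p.2.2 ^ 2 * (sin p.2.1 ^ 3)⁻¹))
      (coordBox (t₀ - τ) (t₀ + τ) 0 π φ₁ (φ₁ + 2 * π)) := by
    refine (hE.const_mul (exp (t₀ + δ + (5 * Λ + 4 * A₁)))).mono' ?_ ?_
    · exact (ContinuousOn.mono (((ContDiffOn.pow (cylContDiff_timeBump 0) 2).continuousOn.mul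
        (((S.cylContDiff_v.cdt (n := 2) hI).continuousOn.pow 2).mul
          (cylContDiff_inv_sin_pow 3 0).continuousOn))) hreg).aestronglyMeasurable
            measurableSet_coordBox
    · filter_upwards [ae_restrict_mem measurableSet_coordBox] with p hp
      exact (norm_of_nonneg (hnn p hp)).trans_le (hpt p hp)
  refine ⟨hint.mono_set hsub, ?_⟩
  calc _ ≤ _ := setIntegral_mono_set hint
        ((ae_restrict_mem measurableSet_coordBox).mono hnn) hsub.eventuallyLE
    _ ≤ _ := setIntegral_mono_on hint (hE.const_mul _) measurableSet_coordBox hpt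
    _ ≤ _ := by rw [integral_const_mul]; gcongr

lemma continuousOn_devDensity {c₁ c₂ : ℝ} :
    ContinuousOn ↿(devDensity c₁ c₂ S.Φ R.logω S.v) (regCyl I) :=
  ((S.cylContDiff_Φ.continuousOn.sub continuousOn_const).pow 2).add
    ((continuousOn_const.mul (R.cylContDiff_logω 0).continuousOn).rexp.mul
      ((S.cylContDiff_v.continuousOn.sub continuousOn_const).pow 2))

lemma devDensity_mul_sin_le {c₁ : ℝ} (hp : (t, θ, φ) ∈ regCyl I) (hc₁ : |c₁| ≤ Λ) :
    devDensity c₁ c S.Φ R.logω S.v t θ φ * sin θ ≤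
      (2 * Λ) ^ 2 + exp (4 * A₁) * ((S.v t θ φ - c) ^ 2 * (sin θ ^ 3)⁻¹) := by
  have hs : 0 < sin θ := sin_pos_of_mem_Ioo (mem_regCyl.1 hp).2
  have hΦ : (S.Φ t θ φ - c₁) ^ 2 ≤ (2 * Λ) ^ 2 := by
    rw [← sq_abs]
    gcongr
    linarith [abs_sub (S.Φ t θ φ) c₁, S.abs_Φ_le hp]
  calc _ = (S.Φ t θ φ - c₁) ^ 2 * sin θ
        + exp (-4 * R.logω t θ φ) * ((S.v t θ φ - c) ^ 2 * sin θ) := by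
        rw [devDensity]
        ring
    _ ≤ (2 * Λ) ^ 2 * 1
        + exp (4 * A₁) * (sin θ ^ 4)⁻¹ * ((S.v t θ φ - c) ^ 2 * sin θ) := by
      gcongr
      · exact sin_le_one θ
      · exact R.exp_neg_four_mul_logω_le hp
    _ = _ := by field_simp

lemma integrableOn_devDensity_mul_sin {c₁ θ₀ : ℝ} (hI : IsOpen I)
    (hL : ∀ t ∈ I, ∀ θ ∈ Ioo 0 π, ∀ φ, cL R.logω t θ φ = 0) (hδ : 0 < δ)
    (hδI : Ioo (t₀ - δ) (t₀ + δ) ⊆ I) (hα : 0 ≤ α) (hβ : β ≤ π) (hαβ : α < β)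
    (hθ₀ : ∀ θ ∈ Ioo α β, |θ - θ₀| < δ) (hc₁ : |c₁| ≤ Λ) (hcN : θ₀ < 2 * δ → c = a)
    (hcS : π - θ₀ < 2 * δ → c = -a) (φ₁ : ℝ) :
    IntegrableOn (fun p => devDensity c₁ c S.Φ R.logω S.v p.1 p.2.1 p.2.2 * sin p.2.1)
      (coordBox (t₀ - δ) (t₀ + δ) α β φ₁ (φ₁ + 2 * π)) := by
  have hreg : coordBox (t₀ - δ) (t₀ + δ) α β φ₁ (φ₁ + 2 * π) ⊆ regCyl I :=
    prod_mono hδI (prod_mono (Ioo_subset_Ioo hα hβ) (subset_univ _))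
  obtain ⟨M, -, hM⟩ := S.exists_abs_v_sub_le_mul_sin_pow hI
    (Icc_subset_of_Ioo_subset (show 9 / 10 * δ < δ by linarith) hδI) (by linarith) hδ hcN hcS
  obtain ⟨K, hK⟩ := S.exists_integral_timeBump_sq_mul_cdt_sq_le hI hδI hL hα hβ φ₁
  have hv := integrableOn_sub_sq_mul_inv_sin_cube hI (S.cylContDiff_v.of_le (by norm_num)) hδ hδI
    hα hβ hαβ (by linarith [pi_pos]) (fun t ht θ hθ φ => (hM t (by
      rw [abs_le] at ht
      constructor <;> linarith [ht.1, ht.2]) θ (Ioo_subset_Ioo hα hβ hθ) (hθ₀ θ hθ) φ).1) hK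
  have hconst : IntegrableOn (fun _ => (2 * Λ) ^ 2)
      (coordBox (t₀ - δ) (t₀ + δ) α β φ₁ (φ₁ + 2 * π)) :=
    integrableOn_const volume_coordBox_lt_top.ne
  refine (hconst.add (hv.const_mul (exp (4 * A₁)))).mono' ?_ ?_
  · exact ((S.continuousOn_devDensity.mono hreg).mul (by fun_prop)).aestronglyMeasurable
      measurableSet_coordBox
  · filter_upwards [ae_restrict_mem measurableSet_coordBox] with p hp
    have hp' : (p.1, p.2.1, p.2.2) ∈ regCyl I := hreg hp
    have : 0 < sin p.2.1 := sin_pos_of_mem_Ioo (mem_regCyl.1 hp').2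
    rw [norm_of_nonneg (mul_nonneg (devDensity_nonneg ..) this.le)]
    exact S.devDensity_mul_sin_le hp' hc₁

end RHMSolution

end Hardy

/-! ### Geodesic balls and cutoff functions -/

/-- The cosine of the round distance from the point `(θ, φ)` to `(θ₀, φ₀)`; unlike the distance
itself it is smooth everywhere. -/
def cosDist (θ₀ φ₀ θ φ : ℝ) : ℝ := cos θ * cos θ₀ + sin θ * sin θ₀ * cos (φ - φ₀)

section Geometry

variable {θ₀ φ₀ t₀ r t θ φ : ℝ}

lemma cosDist_le_cos_sub (hθ : θ ∈ Icc 0 π) (hθ₀ : θ₀ ∈ Icc 0 π) :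
    cosDist θ₀ φ₀ θ φ ≤ cos (θ - θ₀) := by
  rw [cos_sub, cosDist]
  exact (add_le_add_iff_left _).2 (mul_le_of_le_one_right
    (mul_nonneg (sin_nonneg_of_mem_Icc hθ) (sin_nonneg_of_mem_Icc hθ₀)) (cos_le_one _))

lemma neg_one_le_cosDist (hθ : θ ∈ Icc 0 π) (hθ₀ : θ₀ ∈ Icc 0 π) :
    -1 ≤ cosDist θ₀ φ₀ θ φ := by
  have hsin : 0 ≤ sin θ * sin θ₀ :=
    mul_nonneg (sin_nonneg_of_mem_Icc hθ) (sin_nonneg_of_mem_Icc hθ₀)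
  calc -1 ≤ cos (θ + θ₀) := neg_one_le_cos _
    _ = cos θ * cos θ₀ + sin θ * sin θ₀ * -1 := by rw [cos_add]; ring
    _ ≤ cosDist θ₀ φ₀ θ φ := by
      rw [cosDist]
      gcongr
      exact neg_one_le_cos _

lemma sDist_lt_iff (hθ : θ ∈ Icc 0 π) (hθ₀ : θ₀ ∈ Icc 0 π) (hr : r ∈ Icc 0 π) :
    sDist θ φ θ₀ φ₀ < r ↔ cos r < cosDist θ₀ φ₀ θ φ := by
  have hmem : arccos (cosDist θ₀ φ₀ θ φ) ∈ Icc 0 π := ⟨arccos_nonneg _, arccos_le_pi _⟩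
  change arccos (cosDist θ₀ φ₀ θ φ) < r ↔ _
  rw [← strictAntiOn_cos.lt_iff_gt hr hmem, cos_arccos (neg_one_le_cosDist hθ hθ₀)
    ((cosDist_le_cos_sub hθ hθ₀).trans (cos_le_one _))]

lemma mem_Qset (hθ₀ : θ₀ ∈ Icc 0 π) (hr : r ∈ Icc 0 π) :
    (t, θ, φ) ∈ Qset t₀ θ₀ φ₀ r ↔ t ∈ Ioo (t₀ - r) (t₀ + r) ∧ θ ∈ Ioo 0 π ∧
      φ ∈ Ioo (φ₀ - π) (φ₀ + π) ∧ cos r < cosDist θ₀ φ₀ θ φ := by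
  refine and_congr_right fun _ => and_congr_right fun hθ => and_congr_right fun _ => ?_
  exact sDist_lt_iff (Ioo_subset_Icc_self hθ) hθ₀ hr

lemma abs_sub_lt_of_cos_lt_cosDist (hθ : θ ∈ Icc 0 π) (hθ₀ : θ₀ ∈ Icc 0 π) (hr : 0 ≤ r)
    (h : cos r < cosDist θ₀ φ₀ θ φ) : |θ - θ₀| < r := by
  by_contra! hle
  have hπ : |θ - θ₀| ≤ π := abs_le.2 ⟨by linarith [hθ.1, hθ₀.2], by linarith [hθ.2, hθ₀.1]⟩
  have hcos : cos (θ - θ₀) ≤ cos r := by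
    rw [← cos_abs (θ - θ₀)]; exact cos_le_cos_of_nonneg_of_le_pi hr hπ hle
  exact ((cosDist_le_cos_sub hθ hθ₀).trans hcos).not_gt h

lemma measurableSet_Qset : MeasurableSet (Qset t₀ θ₀ φ₀ r) := by
  have hdist : Continuous fun p : ℝ × ℝ × ℝ => sDist p.2.1 p.2.2 θ₀ φ₀ := by
    unfold sDist
    exact continuous_arccos.comp (by fun_prop)
  exact ((isOpen_Ioo.preimage continuous_fst).inter
    ((isOpen_Ioo.preimage (continuous_fst.comp continuous_snd)).inter
      ((isOpen_Ioo.preimage (continuous_snd.comp continuous_snd)).inter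
        (isOpen_Iio.preimage hdist)))).measurableSet

lemma hasDerivAt_cosDist_θ :
    HasDerivAt (fun x => cosDist θ₀ φ₀ x φ)
      (-sin θ * cos θ₀ + cos θ * sin θ₀ * cos (φ - φ₀)) θ :=
  ((hasDerivAt_cos θ).mul_const _).add (((hasDerivAt_sin θ).mul_const _).mul_const _)

lemma hasDerivAt_cosDist_φ :
    HasDerivAt (cosDist θ₀ φ₀ θ) (sin θ * sin θ₀ * -sin (φ - φ₀)) φ :=
  (((hasDerivAt_cos (φ - φ₀)).comp_sub_const φ φ₀).const_mul (sin θ * sin θ₀)).const_add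
    (cos θ * cos θ₀)

-- The eikonal equation `|∇ dist| = 1`, written for `cos dist`.
lemma gradNormSqS2_cosDist (hθ : θ ∈ Ioo 0 π) :
    gradNormSqS2 (cosDist θ₀ φ₀) θ φ = 1 - cosDist θ₀ φ₀ θ φ ^ 2 := by
  have hinv : (sin θ ^ 2)⁻¹ * sin θ ^ 2 = 1 :=
    inv_mul_cancel₀ (pow_ne_zero 2 (sin_pos_of_mem_Ioo hθ).ne')
  have hsq := sin_sq_add_cos_sq θ
  have hsq₀ := sin_sq_add_cos_sq θ₀
  have hsqφ := sin_sq_add_cos_sq (φ - φ₀)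
  simp only [gradNormSqS2, gradDotS2, pdθ, pdφ, hasDerivAt_cosDist_θ.deriv,
    hasDerivAt_cosDist_φ.deriv]
  rw [cosDist]
  linear_combination (sin θ₀ * sin (φ - φ₀)) ^ 2 * hinv
    + (cos θ₀ ^ 2 + sin θ₀ ^ 2 * cos (φ - φ₀) ^ 2) * hsq + hsq₀ + sin θ₀ ^ 2 * hsqφ

end Geometry

lemma deriv_smoothTransition_of_nonpos {x : ℝ} (hx : x ≤ 0) : deriv smoothTransition x = 0 :=
  IsLocalMin.deriv_eq_zero <| Eventually.of_forall fun y => by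
    rw [smoothTransition.zero_of_nonpos hx]; exact smoothTransition.nonneg y

lemma deriv_smoothTransition_of_one_le {x : ℝ} (hx : 1 ≤ x) : deriv smoothTransition x = 0 :=
  IsLocalMax.deriv_eq_zero <| Eventually.of_forall fun y => by
    rw [smoothTransition.one_of_one_le hx]; exact smoothTransition.le_one y

lemma hasDerivAt_smoothTransition (x : ℝ) :
    HasDerivAt smoothTransition (deriv smoothTransition x) x :=
  ((smoothTransition.contDiff (n := 1)).differentiable one_ne_zero x).hasDerivAt

lemma exists_abs_deriv_smoothTransition_le : ∃ B, 0 < B ∧ ∀ x, |deriv smoothTransition x| ≤ B := by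
  have hcont : Continuous (deriv smoothTransition) :=
    (smoothTransition.contDiff (n := 1)).continuous_deriv le_rfl
  obtain ⟨B, hB⟩ := isCompact_Icc.exists_bound_of_continuousOn (hcont.continuousOn (s := Icc 0 1))
  refine ⟨max B 1, by positivity, fun x => ?_⟩
  by_cases hx : x ∈ Icc (0 : ℝ) 1
  · exact (hB x hx).trans (le_max_left _ _)
  · have : deriv smoothTransition x = 0 := by
      rw [mem_Icc, not_and_or, not_le, not_le] at hx
      exact hx.elim (fun h => deriv_smoothTransition_of_nonpos h.le)
        fun h => deriv_smoothTransition_of_one_le h.le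
    rw [this, abs_zero]; positivity

lemma sq_div_ten_le_cos_sub_cos {δ : ℝ} (hδ : 0 < δ) (hδ' : δ < 1 / 2) :
    δ ^ 2 / 10 ≤ cos (δ / 2) - cos δ := by
  have hjordan {x : ℝ} (h0 : 0 ≤ x) (h1 : x ≤ 1 / 2) : 3 / 5 * x ≤ sin x := by
    have : 3 / 5 ≤ 2 / π := by rw [div_le_div_iff₀ (by norm_num) pi_pos]; linarith [pi_lt_d2]
    exact (mul_le_mul_of_nonneg_right this h0).trans (mul_le_sin h0 (by linarith [pi_gt_three]))
  calc δ ^ 2 / 10 ≤ 2 * (3 / 5 * (3 / 4 * δ)) * (3 / 5 * (δ / 4)) := by nlinarith [sq_nonneg δ]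
    _ ≤ 2 * sin (3 / 4 * δ) * sin (δ / 4) := by
      have h₁ := hjordan (x := 3 / 4 * δ) (by linarith) (by linarith)
      have h₂ := hjordan (x := δ / 4) (by linarith) (by linarith)
      exact mul_le_mul (by linarith) h₂ (by positivity) (by linarith)
    _ = cos (δ / 2) - cos δ := by
      rw [cos_sub_cos, show (δ / 2 + δ) / 2 = 3 / 4 * δ by ring,
        show (δ / 2 - δ) / 2 = -(δ / 4) by ring, sin_neg]
      ring

/-- A smooth cutoff in time: it is `1` for `|t - t₀| ≤ δ / 2` and `0` for `|t - t₀| ≥ 3 δ / 4`. -/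
def timeCutoff (t₀ δ t : ℝ) : ℝ :=
  smoothTransition (timeBump t₀ (3 / 4 * δ) t / (5 / 16 * δ ^ 2))

/-- A smooth cutoff on the sphere: it is `1` on the geodesic ball of radius `δ / 2` around the
point with coordinates `(θ₀, φ₀)` and `0` outside that of radius `δ`. -/
def ballCutoff (θ₀ φ₀ δ θ φ : ℝ) : ℝ :=
  smoothTransition ((cosDist θ₀ φ₀ θ φ - cos δ) / (cos (δ / 2) - cos δ))

/-- The product of `timeCutoff` and `ballCutoff`, a cutoff between `Q_{δ/2}` and `Q_δ`. -/
def cylCutoff (t₀ θ₀ φ₀ δ t θ φ : ℝ) : ℝ := timeCutoff t₀ δ t * ballCutoff θ₀ φ₀ δ θ φ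

section Cutoff

variable {I : Set ℝ} {t₀ θ₀ φ₀ δ t θ φ B : ℝ}

lemma cos_sub_cos_pos (hδ : 0 < δ) (hδ' : δ < 1 / 2) : 0 < cos (δ / 2) - cos δ :=
  lt_of_lt_of_le (by positivity) (sq_div_ten_le_cos_sub_cos hδ hδ')

lemma one_le_timeBump_div (hδ : 0 < δ) (ht : t ∈ Ioo (t₀ - δ / 2) (t₀ + δ / 2)) :
    1 ≤ timeBump t₀ (3 / 4 * δ) t / (5 / 16 * δ ^ 2) := by
  rw [timeBump, le_div_iff₀ (by positivity)]
  nlinarith [ht.1, ht.2]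

lemma one_le_cosDist_div (hδ : 0 < δ) (hδ' : δ < 1 / 2) (h : cos (δ / 2) < cosDist θ₀ φ₀ θ φ) :
    1 ≤ (cosDist θ₀ φ₀ θ φ - cos δ) / (cos (δ / 2) - cos δ) := by
  rw [le_div_iff₀ (cos_sub_cos_pos hδ hδ')]; linarith

lemma cosDist_div_nonpos (hδ : 0 < δ) (hδ' : δ < 1 / 2) (h : cosDist θ₀ φ₀ θ φ ≤ cos δ) :
    (cosDist θ₀ φ₀ θ φ - cos δ) / (cos (δ / 2) - cos δ) ≤ 0 :=
  div_nonpos_of_nonpos_of_nonneg (by linarith) (cos_sub_cos_pos hδ hδ').le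

lemma cylContDiff_cylCutoff : CylContDiff I 1 (cylCutoff t₀ θ₀ φ₀ δ) := by
  refine ContDiff.contDiffOn (ContDiff.mul ?_ ?_)
  · refine smoothTransition.contDiff.comp (ContDiff.div_const ?_ _)
    exact contDiff_const.sub ((contDiff_fst.sub contDiff_const).pow 2)
  · refine smoothTransition.contDiff.comp ((ContDiff.sub ?_ contDiff_const).div_const _)
    unfold cosDist
    fun_prop

lemma cylCutoff_add_two_pi :
    cylCutoff t₀ θ₀ φ₀ δ t θ (φ + 2 * π) = cylCutoff t₀ θ₀ φ₀ δ t θ φ := by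
  simp only [cylCutoff, ballCutoff, cosDist, add_sub_right_comm, cos_add_two_pi]

lemma cylCutoff_nonneg : 0 ≤ cylCutoff t₀ θ₀ φ₀ δ t θ φ :=
  mul_nonneg (smoothTransition.nonneg _) (smoothTransition.nonneg _)

lemma cylCutoff_le_one : cylCutoff t₀ θ₀ φ₀ δ t θ φ ≤ 1 :=
  mul_le_one₀ (smoothTransition.le_one _) (smoothTransition.nonneg _) (smoothTransition.le_one _)

lemma cylCutoff_eq_zero_of_sq_eq (h : (t - t₀) ^ 2 = (3 / 4 * δ) ^ 2) :
    cylCutoff t₀ θ₀ φ₀ δ t θ φ = 0 := by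
  rw [cylCutoff, timeCutoff, timeBump, h, sub_self, zero_div, smoothTransition.zero, zero_mul]

lemma cylCutoff_eq_zero_of_cosDist_le (hδ : 0 < δ) (hδ' : δ < 1 / 2)
    (h : cosDist θ₀ φ₀ θ φ ≤ cos δ) : cylCutoff t₀ θ₀ φ₀ δ t θ φ = 0 := by
  rw [cylCutoff, ballCutoff,
    smoothTransition.zero_of_nonpos (cosDist_div_nonpos hδ hδ' h), mul_zero]

lemma cylCutoff_eq_one_of_mem_Qset (hδ : 0 < δ) (hδ' : δ < 1 / 2) (hθ₀ : θ₀ ∈ Icc 0 π)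
    (hp : (t, θ, φ) ∈ Qset t₀ θ₀ φ₀ (δ / 2)) : cylCutoff t₀ θ₀ φ₀ δ t θ φ = 1 := by
  obtain ⟨ht, -, -, hdist⟩ := (mem_Qset hθ₀ ⟨by linarith, by linarith [pi_gt_three]⟩).1 hp
  rw [cylCutoff, timeCutoff, ballCutoff, smoothTransition.one_of_one_le (one_le_timeBump_div hδ ht),
    smoothTransition.one_of_one_le (one_le_cosDist_div hδ hδ' hdist), one_mul]

lemma deriv_timeCutoff : deriv (timeCutoff t₀ δ) t =
    deriv smoothTransition (timeBump t₀ (3 / 4 * δ) t / (5 / 16 * δ ^ 2))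
      * (-(2 * (t - t₀)) / (5 / 16 * δ ^ 2)) :=
  ((hasDerivAt_smoothTransition _).comp t (hasDerivAt_timeBump.div_const (5 / 16 * δ ^ 2))).deriv

lemma gradNormSqS2_ballCutoff (hθ : θ ∈ Ioo 0 π) : gradNormSqS2 (ballCutoff θ₀ φ₀ δ) θ φ =
    (deriv smoothTransition ((cosDist θ₀ φ₀ θ φ - cos δ) / (cos (δ / 2) - cos δ))
      / (cos (δ / 2) - cos δ)) ^ 2 * (1 - cosDist θ₀ φ₀ θ φ ^ 2) := by
  set χ' := deriv smoothTransition ((cosDist θ₀ φ₀ θ φ - cos δ) / (cos (δ / 2) - cos δ))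
  have hdθ : pdθ (ballCutoff θ₀ φ₀ δ) θ φ =
      χ' * (pdθ (cosDist θ₀ φ₀) θ φ / (cos (δ / 2) - cos δ)) :=
    ((hasDerivAt_smoothTransition _).comp θ
      ((hasDerivAt_cosDist_θ.differentiableAt.hasDerivAt.sub_const (cos δ)).div_const _)).deriv
  have hdφ : pdφ (ballCutoff θ₀ φ₀ δ) θ φ =
      χ' * (pdφ (cosDist θ₀ φ₀) θ φ / (cos (δ / 2) - cos δ)) :=
    ((hasDerivAt_smoothTransition _).comp φ
      ((hasDerivAt_cosDist_φ.differentiableAt.hasDerivAt.sub_const (cos δ)).div_const _)).deriv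
  rw [← gradNormSqS2_cosDist hθ, gradNormSqS2, gradDotS2, hdθ, hdφ, gradNormSqS2, gradDotS2]
  ring

lemma cgradNormSq_cylCutoff : cgradNormSq (cylCutoff t₀ θ₀ φ₀ δ) t θ φ =
    (deriv (timeCutoff t₀ δ) t * ballCutoff θ₀ φ₀ δ θ φ) ^ 2
      + timeCutoff t₀ δ t ^ 2 * gradNormSqS2 (ballCutoff θ₀ φ₀ δ) θ φ := by
  simp only [cgradNormSq, cgradDot, gradNormSqS2, gradDotS2, cdt, pdθ, pdφ, cylCutoff,
    deriv_const_mul_field, deriv_mul_const_field]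
  ring

lemma cgradNormSq_cylCutoff_eq_zero (hδ : 0 < δ) (hδ' : δ < 1 / 2) (hθ₀ : θ₀ ∈ Icc 0 π)
    (hp : (t, θ, φ) ∈ coordBox (t₀ - 3 / 4 * δ) (t₀ + 3 / 4 * δ) 0 π (φ₀ - π) (φ₀ + π))
    (hn : (t, θ, φ) ∉ Qset t₀ θ₀ φ₀ δ \ Qset t₀ θ₀ φ₀ (δ / 2)) :
    cgradNormSq (cylCutoff t₀ θ₀ φ₀ δ) t θ φ = 0 := by
  obtain ⟨ht, hθ, hφ⟩ : t ∈ Ioo _ _ ∧ θ ∈ Ioo 0 π ∧ φ ∈ Ioo (φ₀ - π) (φ₀ + π) := hp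
  have hπ := pi_gt_three
  rw [cgradNormSq_cylCutoff, deriv_timeCutoff, gradNormSqS2_ballCutoff hθ]
  rcases le_or_gt (cosDist θ₀ φ₀ θ φ) (cos δ) with hout | hin
  · rw [deriv_smoothTransition_of_nonpos (cosDist_div_nonpos hδ hδ' hout), ballCutoff,
      smoothTransition.zero_of_nonpos (cosDist_div_nonpos hδ hδ' hout)]
    ring
  · have hQ : (t, θ, φ) ∈ Qset t₀ θ₀ φ₀ δ := (mem_Qset hθ₀ ⟨hδ.le, by linarith⟩).2
      ⟨⟨by linarith [ht.1], by linarith [ht.2]⟩, hθ, hφ, hin⟩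
    have hQ' : (t, θ, φ) ∈ Qset t₀ θ₀ φ₀ (δ / 2) := by
      by_contra h
      exact hn ⟨hQ, h⟩
    obtain ⟨ht', -, -, hin'⟩ := (mem_Qset hθ₀ ⟨by linarith, by linarith⟩).1 hQ'
    rw [deriv_smoothTransition_of_one_le (one_le_timeBump_div hδ ht'),
      deriv_smoothTransition_of_one_le (one_le_cosDist_div hδ hδ' hin')]
    ring

lemma deriv_timeCutoff_sq_le (hB : ∀ x, |deriv smoothTransition x| ≤ B) (hδ : 0 < δ)
    (ht : t ∈ Ioo (t₀ - 3 / 4 * δ) (t₀ + 3 / 4 * δ)) :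
    deriv (timeCutoff t₀ δ) t ^ 2 ≤ 25 * B ^ 2 / δ ^ 2 := by
  have habs : |t - t₀| ≤ 3 / 4 * δ := abs_le.2 ⟨by linarith [ht.1], by linarith [ht.2]⟩
  have hslope : |-(2 * (t - t₀)) / (5 / 16 * δ ^ 2)| ≤ 5 / δ := by
    rw [abs_div, abs_neg, abs_mul, abs_two, abs_of_pos (by positivity : 0 < 5 / 16 * δ ^ 2),
      div_le_div_iff₀ (by positivity) hδ]
    nlinarith
  calc deriv (timeCutoff t₀ δ) t ^ 2 ≤ (B * (5 / δ)) ^ 2 := by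
        rw [deriv_timeCutoff, ← sq_abs, abs_mul]
        exact pow_le_pow_left₀ (by positivity)
          (mul_le_mul (hB _) hslope (abs_nonneg _) ((abs_nonneg _).trans (hB 0))) 2
    _ = 25 * B ^ 2 / δ ^ 2 := by ring

lemma gradNormSqS2_ballCutoff_le (hB : ∀ x, |deriv smoothTransition x| ≤ B) (hδ : 0 < δ)
    (hδ' : δ < 1 / 2) (hθ : θ ∈ Ioo 0 π) :
    gradNormSqS2 (ballCutoff θ₀ φ₀ δ) θ φ ≤ 100 * B ^ 2 / δ ^ 2 := by
  rw [gradNormSqS2_ballCutoff hθ]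
  rcases le_or_gt (cosDist θ₀ φ₀ θ φ) (cos δ) with hout | hin
  · rw [deriv_smoothTransition_of_nonpos (cosDist_div_nonpos hδ hδ' hout)]
    simp only [zero_div, ne_eq, OfNat.ofNat_ne_zero, not_false_eq_true, zero_pow, zero_mul]
    positivity
  · have hcos : 0 ≤ cos δ := cos_nonneg_of_mem_Icc
      ⟨by linarith [pi_gt_three], by linarith [pi_gt_three]⟩
    have hsin : 1 - cosDist θ₀ φ₀ θ φ ^ 2 ≤ δ ^ 2 :=
      calc 1 - cosDist θ₀ φ₀ θ φ ^ 2 ≤ 1 - cos δ ^ 2 := by gcongr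
        _ = sin δ ^ 2 := (sin_sq δ).symm
        _ ≤ δ ^ 2 := sin_sq_le_sq
    calc _ ≤ (B / (δ ^ 2 / 10)) ^ 2 * δ ^ 2 := by
          refine mul_le_mul_of_nonneg ?_ hsin (sq_nonneg _) (sq_nonneg _)
          rw [← sq_abs, abs_div, abs_of_pos (cos_sub_cos_pos hδ hδ')]
          exact pow_le_pow_left₀ (div_nonneg (abs_nonneg _) (cos_sub_cos_pos hδ hδ').le)
            (div_le_div₀ ((abs_nonneg _).trans (hB 0)) (hB _) (by positivity)
              (sq_div_ten_le_cos_sub_cos hδ hδ')) 2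
      _ = 100 * B ^ 2 / δ ^ 2 := by field_simp; ring

lemma cgradNormSq_cylCutoff_le (hB : ∀ x, |deriv smoothTransition x| ≤ B) (hδ : 0 < δ)
    (hδ' : δ < 1 / 2) (ht : t ∈ Ioo (t₀ - 3 / 4 * δ) (t₀ + 3 / 4 * δ)) (hθ : θ ∈ Ioo 0 π) :
    cgradNormSq (cylCutoff t₀ θ₀ φ₀ δ) t θ φ ≤ 125 * B ^ 2 / δ ^ 2 := by
  have htime := deriv_timeCutoff_sq_le hB hδ ht
  have hball : gradNormSqS2 (ballCutoff θ₀ φ₀ δ) θ φ ≤ 100 * B ^ 2 / δ ^ 2 :=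
    gradNormSqS2_ballCutoff_le hB hδ hδ' hθ
  have htime_one : timeCutoff t₀ δ t ^ 2 ≤ 1 :=
    pow_le_one₀ (smoothTransition.nonneg _) (smoothTransition.le_one _)
  have hball_one : ballCutoff θ₀ φ₀ δ θ φ ^ 2 ≤ 1 :=
    pow_le_one₀ (smoothTransition.nonneg _) (smoothTransition.le_one _)
  calc cgradNormSq (cylCutoff t₀ θ₀ φ₀ δ) t θ φ
      = deriv (timeCutoff t₀ δ) t ^ 2 * ballCutoff θ₀ φ₀ δ θ φ ^ 2
        + timeCutoff t₀ δ t ^ 2 * gradNormSqS2 (ballCutoff θ₀ φ₀ δ) θ φ := by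
        rw [cgradNormSq_cylCutoff, mul_pow]
    _ ≤ 25 * B ^ 2 / δ ^ 2 * 1 + 1 * (100 * B ^ 2 / δ ^ 2) :=
      add_le_add (mul_le_mul htime hball_one (sq_nonneg _) (by positivity))
        (mul_le_mul_of_nonneg htime_one hball (sq_nonneg _) (by positivity))
    _ = 125 * B ^ 2 / δ ^ 2 := by ring

end Cutoff

/-! ### The Caccioppoli inequality -/

section Boundary

variable {I : Set ℝ} {Φ l v : ℝ → ℝ → ℝ → ℝ} {t θ φ : ℝ}

lemma cdθ_coshDist (c₁ c₂ : ℝ) (hI : IsOpen I) (hΦ : CylContDiff I 1 Φ) (hl : CylContDiff I 1 l)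
    (hv : CylContDiff I 1 v) (hp : (t, θ, φ) ∈ regCyl I) :
    cdθ (coshDist c₁ c₂ Φ l v) t θ φ =
      2 * sinh (2 * (Φ t θ φ - c₁)) * cdθ Φ t θ φ
        + 2 * exp (2 * Φ t θ φ + 2 * c₁ + -4 * l t θ φ) *
          ((2 * cdθ Φ t θ φ - 4 * cdθ l t θ φ) * (v t θ φ - c₂) ^ 2
            + 2 * (v t θ φ - c₂) * cdθ v t θ φ) := by
  have hcosh := contDiff_cosh_two_mul_sub c₁ 1
  have hlin : ContDiff ℝ 1 fun x : ℝ => 2 * x + 2 * c₁ := by fun_prop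
  have hneg : ContDiff ℝ 1 fun x : ℝ => -4 * x := by fun_prop
  have hsq : ContDiff ℝ 1 fun x : ℝ => 2 * (x - c₂) ^ 2 := by fun_prop
  have hdlin : deriv (fun x : ℝ => 2 * x + 2 * c₁) (Φ t θ φ) = 2 := by simp
  have hdneg : deriv (fun x : ℝ => -4 * x) (l t θ φ) = -4 := by simp
  have hexpo := cylContDiff_coshDist_exponent c₁ hΦ hl
  have hexp := hexpo.comp contDiff_exp
  unfold coshDist
  rw [cdθ_add hI (hΦ.comp hcosh) (hexp.mul (hv.comp hsq)) hp, cdθ_comp hI hΦ hcosh hp,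
    cdθ_mul hI hexp (hv.comp hsq) hp, cdθ_comp hI hexpo contDiff_exp hp, cdθ_comp hI hv hsq hp,
    cdθ_add hI (hΦ.comp hlin) (hl.comp hneg) hp, cdθ_comp hI hΦ hlin hp, cdθ_comp hI hl hneg hp,
    deriv_cosh_two_mul_sub, deriv_two_mul_sub_sq, Real.deriv_exp, hdlin, hdneg]
  ring

lemma abs_sinh_le_exp_of_abs_le {x b : ℝ} (h : |x| ≤ b) : |sinh x| ≤ exp b := by
  rw [abs_sinh, sinh_eq]
  linarith [exp_le_exp.2 h, exp_pos |x|, exp_pos (-|x|)]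

-- The vanishing orders `3` of `q` and `2` of `q'` beat the weight `s⁻⁴` by a factor `s`.
lemma inv_pow_four_mul_abs_le {s P l q q' N A M : ℝ} (hs : 0 < s) (hs1 : s ≤ 1) (hA : 0 ≤ A)
    (hP : |P| ≤ N) (hl : |l| ≤ A + s⁻¹) (hq : |q| ≤ M * s ^ 3) (hq' : |q'| ≤ M * s ^ 2) :
    (s ^ 4)⁻¹ * |(2 * P - 4 * l) * q ^ 2 + 2 * q * q'| ≤ M ^ 2 * (2 * N + 4 * A + 6) := by
  have hN : 0 ≤ N := (abs_nonneg P).trans hP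
  have hPl : |2 * P - 4 * l| ≤ 2 * N + 4 * (A + s⁻¹) := by
    refine (abs_sub _ _).trans ?_
    rw [abs_mul, abs_mul, abs_two, abs_of_pos (four_pos : (0 : ℝ) < 4)]
    gcongr
  have hM : 0 ≤ M * s ^ 3 := (abs_nonneg q).trans hq
  calc (s ^ 4)⁻¹ * |(2 * P - 4 * l) * q ^ 2 + 2 * q * q'|
      ≤ (s ^ 4)⁻¹ * ((2 * N + 4 * (A + s⁻¹)) * (M * s ^ 3) ^ 2
          + 2 * (M * s ^ 3) * (M * s ^ 2)) := by
        refine mul_le_mul_of_nonneg_left ((abs_add_le _ _).trans ?_) (by positivity)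
        rw [abs_mul, abs_mul, abs_mul, abs_pow, abs_two]
        gcongr
    _ = M ^ 2 * ((2 * N + 4 * A) * s ^ 2 + 6 * s) := by field_simp; ring
    _ ≤ M ^ 2 * ((2 * N + 4 * A) * 1 + 6 * 1) := by
        gcongr
        exact pow_le_one₀ hs.le hs1
    _ = M ^ 2 * (2 * N + 4 * A + 6) := by ring

lemma abs_cdθ_coshDist_le {c₁ c₂ Λ G N A M : ℝ} (hI : IsOpen I) (hΦ : CylContDiff I 1 Φ)
    (hl : CylContDiff I 1 l) (hv : CylContDiff I 1 v) (hp : (t, θ, φ) ∈ regCyl I)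
    (hb : |Φ t θ φ| ≤ Λ) (hc : |c₁| ≤ Λ) (hG : 0 ≤ G) (hA : 0 ≤ A)
    (hexp : exp (-4 * l t θ φ) ≤ G * (sin θ ^ 4)⁻¹) (hdΦ : |cdθ Φ t θ φ| ≤ N)
    (hdl : |cdθ l t θ φ| ≤ A + (sin θ)⁻¹) (hv0 : |v t θ φ - c₂| ≤ M * sin θ ^ 3)
    (hdv : |cdθ v t θ φ| ≤ M * sin θ ^ 2) :
    |cdθ (coshDist c₁ c₂ Φ l v) t θ φ| ≤
      2 * exp (4 * Λ) * N + 2 * (exp (4 * Λ) * G * (M ^ 2 * (2 * N + 4 * A + 6))) := by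
  have hs : 0 < sin θ := sin_pos_of_mem_Ioo (mem_regCyl.1 hp).2
  have hsinh : |sinh (2 * (Φ t θ φ - c₁))| ≤ exp (4 * Λ) := abs_sinh_le_exp_of_abs_le <| by
    rw [abs_mul, abs_two]
    linarith [abs_sub (Φ t θ φ) c₁]
  have hweight : exp (2 * Φ t θ φ + 2 * c₁ + -4 * l t θ φ) ≤
      exp (4 * Λ) * (G * (sin θ ^ 4)⁻¹) := by
    rw [exp_add]
    gcongr
    linarith [le_of_abs_le hb, le_of_abs_le hc]
  have hpole := inv_pow_four_mul_abs_le hs (sin_le_one θ) hA hdΦ hdl hv0 hdv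
  rw [cdθ_coshDist c₁ c₂ hI hΦ hl hv hp]
  set Y := (2 * cdθ Φ t θ φ - 4 * cdθ l t θ φ) * (v t θ φ - c₂) ^ 2
    + 2 * (v t θ φ - c₂) * cdθ v t θ φ
  refine (abs_add_le _ _).trans (add_le_add ?_ ?_)
  · rw [abs_mul, abs_mul, abs_two]
    gcongr
  · rw [abs_mul, abs_mul, abs_two, abs_exp, mul_assoc]
    refine mul_le_mul_of_nonneg_left ?_ zero_le_two
    calc _ ≤ exp (4 * Λ) * (G * (sin θ ^ 4)⁻¹) * |Y| := by gcongr
      _ = exp (4 * Λ) * G * ((sin θ ^ 4)⁻¹ * |Y|) := by ring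
      _ ≤ _ := by gcongr

end Boundary

section Caccioppoli

variable {I : Set ℝ} {A₁ Λ a B t₀ θ₀ φ₀ δ c₁ c₂ : ℝ} {R : Renormalizer I A₁}

lemma Qset_half_subset_coordBox (hδ : 0 < δ) : Qset t₀ θ₀ φ₀ (δ / 2) ⊆
    coordBox (t₀ - 3 / 4 * δ) (t₀ + 3 / 4 * δ) 0 π (φ₀ - π) (φ₀ + π) :=
  fun _ hp => ⟨⟨by linarith [hp.1.1], by linarith [hp.1.2]⟩, hp.2.1, hp.2.2.1⟩

lemma Qset_subset_coordBox (hδ : 0 < δ) (hδ' : δ < 1 / 2) (hθ₀ : θ₀ ∈ Icc 0 π) :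
    Qset t₀ θ₀ φ₀ δ ⊆ coordBox (t₀ - δ) (t₀ + δ) (max 0 (θ₀ - δ)) (min π (θ₀ + δ))
      (φ₀ - π) (φ₀ + π) := by
  rintro ⟨t, θ, φ⟩ hp
  obtain ⟨ht, hθ, hφ, hdist⟩ := (mem_Qset hθ₀ ⟨hδ.le, by linarith [pi_gt_three]⟩).1 hp
  obtain ⟨hlow, hupp⟩ := abs_lt.1
    (abs_sub_lt_of_cos_lt_cosDist (Ioo_subset_Icc_self hθ) hθ₀ hδ.le hdist)
  exact ⟨ht, ⟨max_lt hθ.1 (by linarith), lt_min hθ.2 (by linarith)⟩, hφ⟩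

lemma integrableOn_and_setIntegral_le_of_le_indicator {X : Type*} [MeasurableSpace X]
    {μ : Measure X} {s D : Set X} {f r : X → ℝ} (hs : MeasurableSet s) (hD : MeasurableSet D)
    (hf : AEStronglyMeasurable f (μ.restrict s)) (hf0 : ∀ x ∈ s, 0 ≤ f x)
    (hfr : ∀ x ∈ s, f x ≤ D.indicator r x) (hr : IntegrableOn r D μ) (hr0 : ∀ x ∈ D, 0 ≤ r x) :
    IntegrableOn f s μ ∧ ∫ x in s, f x ∂μ ≤ ∫ x in D, r x ∂μ := by
  have hind : Integrable (D.indicator r) μ := hr.integrable_indicator hD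
  have hint : IntegrableOn f s μ := hind.integrableOn.mono' hf <| by
    filter_upwards [ae_restrict_mem hs] with x hx
    exact (norm_of_nonneg (hf0 x hx)).trans_le (hfr x hx)
  refine ⟨hint, (setIntegral_mono_on hint hind.integrableOn hs hfr).trans ?_⟩
  rw [← integral_indicator hD]
  exact setIntegral_le_integral hind (Eventually.of_forall fun x => indicator_nonneg hr0 x)

section Densities

variable {Φ l v : ℝ → ℝ → ℝ → ℝ} {t θ φ : ℝ}

lemma expSin_mul_cgradNormSq_cylCutoff_mul_devDensity_le
    (hB : ∀ x, |deriv smoothTransition x| ≤ B) (hδ : 0 < δ) (hδ' : δ < 1 / 2)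
    (hθ₀ : θ₀ ∈ Icc 0 π)
    (hp : (t, θ, φ) ∈ coordBox (t₀ - 3 / 4 * δ) (t₀ + 3 / 4 * δ) 0 π (φ₀ - π) (φ₀ + π)) :
    expSin t θ * (16 * exp (16 * Λ) * cgradNormSq (cylCutoff t₀ θ₀ φ₀ δ) t θ φ *
        devDensity c₁ c₂ Φ l v t θ φ) ≤
      (Qset t₀ θ₀ φ₀ δ \ Qset t₀ θ₀ φ₀ (δ / 2)).indicator
        (fun p => exp (-(t₀ - δ)) * (2000 * exp (16 * Λ) * B ^ 2 / δ ^ 2) *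
          (devDensity c₁ c₂ Φ l v p.1 p.2.1 p.2.2 * sin p.2.1)) (t, θ, φ) := by
  have ht : t ∈ Ioo (t₀ - 3 / 4 * δ) (t₀ + 3 / 4 * δ) := hp.1
  have hθ : θ ∈ Ioo 0 π := hp.2.1
  by_cases hD : (t, θ, φ) ∈ Qset t₀ θ₀ φ₀ δ \ Qset t₀ θ₀ φ₀ (δ / 2)
  · rw [indicator_of_mem hD]
    have hs : 0 < sin θ := sin_pos_of_mem_Ioo hθ
    have hdev : 0 ≤ devDensity c₁ c₂ Φ l v t θ φ := devDensity_nonneg ..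
    calc expSin t θ * (16 * exp (16 * Λ) * cgradNormSq (cylCutoff t₀ θ₀ φ₀ δ) t θ φ *
          devDensity c₁ c₂ Φ l v t θ φ)
        ≤ exp (-(t₀ - δ)) * sin θ * (16 * exp (16 * Λ) * (125 * B ^ 2 / δ ^ 2) *
          devDensity c₁ c₂ Φ l v t θ φ) := by
          rw [expSin]
          gcongr
          · exact mul_nonneg (mul_nonneg (by positivity) (cgradNormSq_nonneg ..)) hdev
          · linarith [ht.1]
          · exact cgradNormSq_cylCutoff_le hB hδ hδ' ht hθ
      _ = _ := by ring
  · rw [indicator_of_notMem hD, cgradNormSq_cylCutoff_eq_zero hδ hδ' hθ₀ hp hD, mul_zero, zero_mul,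
      mul_zero]

lemma mul_setIntegral_energyDensity_le (hδ : 0 < δ) (hδ' : δ < 1 / 2) (hθ₀ : θ₀ ∈ Icc 0 π)
    (hint : IntegrableOn (fun p => expSin p.1 p.2.1 * (exp (-4 * Λ) *
        cylCutoff t₀ θ₀ φ₀ δ p.1 p.2.1 p.2.2 ^ 2 * energyDensity Φ l v p.1 p.2.1 p.2.2))
      (coordBox (t₀ - 3 / 4 * δ) (t₀ + 3 / 4 * δ) 0 π (φ₀ - π) (φ₀ + π))) :
    exp (-(t₀ + δ)) * exp (-4 * Λ) *
        ∫ p in Qset t₀ θ₀ φ₀ (δ / 2), energyDensity Φ l v p.1 p.2.1 p.2.2 * sin p.2.1 ≤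
      ∫ p in coordBox (t₀ - 3 / 4 * δ) (t₀ + 3 / 4 * δ) 0 π (φ₀ - π) (φ₀ + π),
        expSin p.1 p.2.1 * (exp (-4 * Λ) * cylCutoff t₀ θ₀ φ₀ δ p.1 p.2.1 p.2.2 ^ 2 *
          energyDensity Φ l v p.1 p.2.1 p.2.2) := by
  have hsub := Qset_half_subset_coordBox (t₀ := t₀) (θ₀ := θ₀) (φ₀ := φ₀) hδ
  have hpt : ∀ p ∈ Qset t₀ θ₀ φ₀ (δ / 2),
      0 ≤ exp (-(t₀ + δ)) * exp (-4 * Λ) * (energyDensity Φ l v p.1 p.2.1 p.2.2 * sin p.2.1) ∧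
      exp (-(t₀ + δ)) * exp (-4 * Λ) * (energyDensity Φ l v p.1 p.2.1 p.2.2 * sin p.2.1) ≤
        expSin p.1 p.2.1 * (exp (-4 * Λ) * cylCutoff t₀ θ₀ φ₀ δ p.1 p.2.1 p.2.2 ^ 2 *
          energyDensity Φ l v p.1 p.2.1 p.2.2) := by
    rintro ⟨t, θ, φ⟩ hp
    have hE := mul_nonneg (energyDensity_nonneg Φ l v t θ φ) (sin_pos_of_mem_Ioo hp.2.1).le
    refine ⟨mul_nonneg (by positivity) hE, ?_⟩
    rw [cylCutoff_eq_one_of_mem_Qset hδ hδ' hθ₀ hp, expSin]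
    calc _ ≤ exp (-t) * exp (-4 * Λ) * (energyDensity Φ l v t θ φ * sin θ) := by
          gcongr
          linarith [hp.1.2]
      _ = _ := by ring
  rw [← integral_const_mul]
  calc _ ≤ _ := integral_mono_of_nonneg
        ((ae_restrict_mem measurableSet_Qset).mono fun p hp => (hpt p hp).1)
        (hint.mono_set hsub)
        ((ae_restrict_mem measurableSet_Qset).mono fun p hp => (hpt p hp).2)
    _ ≤ _ := setIntegral_mono_set hint
      ((ae_restrict_mem measurableSet_coordBox).mono fun p hp => mul_nonneg
        (mul_nonneg (exp_pos _).le (sin_pos_of_mem_Ioo hp.2.1).le)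
        (mul_nonneg (by positivity) (energyDensity_nonneg ..))) hsub.eventuallyLE

end Densities

namespace RHMSolution

variable (S : RHMSolution I A₁ R Λ a)

lemma coshDist_add_two_pi (t θ φ : ℝ) : coshDist c₁ c₂ S.Φ R.logω S.v t θ (φ + 2 * π) =
    coshDist c₁ c₂ S.Φ R.logω S.v t θ φ := by
  simp only [coshDist, Renormalizer.logω, S.periodicΦ, S.periodicv, R.periodic]

lemma exists_abs_cylCutoff_sq_mul_cdθ_coshDist_le (hI : IsOpen I) (hδ : 0 < δ) (hδ' : δ < 1 / 2)
    (hθ₀ : θ₀ ∈ Icc 0 π) (ht : Icc (t₀ - 3 / 4 * δ) (t₀ + 3 / 4 * δ) ⊆ I) (hc : |c₁| ≤ Λ)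
    (hcN : θ₀ < 2 * δ → c₂ = a) (hcS : π - θ₀ < 2 * δ → c₂ = -a) (φ₁ φ₂ : ℝ) :
    ∃ K, ∀ t ∈ Icc (t₀ - 3 / 4 * δ) (t₀ + 3 / 4 * δ), ∀ θ ∈ Ioo 0 π, ∀ φ ∈ Icc φ₁ φ₂,
      |cylCutoff t₀ θ₀ φ₀ δ t θ φ ^ 2 * cdθ (coshDist c₁ c₂ S.Φ R.logω S.v) t θ φ| ≤ K := by
  have hA : 0 ≤ A₁ := zero_le_one.trans R.A₁_ge
  obtain ⟨M, -, hM⟩ := S.exists_abs_v_sub_le_mul_sin_pow hI ht (by linarith) hδ hcN hcS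
  obtain ⟨N, hN0, hN⟩ := S.exists_abs_cdθ_Φ_le ht (by linarith) φ₁ φ₂
  refine ⟨2 * exp (4 * Λ) * N
    + 2 * (exp (4 * Λ) * exp (4 * A₁) * (M ^ 2 * (2 * N + 4 * A₁ + 6))),
    fun t htt θ hθ φ hφ => ?_⟩
  rcases le_or_gt (cosDist θ₀ φ₀ θ φ) (cos δ) with hout | hin
  · rw [cylCutoff_eq_zero_of_cosDist_le hδ hδ' hout, zero_pow two_ne_zero, zero_mul, abs_zero]
    positivity
  have hp : (t, θ, φ) ∈ regCyl I := mem_regCyl.2 ⟨ht htt, hθ⟩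
  have hθθ₀ := abs_sub_lt_of_cos_lt_cosDist (Ioo_subset_Icc_self hθ) hθ₀ hδ.le hin
  rw [abs_mul, abs_of_nonneg (sq_nonneg _)]
  exact (mul_le_of_le_one_left (abs_nonneg _) (pow_le_one₀ cylCutoff_nonneg cylCutoff_le_one)).trans
    (abs_cdθ_coshDist_le hI (S.cylContDiff_Φ.of_le (by norm_num)) (R.cylContDiff_logω 1)
      (S.cylContDiff_v.of_le (by norm_num)) hp (S.abs_Φ_le hp) hc (exp_pos _).le hA
      (R.exp_neg_four_mul_logω_le hp) (hN t htt θ hθ φ hφ) (R.abs_cdθ_logω_le hI hp)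
      (hM t htt θ hθ hθθ₀ φ).1 (hM t htt θ hθ hθθ₀ φ).2)

lemma integrableOn_devDensity_mul_sin_Qset (hI : IsOpen I)
    (hL : ∀ t ∈ I, ∀ θ ∈ Ioo 0 π, ∀ φ, cL R.logω t θ φ = 0) (hδ : 0 < δ) (hδ' : δ < 1 / 2)
    (hθ₀ : θ₀ ∈ Icc 0 π) (hδI : Ioo (t₀ - δ) (t₀ + δ) ⊆ I) (hc : |c₁| ≤ Λ)
    (hcN : θ₀ < 2 * δ → c₂ = a) (hcS : π - θ₀ < 2 * δ → c₂ = -a) :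
    IntegrableOn (fun p => devDensity c₁ c₂ S.Φ R.logω S.v p.1 p.2.1 p.2.2 * sin p.2.1)
      (Qset t₀ θ₀ φ₀ δ) := by
  have hint := S.integrableOn_devDensity_mul_sin (α := max 0 (θ₀ - δ)) (β := min π (θ₀ + δ))
    (θ₀ := θ₀) hI hL hδ hδI (le_max_left _ _) (min_le_left _ _)
    (max_lt (lt_min pi_pos (by linarith [hθ₀.1]))
      (lt_min (by linarith [hθ₀.2]) (by linarith)))
    (fun θ hθ => abs_lt.2
      ⟨by linarith [(max_lt_iff.1 hθ.1).2], by linarith [(lt_min_iff.1 hθ.2).2]⟩)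
    hc hcN hcS (φ₀ - π)
  rw [show φ₀ - π + 2 * π = φ₀ + π by ring] at hint
  exact hint.mono_set (Qset_subset_coordBox hδ hδ' hθ₀)

lemma continuousOn_energyDensity (hI : IsOpen I) :
    ContinuousOn ↿(energyDensity S.Φ R.logω S.v) (regCyl I) :=
  ((S.cylContDiff_Φ.of_le (by norm_num)).continuousOn_cgradNormSq hI).add
    ((continuousOn_const.mul
      (S.cylContDiff_Φ.continuousOn.sub (R.cylContDiff_logω 0).continuousOn)).rexp.mul
        ((S.cylContDiff_v.of_le (by norm_num)).continuousOn_cgradNormSq hI))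

lemma integrableOn_and_setIntegral_error_le (hI : IsOpen I)
    (hL : ∀ t ∈ I, ∀ θ ∈ Ioo 0 π, ∀ φ, cL R.logω t θ φ = 0)
    (hB : ∀ x, |deriv smoothTransition x| ≤ B) (hδ : 0 < δ) (hδ' : δ < 1 / 2)
    (hθ₀ : θ₀ ∈ Icc 0 π) (hδI : Ioo (t₀ - δ) (t₀ + δ) ⊆ I) (hc : |c₁| ≤ Λ)
    (hcN : θ₀ < 2 * δ → c₂ = a) (hcS : π - θ₀ < 2 * δ → c₂ = -a) :
    IntegrableOn (fun p => expSin p.1 p.2.1 * (16 * exp (16 * Λ) *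
        cgradNormSq (cylCutoff t₀ θ₀ φ₀ δ) p.1 p.2.1 p.2.2 *
          devDensity c₁ c₂ S.Φ R.logω S.v p.1 p.2.1 p.2.2))
      (coordBox (t₀ - 3 / 4 * δ) (t₀ + 3 / 4 * δ) 0 π (φ₀ - π) (φ₀ + π)) ∧
    ∫ p in coordBox (t₀ - 3 / 4 * δ) (t₀ + 3 / 4 * δ) 0 π (φ₀ - π) (φ₀ + π),
        expSin p.1 p.2.1 * (16 * exp (16 * Λ) *
          cgradNormSq (cylCutoff t₀ θ₀ φ₀ δ) p.1 p.2.1 p.2.2 *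
            devDensity c₁ c₂ S.Φ R.logω S.v p.1 p.2.1 p.2.2) ≤
      exp (-(t₀ - δ)) * (2000 * exp (16 * Λ) * B ^ 2 / δ ^ 2) *
        ∫ p in Qset t₀ θ₀ φ₀ δ \ Qset t₀ θ₀ φ₀ (δ / 2),
          devDensity c₁ c₂ S.Φ R.logω S.v p.1 p.2.1 p.2.2 * sin p.2.1 := by
  have hreg : coordBox (t₀ - 3 / 4 * δ) (t₀ + 3 / 4 * δ) 0 π (φ₀ - π) (φ₀ + π) ⊆ regCyl I :=
    prod_mono (Ioo_subset_Icc_self.trans (Icc_subset_of_Ioo_subset (by linarith) hδI))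
      (prod_mono_right (subset_univ _))
  have hdev := (S.integrableOn_devDensity_mul_sin_Qset (c₁ := c₁) (φ₀ := φ₀) hI hL hδ hδ' hθ₀ hδI hc
    hcN hcS).mono_set (sdiff_subset (t := Qset t₀ θ₀ φ₀ (δ / 2)))
  rw [← integral_const_mul]
  refine integrableOn_and_setIntegral_le_of_le_indicator measurableSet_coordBox
    (measurableSet_Qset.diff measurableSet_Qset) ?_ (fun p hp => ?_)
    (fun p hp => expSin_mul_cgradNormSq_cylCutoff_mul_devDensity_le hB hδ hδ' hθ₀ hp)
    (hdev.const_mul _) (fun p hp => ?_)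
  · refine (ContinuousOn.mono ?_ hreg).aestronglyMeasurable measurableSet_coordBox
    exact (contDiff_expSin 0).continuous.continuousOn.mul
      ((continuousOn_const.mul (cylContDiff_cylCutoff.continuousOn_cgradNormSq hI)).mul
        S.continuousOn_devDensity)
  · exact mul_nonneg (mul_nonneg (exp_pos _).le (sin_pos_of_mem_Ioo hp.2.1).le)
      (mul_nonneg (mul_nonneg (by positivity) (cgradNormSq_nonneg ..)) (devDensity_nonneg ..))
  · exact mul_nonneg (by positivity)
      (mul_nonneg (devDensity_nonneg ..) (sin_pos_of_mem_Ioo hp.1.2.1).le)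

lemma exp_mul_setIntegral_energyDensity_mul_sin_le (hI : IsOpen I)
    (hL : ∀ t ∈ I, ∀ θ ∈ Ioo 0 π, ∀ φ, cL R.logω t θ φ = 0)
    (hB : ∀ x, |deriv smoothTransition x| ≤ B) (hδ : 0 < δ) (hδ' : δ < 1 / 2)
    (hθ₀ : θ₀ ∈ Icc 0 π) (hδI : Ioo (t₀ - δ) (t₀ + δ) ⊆ I) (hc : |c₁| ≤ Λ)
    (hcN : θ₀ < 2 * δ → c₂ = a) (hcS : π - θ₀ < 2 * δ → c₂ = -a) :
    exp (-(t₀ + δ)) * exp (-4 * Λ) *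
        ∫ p in Qset t₀ θ₀ φ₀ (δ / 2), energyDensity S.Φ R.logω S.v p.1 p.2.1 p.2.2 * sin p.2.1 ≤
      exp (-(t₀ - δ)) * (2000 * exp (16 * Λ) * B ^ 2 / δ ^ 2) *
        ∫ p in Qset t₀ θ₀ φ₀ δ \ Qset t₀ θ₀ φ₀ (δ / 2),
          devDensity c₁ c₂ S.Φ R.logω S.v p.1 p.2.1 p.2.2 * sin p.2.1 := by
  have ht : Icc (t₀ - 3 / 4 * δ) (t₀ + 3 / 4 * δ) ⊆ I :=
    Icc_subset_of_Ioo_subset (by linarith) hδI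
  have hΛ : 0 ≤ Λ := zero_le_one.trans S.Λ_ge
  have hΦ : CylContDiff I 2 S.Φ := S.cylContDiff_Φ.of_le (by norm_num)
  have hv : CylContDiff I 2 S.v := S.cylContDiff_v.of_le (by norm_num)
  have hζ : CylContDiff I 1 fun t θ φ => cylCutoff t₀ θ₀ φ₀ δ t θ φ ^ 2 :=
    CylContDiff.comp (h := fun x => x ^ 2) (by fun_prop) cylContDiff_cylCutoff
  obtain ⟨K, hK⟩ := S.exists_abs_cylCutoff_sq_mul_cdθ_coshDist_le (c₁ := c₁) hI hδ hδ' hθ₀ ht hc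
    hcN hcS (φ₀ - π) (φ₀ - π + 2 * π)
  have herr := S.integrableOn_and_setIntegral_error_le (φ₀ := φ₀) hI hL hB hδ hδ' hθ₀ hδI hc hcN hcS
  rw [show φ₀ + π = φ₀ - π + 2 * π by ring] at herr
  have hg : ContinuousOn ↿(fun t θ φ => exp (-4 * Λ) * cylCutoff t₀ θ₀ φ₀ δ t θ φ ^ 2 *
      energyDensity S.Φ R.logω S.v t θ φ) (regCyl I) :=
    (continuousOn_const.mul hζ.continuousOn).mul (S.continuousOn_energyDensity hI)
  have htest := integrableOn_and_setIntegral_le_of_sub_le_cL hI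
    (cylContDiff_coshDist c₁ c₂ hΦ (R.cylContDiff_logω 2) hv) hζ S.coshDist_add_two_pi
    (fun t θ φ => by rw [cylCutoff_add_two_pi]) ht (by linarith)
    (fun θ φ => by rw [cylCutoff_eq_zero_of_sq_eq (by ring), zero_pow two_ne_zero])
    (fun θ φ => by rw [cylCutoff_eq_zero_of_sq_eq (by ring), zero_pow two_ne_zero]) hK
    (g := fun t θ φ => exp (-4 * Λ) * cylCutoff t₀ θ₀ φ₀ δ t θ φ ^ 2 *
      energyDensity S.Φ R.logω S.v t θ φ)
    hg (fun t _ θ _ φ => mul_nonneg (by positivity) (energyDensity_nonneg ..)) herr.1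
    (fun t ht θ hθ φ => energyDensity_sub_le_sq_mul_cL_coshDist c₁ c₂ hI hΦ
      (R.cylContDiff_logω 2) hv cylContDiff_cylCutoff (mem_regCyl.2 ⟨ht, hθ⟩) hΛ
      (S.abs_Φ_le (mem_regCyl.2 ⟨ht, hθ⟩)) hc
      (S.cL_Φ_eq (mem_regCyl.2 ⟨ht, hθ⟩) (hL t ht θ hθ φ)) (hL t ht θ hθ φ) (S.eqv t ht θ hθ φ))
  rw [show φ₀ - π + 2 * π = φ₀ + π by ring] at htest herr
  exact (mul_setIntegral_energyDensity_le hδ hδ' hθ₀ htest.1).trans (htest.2.trans herr.2)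

lemma setIntegral_energyDensity_mul_sin_le (hI : IsOpen I)
    (hL : ∀ t ∈ I, ∀ θ ∈ Ioo 0 π, ∀ φ, cL R.logω t θ φ = 0)
    (hB : ∀ x, |deriv smoothTransition x| ≤ B) (hδ : 0 < δ) (hδ' : δ < 1 / 2)
    (hθ₀ : θ₀ ∈ Icc 0 π) (hδI : Ioo (t₀ - δ) (t₀ + δ) ⊆ I) (hc : |c₁| ≤ Λ)
    (hcN : θ₀ < 2 * δ → c₂ = a) (hcS : π - θ₀ < 2 * δ → c₂ = -a) :
    ∫ p in Qset t₀ θ₀ φ₀ (δ / 2), energyDensity S.Φ R.logω S.v p.1 p.2.1 p.2.2 * sin p.2.1 ≤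
      2000 * B ^ 2 * exp (20 * Λ + 1) / δ ^ 2 *
        ∫ p in Qset t₀ θ₀ φ₀ δ \ Qset t₀ θ₀ φ₀ (δ / 2),
          devDensity c₁ c₂ S.Φ R.logω S.v p.1 p.2.1 p.2.2 * sin p.2.1 := by
  have hdev : 0 ≤ ∫ p in Qset t₀ θ₀ φ₀ δ \ Qset t₀ θ₀ φ₀ (δ / 2),
      devDensity c₁ c₂ S.Φ R.logω S.v p.1 p.2.1 p.2.2 * sin p.2.1 :=
    setIntegral_nonneg (measurableSet_Qset.diff measurableSet_Qset) fun p hp =>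
      mul_nonneg (devDensity_nonneg ..) (sin_pos_of_mem_Ioo hp.1.2.1).le
  have hexp : exp (-(t₀ - δ)) * exp (16 * Λ) ≤
      exp (-(t₀ + δ)) * exp (-4 * Λ) * exp (20 * Λ + 1) := by
    simp only [← exp_add]
    exact exp_le_exp.2 (by linarith)
  refine le_of_mul_le_mul_left
    ((S.exp_mul_setIntegral_energyDensity_mul_sin_le hI hL hB hδ hδ' hθ₀ hδI hc hcN hcS).trans ?_)
    (mul_pos (exp_pos (-(t₀ + δ))) (exp_pos (-4 * Λ)))
  rw [← mul_assoc]
  refine mul_le_mul_of_nonneg_right ?_ hdev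
  calc exp (-(t₀ - δ)) * (2000 * exp (16 * Λ) * B ^ 2 / δ ^ 2)
      = exp (-(t₀ - δ)) * exp (16 * Λ) * (2000 * B ^ 2 / δ ^ 2) := by ring
    _ ≤ exp (-(t₀ + δ)) * exp (-4 * Λ) * exp (20 * Λ + 1) * (2000 * B ^ 2 / δ ^ 2) := by gcongr
    _ = _ := by ring

end RHMSolution

end Caccioppoli

theorem statement_8_general (Λ : ℝ) :
    ∃ C > (0 : ℝ), ∀ (A₁ : ℝ) (I : Set ℝ), IsOpen I → ∀ (a : ℝ) (Rω : Renormalizer I A₁)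
      (S : RHMSolution I A₁ Rω Λ a),
      (∀ t ∈ I, ∀ θ ∈ Ioo (0 : ℝ) π, ∀ φ : ℝ,
        cL (fun t θ φ => Real.log (Rω.ω t θ φ)) t θ φ = 0) →
      ∀ t₀ θ₀ φ₀ δ : ℝ, 0 < δ → δ < 1 / 2 → θ₀ ∈ Icc (0 : ℝ) π →
        Ioo (t₀ - δ) (t₀ + δ) ⊆ I →
      ∀ c₁ c₂ : ℝ, c₁ ∈ Icc (-Λ) Λ →
        (θ₀ < 2 * δ → c₂ = a) → (π - θ₀ < 2 * δ → c₂ = -a) →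
      (∫ p in Qset t₀ θ₀ φ₀ (δ / 2),
          (cgradNormSq S.Φ p.1 p.2.1 p.2.2
            + Real.exp (4 * (S.Φ p.1 p.2.1 p.2.2 - Real.log (Rω.ω p.1 p.2.1 p.2.2)))
              * cgradNormSq S.v p.1 p.2.1 p.2.2) * Real.sin p.2.1)
        ≤ C / δ ^ 2 *
          ∫ p in Qset t₀ θ₀ φ₀ δ \ Qset t₀ θ₀ φ₀ (δ / 2),
            ((S.Φ p.1 p.2.1 p.2.2 - c₁) ^ 2
              + ((Rω.ω p.1 p.2.1 p.2.2) ^ 4)⁻¹ * (S.v p.1 p.2.1 p.2.2 - c₂) ^ 2)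
              * Real.sin p.2.1 := by
  obtain ⟨B, hB0, hB⟩ := exists_abs_deriv_smoothTransition_le
  refine ⟨2000 * B ^ 2 * exp (20 * Λ + 1), by positivity,
    fun A₁ I hI a R S hL t₀ θ₀ φ₀ δ hδ hδ' hθ₀ hδI c₁ c₂ hc hcN hcS => ?_⟩
  refine (S.setIntegral_energyDensity_mul_sin_le hI hL hB hδ hδ' hθ₀ hδI (abs_le.2 hc)
    hcN hcS).trans_eq (congrArg _ (setIntegral_congr_fun
      (measurableSet_Qset.diff measurableSet_Qset) fun p hp => ?_))
  simp only [devDensity, R.exp_neg_four_mul_logω (mem_regCyl.2 ⟨hδI hp.1.1, hp.1.2.1⟩)]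

/-- Lemma `lem:monotonicity`: Caccioppoli-type (reverse Poincaré)
inequality on cylinders `Q_δ(t₀,P₀)`, with a constant depending only on `Λ`, `A₁`. -/
theorem statement_8
    (Λ A₁ : ℝ) (hΛ : 1 ≤ Λ) (hA : 1 ≤ A₁) :
    ∃ C > (0 : ℝ), ∀ (a : ℝ) (Rω : Renormalizer (Ioo (-2) 2) A₁)
      (S : RHMSolution (Ioo (-2) 2) A₁ Rω Λ a),
      (∀ t ∈ Ioo (-2 : ℝ) 2, ∀ θ ∈ Ioo (0 : ℝ) π, ∀ φ : ℝ,
        cL (fun t θ φ => Real.log (Rω.ω t θ φ)) t θ φ = 0) →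
      ∀ t₀ θ₀ φ₀ δ : ℝ, 0 < δ → δ < 1 / 2 → θ₀ ∈ Icc (0 : ℝ) π →
        Ioo (t₀ - δ) (t₀ + δ) ⊆ Ioo (-2 : ℝ) 2 →
      ∀ c₁ c₂ : ℝ, c₁ ∈ Icc (-Λ) Λ →
        (θ₀ < 2 * δ → c₂ = a) → (π - θ₀ < 2 * δ → c₂ = -a) →
      (∫ p in Qset t₀ θ₀ φ₀ (δ / 2),
          (cgradNormSq S.Φ p.1 p.2.1 p.2.2
            + Real.exp (4 * (S.Φ p.1 p.2.1 p.2.2 - Real.log (Rω.ω p.1 p.2.1 p.2.2)))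
              * cgradNormSq S.v p.1 p.2.1 p.2.2) * Real.sin p.2.1)
        ≤ C / δ ^ 2 *
          ∫ p in Qset t₀ θ₀ φ₀ δ \ Qset t₀ θ₀ φ₀ (δ / 2),
            ((S.Φ p.1 p.2.1 p.2.2 - c₁) ^ 2
              + ((Rω.ω p.1 p.2.1 p.2.2) ^ 4)⁻¹ * (S.v p.1 p.2.1 p.2.2 - c₂) ^ 2)
              * Real.sin p.2.1 :=
  let ⟨C, hC, h⟩ := statement_8_general Λ
  ⟨C, hC, fun a R S => h A₁ (Ioo (-2) 2) isOpen_Ioo a R S⟩
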